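/- arXiv:2305.12589 — 3 statements merged into one kernel-verified Lean document; each statement's English description precedes it below -/
import Mathlib

section
/- Let m ≥ 1, d ∈ {0,…,m−1}, 0 < s < 1, 1 ≤ p < ∞, η > 0 and 0 < ρ̲ < r̲ < r̄ < ρ̄ < 1. Set Q₁ = Q^d_{(1−ρ̄)η} × Q^{m−d}_{ρ̲η}, Q₂ = Q^d_{(1−r̄)η} × Q^{m−d}_{r̲η}, Q₃ = Q^d_{(1−r̲)η} × Q^{m−d}_{r̄η} and Q₄ = Q^d_{(1−ρ̲)η} × Q^{m−d}_{ρ̄η}. Then there is a constant C > 0, depending only on m, s, p, ρ̲, r̲, r̄, ρ̄, such that for every measurable u : Q₄ → ℝ^ν with u ∈ L^p(Q₄) and |u|_{W^{s,p}(Q₄)} < ∞, there exists a smooth map Φ : Q₄ → Q₄ (depending on u) with: (i) Φ(x′, x″) = (x′, ζ(x)) for every x = (x′, x″) ∈ Q₄, where ζ : Q₄ → Q^{m−d}_{ρ̄η} is smooth; (ii) for every x′ ∈ Q^d_{(1−ρ̄)η}, Φ is constant on {x′} × Q^{m−d}_{ρ̲η}; (iii) Supp Φ ⊂ Q₂ and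 Φ(Q₂) ⊂ Q₂; (iv) |u ∘ Φ|_{W^{s,p}(Q₃)} ≤ C |u|_{W^{s,p}(Q₄)} and ‖u ∘ Φ‖_{L^p(Q₃)} ≤ C ‖u‖_{L^p(Q₄)}. -/
open MeasureTheory Set Metric
open scoped ENNReal
noncomputable section

/-- `ℝ^m` with the Euclidean norm. -/
abbrev Eucl (n : ℕ) : Type := EuclideanSpace ℝ (Fin n)

/-- The `p`-th power of the Gagliardo seminorm. -/
noncomputable def gagliardoPow {α : Type*} [NormedAddCommGroup α] (m : ℕ) (σ p : ℝ)
    (A : Set (Eucl m)) (u : Eucl m → α) : ℝ≥0∞ :=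
  ∫⁻ x in A, ∫⁻ y in A, (‖u x - u y‖₊ : ℝ≥0∞) ^ p / (‖x - y‖₊ : ℝ≥0∞) ^ ((m : ℝ) + σ * p)

/-- The Gagliardo seminorm `|u|_{W^{σ,p}(A)}`. -/
noncomputable def gagliardoSeminorm {α : Type*} [NormedAddCommGroup α] (m : ℕ) (σ p : ℝ)
    (A : Set (Eucl m)) (u : Eucl m → α) : ℝ≥0∞ :=
  gagliardoPow m σ p A u ^ (1 / p)

/-- The product `Q^d_a × Q^{m-d}_b` of the open cube of radius `a` in the first `d`
coordinates with the open cube of radius `b` in the last `m - d` coordinates. -/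
def rect (m d : ℕ) (a b : ℝ) : Set (Eucl m) :=
  {x : Eucl m | ∀ i : Fin m, ((i : ℕ) < d → |x i| < a) ∧ (d ≤ (i : ℕ) → |x i| < b)}

/-!
Let `P` be the projection onto the last `m - d` coordinates and `χ` a cutoff equal to `1` on a
neighbourhood of `Q₁` and supported well inside `Q₂`. For every small shift `z` the map
`Φ_z x = x - χ (x + z) • P (x + z)` is smooth and opens the slices `{x′} × Q^{m-d}`. As `Φ_z`
collapses sets to slices, no bound holds for `u ∘ Φ_z` with `z` prescribed, but it holds on average
over `z`: the change of variables `y = x + z`, `w = Φ_z x = y - χ y • P y - z` has Jacobian one and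
turns the mean of `∫ g (Φ_z x) dx` over a ball of shifts into at most `C ∫ g`, for every `g ≥ 0`.

The Gagliardo energy is a double integral, whereas both of its points are moved by the same shift.
The triangle inequality, averaged over the ball of radius `κ |x - y|` around `X = Φ_z x`, replaces
`|u (Φ_z x) - u (Φ_z y)|^p` by oscillations of `u` on balls around `X` and around `Φ_z y`. For a
point `w` of such a ball, the kernel `|x - y|^{-(N + m)}`, with `N = m + s p` and the second `m`
coming from the average, is integrated over `|x - y| > |X - w| / λ` only, which gives a multiple of
`|X - w|^{-N}`. So the energy of `u ∘ Φ_z` is controlled by `∫ g (Φ_z x) dx` for the density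
`g X = ∫ |u X - u w|^p / |X - w|^N dw`, and the averaging principle, applied to this `g` and to
`|u|^p` at once, yields a shift `z` that is good for both norms.
-/

open Module (finrank)
open scoped NNReal

section PowerKernel

variable {E : Type*} [NormedAddCommGroup E] [NormedSpace ℝ E] [FiniteDimensional ℝ E]
  [MeasurableSpace E] [BorelSpace E] (μ : Measure E) [μ.IsAddHaarMeasure]

lemma setLIntegral_one_lt_norm_enorm_rpow_neg_lt_top {q : ℝ} (hq : (finrank ℝ E : ℝ) < q) :
    ∫⁻ y in {y : E | 1 < ‖y‖}, ‖y‖ₑ ^ (-q) ∂μ < ⊤ := by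
  have : 0 < q := (Nat.cast_nonneg _).trans_lt hq
  have hbracket : ∀ y ∈ {y : E | 1 < ‖y‖},
      ‖y‖ₑ ^ (-q) ≤ ENNReal.ofReal (2 ^ q) * ENNReal.ofReal ((1 + ‖y‖) ^ (-q)) := by
    intro y (hy : 1 < ‖y‖)
    rw [← ofReal_norm, ENNReal.ofReal_rpow_of_pos (by linarith),
      ← ENNReal.ofReal_mul (by positivity)]
    refine ENNReal.ofReal_le_ofReal ?_
    calc ‖y‖ ^ (-q) = 2 ^ q * (2 * ‖y‖) ^ (-q) := by
          rw [Real.mul_rpow two_pos.le (norm_nonneg y), ← mul_assoc, ← Real.rpow_add two_pos,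
            add_neg_cancel, Real.rpow_zero, one_mul]
      _ ≤ 2 ^ q * (1 + ‖y‖) ^ (-q) := by
          gcongr 2 ^ q * ?_
          exact Real.rpow_le_rpow_of_nonpos (by positivity) (by linarith) (by linarith)
  calc ∫⁻ y in {y : E | 1 < ‖y‖}, ‖y‖ₑ ^ (-q) ∂μ
      ≤ ∫⁻ y in {y : E | 1 < ‖y‖},
          ENNReal.ofReal (2 ^ q) * ENNReal.ofReal ((1 + ‖y‖) ^ (-q)) ∂μ :=
        setLIntegral_mono' (measurableSet_lt measurable_const measurable_norm) hbracket
    _ ≤ ∫⁻ y, ENNReal.ofReal (2 ^ q) * ENNReal.ofReal ((1 + ‖y‖) ^ (-q)) ∂μ :=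
        setLIntegral_le_lintegral _ _
    _ = ENNReal.ofReal (2 ^ q) * ∫⁻ y, ENNReal.ofReal ((1 + ‖y‖) ^ (-q)) ∂μ :=
        lintegral_const_mul' _ _ ENNReal.ofReal_ne_top
    _ < ⊤ := ENNReal.mul_lt_top ENNReal.ofReal_lt_top (finite_integral_one_add_norm hq)

lemma setLIntegral_lt_norm_enorm_rpow_neg (q : ℝ) {t : ℝ} (ht : 0 < t) :
    ∫⁻ y in {y : E | t < ‖y‖}, ‖y‖ₑ ^ (-q) ∂μ =
      ENNReal.ofReal t ^ ((finrank ℝ E : ℝ) - q) *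
        ∫⁻ y in {y : E | 1 < ‖y‖}, ‖y‖ₑ ^ (-q) ∂μ := by
  have ht0 : ENNReal.ofReal t ≠ 0 := by simpa using ht
  set f : E → ℝ≥0∞ := {y : E | t < ‖y‖}.indicator fun y => ‖y‖ₑ ^ (-q)
  set g : E → ℝ≥0∞ := {y : E | 1 < ‖y‖}.indicator fun y => ‖y‖ₑ ^ (-q)
  have hf : Measurable f :=
    Measurable.indicator (by fun_prop) (measurableSet_lt measurable_const measurable_norm)
  have hhom (y : E) : f (t • y) = ENNReal.ofReal t ^ (-q) * g y := by
    have hmem : t < ‖t • y‖ ↔ 1 < ‖y‖ := by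
      rw [norm_smul, Real.norm_of_nonneg ht.le, lt_mul_iff_one_lt_right ht]
    simp only [f, g, indicator_apply, mem_ofPred_eq, hmem, enorm_smul, Real.enorm_of_nonneg ht.le,
      ENNReal.mul_rpow_of_ne_top ENNReal.ofReal_ne_top enorm_ne_top, mul_ite, mul_zero]
  have hscale : ∫⁻ y, f y ∂μ = ENNReal.ofReal t ^ (finrank ℝ E : ℝ) * ∫⁻ y, f (t • y) ∂μ := by
    rw [← lintegral_map hf (measurable_const_smul t), Measure.map_addHaar_smul μ ht.ne',
      lintegral_smul_measure, smul_eq_mul, ← mul_assoc, abs_of_pos (by positivity),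
      ENNReal.ofReal_inv_of_pos (by positivity), ENNReal.ofReal_pow ht.le, ENNReal.rpow_natCast,
      ENNReal.mul_inv_cancel (pow_ne_zero _ ht0) (ENNReal.pow_ne_top ENNReal.ofReal_ne_top),
      one_mul]
  rw [← lintegral_indicator (measurableSet_lt measurable_const measurable_norm),
    ← lintegral_indicator (measurableSet_lt measurable_const measurable_norm)]
  change ∫⁻ y, f y ∂μ = _ * ∫⁻ y, g y ∂μ
  simp_rw [hscale, hhom]
  rw [lintegral_const_mul' _ _ (ENNReal.rpow_ne_top_of_ne_zero ht0 ENNReal.ofReal_ne_top),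
    ← mul_assoc, ← ENNReal.rpow_add _ _ ht0 ENNReal.ofReal_ne_top, sub_eq_add_neg]

lemma setLIntegral_lt_dist_edist_rpow_neg (q : ℝ) {t : ℝ} (ht : 0 < t) (x : E) :
    ∫⁻ y in {y : E | t < dist x y}, edist x y ^ (-q) ∂μ =
      ENNReal.ofReal t ^ ((finrank ℝ E : ℝ) - q) *
        ∫⁻ y in {y : E | 1 < ‖y‖}, ‖y‖ₑ ^ (-q) ∂μ := by
  rw [← setLIntegral_lt_norm_enorm_rpow_neg μ q ht,
    ← lintegral_indicator (measurableSet_lt measurable_const (by fun_prop)),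
    ← lintegral_indicator (measurableSet_lt measurable_const measurable_norm),
    ← lintegral_sub_left_eq_self ({y : E | t < ‖y‖}.indicator fun y => ‖y‖ₑ ^ (-q)) x]
  simp only [indicator_apply, mem_ofPred_eq, dist_eq_norm, edist_eq_enorm_sub]

lemma lintegral_indicator_ball_mul_edist_rpow_neg {N lam : ℝ} (hN : 0 ≤ N) (hlam : 0 < lam)
    {X w : E} (hw : X ≠ w) (x : E) (f : E → ℝ≥0∞) :
    ∫⁻ y, (ball X (lam * dist x y)).indicator f w * edist x y ^ (-(N + finrank ℝ E)) ∂μ =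
      ENNReal.ofReal lam ^ N * (∫⁻ y in {y : E | 1 < ‖y‖}, ‖y‖ₑ ^ (-(N + finrank ℝ E)) ∂μ) *
        (f w / edist X w ^ N) := by
  set T : Set E := {y | dist X w / lam < dist x y}
  have hT : MeasurableSet T := measurableSet_lt measurable_const (by fun_prop)
  have hfactor (y : E) :
      (ball X (lam * dist x y)).indicator f w * edist x y ^ (-(N + finrank ℝ E)) =
        f w * T.indicator (fun y => edist x y ^ (-(N + finrank ℝ E))) y := by
    by_cases h : dist X w < lam * dist x y
    · simp [T, indicator_of_mem (mem_ball'.2 h), div_lt_iff₀' hlam, h]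
    · simp [T, indicator_of_notMem (mt mem_ball'.1 h), div_lt_iff₀' hlam, h]
  have hradius : ENNReal.ofReal (dist X w / lam) ^ (-N) =
      ENNReal.ofReal lam ^ N * (edist X w ^ N)⁻¹ := by
    rw [ENNReal.ofReal_div_of_pos hlam, ← edist_dist, ENNReal.rpow_neg,
      ENNReal.div_rpow_of_nonneg _ _ hN, ENNReal.inv_div (.inl (by finiteness))
        (.inl (by simp [hlam])), div_eq_mul_inv]
  rw [lintegral_congr hfactor, lintegral_const_mul _ (Measurable.indicator (by fun_prop) hT),
    lintegral_indicator hT, setLIntegral_lt_dist_edist_rpow_neg μ _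
      (div_pos (dist_pos.2 hw) hlam), sub_add_cancel_right, hradius, div_eq_mul_inv]
  ring

end PowerKernel

section LocalOscillation

variable {E α : Type*} [PseudoMetricSpace E] [MeasurableSpace E] (μ : Measure E)
  [PseudoEMetricSpace α]

/-- The inner integral of the Gagliardo energy: the density at `X` of
`∬ d(u X, u w)^p / d(X, w)^N`, with `w` ranging over `D`. The exponent `N` stands for the
`m + σ p` of the seminorm `W^{σ,p}`. -/
def gagliardoDensity (p N : ℝ) (D : Set E) (u : E → α) (X : E) : ℝ≥0∞ :=
  ∫⁻ w in D, edist (u X) (u w) ^ p / edist X w ^ N ∂μ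

/-- The local `p`-oscillation of `u` around `X` at scale `r`, seen from within `D`. -/
def localOsc (p : ℝ) (D : Set E) (u : E → α) (X : E) (r : ℝ) : ℝ≥0∞ :=
  ∫⁻ w in ball X r ∩ D, edist (u X) (u w) ^ p ∂μ

/-- Averaging over the ball trades a two-point difference for quantities centred at a single
point. -/
lemma edist_rpow_mul_measure_ball_le [MeasurableSpace α] [OpensMeasurableSpace α] {p : ℝ}
    (hp : 0 ≤ p) {D : Set E} {u : E → α} (hu : Measurable u) {X Y : E} {r R : ℝ}
    (hD : ball X r ⊆ D) (hR : dist X Y + r ≤ R) :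
    edist (u X) (u Y) ^ p * μ (ball X r) ≤
      2 ^ p * (localOsc μ p D u X r + localOsc μ p D u Y R) := by
  have htriangle (w : E) : edist (u X) (u Y) ^ p ≤
      2 ^ p * (edist (u X) (u w) ^ p + edist (u Y) (u w) ^ p) :=
    (ENNReal.rpow_le_rpow (edist_triangle_right _ _ _) hp).trans
      (ENNReal.add_rpow_le_two_rpow_mul_rpow_add_rpow _ _ hp)
  calc edist (u X) (u Y) ^ p * μ (ball X r)
      = ∫⁻ _ in ball X r, edist (u X) (u Y) ^ p ∂μ := (setLIntegral_const _ _).symm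
    _ ≤ ∫⁻ w in ball X r, 2 ^ p * (edist (u X) (u w) ^ p + edist (u Y) (u w) ^ p) ∂μ :=
        lintegral_mono htriangle
    _ = 2 ^ p * (∫⁻ w in ball X r, edist (u X) (u w) ^ p ∂μ +
          ∫⁻ w in ball X r, edist (u Y) (u w) ^ p ∂μ) := by
        rw [lintegral_const_mul' _ _ (by finiteness), lintegral_add_left (by fun_prop)]
    _ ≤ 2 ^ p * (localOsc μ p D u X r + localOsc μ p D u Y R) := by
        unfold localOsc
        gcongr 2 ^ p * (?_ + ?_)
        · exact lintegral_mono_set (subset_inter subset_rfl hD)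
        · exact lintegral_mono_set (subset_inter (ball_subset_ball' (by linarith)) hD)

variable [OpensMeasurableSpace E]

lemma localOsc_eq_setLIntegral_indicator (p : ℝ) (D : Set E) (u : E → α) (X : E) (r : ℝ) :
    localOsc μ p D u X r =
      ∫⁻ w in D, (ball X r).indicator (fun w => edist (u X) (u w) ^ p) w ∂μ :=
  (setLIntegral_indicator measurableSet_ball _).symm

variable [SecondCountableTopology E] [SFinite μ]
  [MeasurableSpace α] [OpensMeasurableSpace α] [SecondCountableTopology α]

lemma measurable_gagliardoDensity (p N : ℝ) (D : Set E) {u : E → α} (hu : Measurable u) :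
    Measurable (gagliardoDensity μ p N D u) :=
  Measurable.lintegral_prod_right' (ν := μ.restrict D)
    (f := fun z : E × E => edist (u z.1) (u z.2) ^ p / edist z.1 z.2 ^ N) (by fun_prop)

lemma measurable_localOsc (p : ℝ) (D : Set E) {u : E → α} (hu : Measurable u) :
    Measurable fun z : E × ℝ => localOsc μ p D u z.1 z.2 := by
  simp_rw [localOsc_eq_setLIntegral_indicator]
  refine Measurable.lintegral_prod_right' (ν := μ.restrict D) (f := fun z : (E × ℝ) × E =>
    {z : (E × ℝ) × E | dist z.2 z.1.1 < z.1.2}.indicator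
      (fun z => edist (u z.1.1) (u z.2) ^ p) z) ?_
  exact Measurable.indicator (by fun_prop) (measurableSet_lt (by fun_prop) (by fun_prop))

end LocalOscillation

lemma lintegral_lintegral_add_swap {β : Type*} [MeasurableSpace β] {ν : Measure β} [SFinite ν]
    {F G : β → β → ℝ≥0∞} (hF : Measurable (Function.uncurry F))
    (hG : Measurable (Function.uncurry G)) :
    ∫⁻ x, ∫⁻ y, F x y + G y x ∂ν ∂ν = (∫⁻ x, ∫⁻ y, F x y ∂ν ∂ν) + ∫⁻ x, ∫⁻ y, G x y ∂ν ∂ν := by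
  have hinner (x : β) :
      ∫⁻ y, F x y + G y x ∂ν = (∫⁻ y, F x y ∂ν) + ∫⁻ y, G y x ∂ν :=
    lintegral_add_left (hF.comp measurable_prodMk_left) _
  simp_rw [hinner]
  rw [lintegral_add_left (f := fun x => ∫⁻ y, F x y ∂ν) hF.lintegral_prod_right',
    lintegral_lintegral_swap (f := G) hG.aemeasurable]

section Composition

variable {E α : Type*} [NormedAddCommGroup E] [NormedSpace ℝ E] [FiniteDimensional ℝ E]
  [MeasurableSpace E] [BorelSpace E] (μ : Measure E) [μ.IsAddHaarMeasure]
  [PseudoEMetricSpace α] [MeasurableSpace α] [OpensMeasurableSpace α]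

lemma edist_rpow_div_le_localOsc {p : ℝ} (hp : 0 ≤ p) (N : ℝ) {D : Set E} {u : E → α}
    (hu : Measurable u) {X Y x y : E} (hxy : x ≠ y) {L κ : ℝ} (hκ : 0 < κ)
    (hL : dist X Y ≤ L * dist x y) (hD : ball X (κ * dist x y) ⊆ D) :
    edist (u X) (u Y) ^ p / edist x y ^ N ≤
      2 ^ p * (ENNReal.ofReal (κ ^ finrank ℝ E) * μ (ball 0 1))⁻¹ *
        (localOsc μ p D u X (κ * dist x y) * edist x y ^ (-(N + finrank ℝ E)) +
          localOsc μ p D u Y ((L + κ) * dist x y) * edist x y ^ (-(N + finrank ℝ E))) := by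
  set d : ℝ≥0∞ := edist x y
  set b : ℝ≥0∞ := ENNReal.ofReal (κ ^ finrank ℝ E) * μ (ball 0 1)
  have hb0 : b ≠ 0 := mul_ne_zero (by simpa using pow_pos hκ _) (measure_ball_pos μ _ one_pos).ne'
  have hbt : b ≠ ⊤ := ENNReal.mul_ne_top ENNReal.ofReal_ne_top measure_ball_lt_top.ne
  have hball : μ (ball X (κ * dist x y)) = b * d ^ (finrank ℝ E : ℝ) := by
    rw [Measure.addHaar_ball_of_pos μ X (mul_pos hκ (dist_pos.2 hxy)), mul_pow,
      ENNReal.ofReal_mul (by positivity), ENNReal.ofReal_pow dist_nonneg, ← edist_dist,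
      ENNReal.rpow_natCast, mul_right_comm]
  have hpow : d ^ (finrank ℝ E : ℝ) * d ^ (-(N + finrank ℝ E)) = (d ^ N)⁻¹ := by
    rw [← ENNReal.rpow_add _ _ (edist_pos.2 hxy).ne' (edist_ne_top x y), ← ENNReal.rpow_neg]
    congr 1
    ring
  have hR : dist X Y + κ * dist x y ≤ (L + κ) * dist x y := by linarith
  calc edist (u X) (u Y) ^ p / d ^ N
      = (b⁻¹ * b) * (edist (u X) (u Y) ^ p *
          (d ^ (finrank ℝ E : ℝ) * d ^ (-(N + finrank ℝ E)))) := by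
        rw [ENNReal.inv_mul_cancel hb0 hbt, one_mul, hpow, div_eq_mul_inv]
    _ = b⁻¹ * (edist (u X) (u Y) ^ p * μ (ball X (κ * dist x y))) *
          d ^ (-(N + finrank ℝ E)) := by
        rw [hball]
        ring
    _ ≤ b⁻¹ * (2 ^ p * (localOsc μ p D u X (κ * dist x y) +
          localOsc μ p D u Y ((L + κ) * dist x y))) * d ^ (-(N + finrank ℝ E)) := by
        gcongr b⁻¹ * ?_ * _
        exact edist_rpow_mul_measure_ball_le μ hp hu hD hR
    _ = _ := by ring

/-- A point `w` contributes to the oscillation around `X` only for those `y` with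
`|x - y| > |X - w| / lam`, and the integral of the kernel over these `y` is a multiple of
`|X - w| ^ (-N)`. -/
lemma exists_lintegral_localOsc_mul_le {p N lam : ℝ} (hp : 0 < p) (hN : 0 < N) (hlam : 0 < lam) :
    ∃ J : ℝ≥0∞, J ≠ ⊤ ∧ ∀ {u : E → α}, Measurable u → ∀ (D : Set E) (X x : E),
      ∫⁻ y, localOsc μ p D u X (lam * dist x y) * edist x y ^ (-(N + finrank ℝ E)) ∂μ ≤
        J * gagliardoDensity μ p N D u X := by
  set q : ℝ := N + finrank ℝ E
  set J : ℝ≥0∞ := ENNReal.ofReal lam ^ N * ∫⁻ y in {y : E | 1 < ‖y‖}, ‖y‖ₑ ^ (-q) ∂μ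
  have hJ : J ≠ ⊤ := ENNReal.mul_ne_top (by finiteness)
    (setLIntegral_one_lt_norm_enorm_rpow_neg_lt_top μ (lt_add_of_pos_left _ hN)).ne
  refine ⟨J, hJ, fun {u} hu D X x => ?_⟩
  let f (w : E) : ℝ≥0∞ := edist (u X) (u w) ^ p
  have hf : Measurable f := by fun_prop
  have hslice (w : E) :
      ∫⁻ y, (ball X (lam * dist x y)).indicator f w * edist x y ^ (-q) ∂μ ≤
        J * (f w / edist X w ^ N) := by
    rcases eq_or_ne X w with rfl | hw
    · simp [f, indicator, hp]
    · exact (lintegral_indicator_ball_mul_edist_rpow_neg μ hN.le hlam hw x f).le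
  have hmeas : Measurable fun z : E × E =>
      (ball X (lam * dist x z.1)).indicator f z.2 * edist x z.1 ^ (-q) :=
    (Measurable.indicator (s := {z : E × E | dist z.2 X < lam * dist x z.1})
      (hf.comp measurable_snd) (measurableSet_lt (by fun_prop) (by fun_prop))).mul (by fun_prop)
  calc ∫⁻ y, localOsc μ p D u X (lam * dist x y) * edist x y ^ (-q) ∂μ
      = ∫⁻ y, ∫⁻ w in D, (ball X (lam * dist x y)).indicator f w * edist x y ^ (-q) ∂μ ∂μ := by
        simp_rw [localOsc_eq_setLIntegral_indicator]
        exact lintegral_congr fun y =>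
          (lintegral_mul_const _ (hf.indicator measurableSet_ball)).symm
    _ = ∫⁻ w in D, ∫⁻ y, (ball X (lam * dist x y)).indicator f w * edist x y ^ (-q) ∂μ ∂μ :=
        lintegral_lintegral_swap hmeas.aemeasurable
    _ ≤ ∫⁻ w in D, J * (f w / edist X w ^ N) ∂μ := lintegral_mono hslice
    _ = J * gagliardoDensity μ p N D u X := lintegral_const_mul' _ _ hJ

variable [SecondCountableTopology α]

lemma exists_lintegral_gagliardoDensity_comp_le {p N L κ : ℝ} (hp : 0 < p) (hN : 0 < N)
    (hL : 0 ≤ L) (hκ : 0 < κ) :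
    ∃ C : ℝ≥0∞, C ≠ ⊤ ∧ ∀ {u : E → α} {Φ : E → E} {A D : Set E}, Measurable u → Measurable Φ →
      MeasurableSet A → (∀ x ∈ A, ∀ y ∈ A, dist (Φ x) (Φ y) ≤ L * dist x y) →
      (∀ x ∈ A, ∀ y ∈ A, ball (Φ x) (κ * dist x y) ⊆ D) →
      ∫⁻ x in A, gagliardoDensity μ p N A (u ∘ Φ) x ∂μ ≤
        C * ∫⁻ x in A, gagliardoDensity μ p N D u (Φ x) ∂μ := by
  obtain ⟨J₁, hJ₁, hF⟩ := exists_lintegral_localOsc_mul_le (α := α) μ hp hN hκ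
  obtain ⟨J₂, hJ₂, hG⟩ :=
    exists_lintegral_localOsc_mul_le (α := α) μ hp hN (add_pos_of_nonneg_of_pos hL hκ)
  set c : ℝ≥0∞ := 2 ^ p * (ENNReal.ofReal (κ ^ finrank ℝ E) * μ (ball 0 1))⁻¹
  have hc : c ≠ ⊤ := ENNReal.mul_ne_top (by finiteness) (ENNReal.inv_ne_top.2
    (mul_ne_zero (by simpa using pow_pos hκ _) (measure_ball_pos μ _ one_pos).ne'))
  refine ⟨c * (J₁ + J₂), ENNReal.mul_ne_top hc (ENNReal.add_ne_top.2 ⟨hJ₁, hJ₂⟩), ?_⟩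
  intro u Φ A D hu hΦ hA hLip hD
  let T (lam : ℝ) (x y : E) : ℝ≥0∞ :=
    localOsc μ p D u (Φ x) (lam * dist x y) * edist x y ^ (-(N + finrank ℝ E))
  have hT (lam : ℝ) : Measurable (Function.uncurry (T lam)) := by
    have hpair : Measurable fun z : E × E => (Φ z.1, lam * dist z.1 z.2) := by fun_prop
    exact ((measurable_localOsc μ p D hu).comp hpair).mul (by fun_prop)
  have hpointwise : ∀ x ∈ A, ∀ y ∈ A, edist (u (Φ x)) (u (Φ y)) ^ p / edist x y ^ N ≤
      c * (T κ x y + T (L + κ) y x) := by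
    intro x hx y hy
    rcases eq_or_ne x y with rfl | hxy
    · simp [hp]
    simp only [T, dist_comm y x, edist_comm y x]
    exact edist_rpow_div_le_localOsc μ hp.le N hu hxy hκ (hLip x hx y hy) (hD x hx y hy)
  calc ∫⁻ x in A, gagliardoDensity μ p N A (u ∘ Φ) x ∂μ
      ≤ ∫⁻ x in A, ∫⁻ y in A, c * (T κ x y + T (L + κ) y x) ∂μ ∂μ :=
        setLIntegral_mono' hA fun x hx => setLIntegral_mono' hA (hpointwise x hx)
    _ = c * ((∫⁻ x in A, ∫⁻ y in A, T κ x y ∂μ ∂μ) +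
          ∫⁻ x in A, ∫⁻ y in A, T (L + κ) x y ∂μ ∂μ) := by
        simp_rw [lintegral_const_mul' _ _ hc]
        rw [lintegral_lintegral_add_swap (hT _) (hT _)]
    _ ≤ c * ((∫⁻ x in A, J₁ * gagliardoDensity μ p N D u (Φ x) ∂μ) +
          ∫⁻ x in A, J₂ * gagliardoDensity μ p N D u (Φ x) ∂μ) := by
        gcongr with x x
        · exact (setLIntegral_le_lintegral _ _).trans (hF hu D (Φ x) x)
        · exact (setLIntegral_le_lintegral _ _).trans (hG hu D (Φ x) x)
    _ = c * (J₁ + J₂) * ∫⁻ x in A, gagliardoDensity μ p N D u (Φ x) ∂μ := by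
        rw [lintegral_const_mul' _ _ hJ₁, lintegral_const_mul' _ _ hJ₂, ← add_mul,
          ← mul_assoc]

end Composition

section Averaging

lemma exists_le_two_div_measure_mul_setLIntegral {β : Type*} [MeasurableSpace β] {μ : Measure β}
    {Z : Set β} (h0 : μ Z ≠ 0) (htop : μ Z ≠ ⊤) {f g : β → ℝ≥0∞}
    (hf : AEMeasurable f (μ.restrict Z)) (hg : AEMeasurable g (μ.restrict Z)) :
    ∃ z ∈ Z, f z ≤ 2 / μ Z * ∫⁻ x in Z, f x ∂μ ∧ g z ≤ 2 / μ Z * ∫⁻ x in Z, g x ∂μ := by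
  set a := ∫⁻ x in Z, f x ∂μ
  set b := ∫⁻ x in Z, g x ∂μ
  obtain ⟨z, hz, hle⟩ := exists_le_setLAverage (f := fun z => f z * a⁻¹ + g z * b⁻¹) h0 htop
    ((hf.mul_const _).add (hg.mul_const _))
  have hsum : f z * a⁻¹ + g z * b⁻¹ ≤ 2 / μ Z := by
    refine hle.trans ?_
    rw [setLAverage_eq, lintegral_add_left' (hf.mul_const _), lintegral_mul_const'' _ hf,
      lintegral_mul_const'' _ hg, ← one_add_one_eq_two]
    gcongr <;> exact ENNReal.mul_inv_le_one _
  have hc0 : 2 / μ Z ≠ 0 := by simp [htop]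
  have hct : 2 / μ Z ≠ ⊤ := ENNReal.div_ne_top (by simp) h0
  exact ⟨z, hz,
    (ENNReal.div_le_iff_le_mul (.inr hct) (.inr hc0)).1 (le_self_add.trans hsum),
    (ENNReal.div_le_iff_le_mul (.inr hct) (.inr hc0)).1 (le_add_self.trans hsum)⟩

/-- In the variables `y = x + z` and `w = y - V y - z` the integrand becomes `g w`, with
`y` ranging over `B`. -/
lemma setLIntegral_setLIntegral_comp_sub_le {G : Type*} [AddCommGroup G] [MeasurableSpace G]
    [MeasurableAdd₂ G] [MeasurableNeg G] {μ : Measure G} [SFinite μ] [μ.IsAddLeftInvariant]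
    [μ.IsNegInvariant] {V : G → G} (hV : Measurable V) {A B D Z : Set G} (hA : MeasurableSet A)
    (hB : MeasurableSet B) (hD : MeasurableSet D) (hZ : MeasurableSet Z)
    (hAB : ∀ z ∈ Z, ∀ x ∈ A, x + z ∈ B) (hAD : ∀ z ∈ Z, ∀ x ∈ A, x - V (x + z) ∈ D)
    {g : G → ℝ≥0∞} (hg : Measurable g) :
    ∫⁻ z in Z, ∫⁻ x in A, g (x - V (x + z)) ∂μ ∂μ ≤ μ B * ∫⁻ x in D, g x ∂μ := by
  have hgD : Measurable (D.indicator g) := hg.indicator hD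
  have hshift : ∀ z ∈ Z, ∫⁻ x in A, g (x - V (x + z)) ∂μ ≤
      ∫⁻ y in B, D.indicator g (y - V y - z) ∂μ := by
    intro z hz
    rw [← lintegral_indicator hB,
      ← lintegral_add_right_eq_self (B.indicator fun y => D.indicator g (y - V y - z)) z]
    refine (setLIntegral_mono' hA fun x hx => ?_).trans (setLIntegral_le_lintegral A _)
    rw [indicator_of_mem (hAB z hz x hx), add_sub_right_comm, add_sub_cancel_right,
      indicator_of_mem (hAD z hz x hx)]
  calc ∫⁻ z in Z, ∫⁻ x in A, g (x - V (x + z)) ∂μ ∂μ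
      ≤ ∫⁻ z in Z, ∫⁻ y in B, D.indicator g (y - V y - z) ∂μ ∂μ := setLIntegral_mono' hZ hshift
    _ ≤ ∫⁻ z, ∫⁻ y in B, D.indicator g (y - V y - z) ∂μ ∂μ := setLIntegral_le_lintegral _ _
    _ = ∫⁻ y in B, ∫⁻ z, D.indicator g (y - V y - z) ∂μ ∂μ :=
        lintegral_lintegral_swap (hgD.comp (by fun_prop)).aemeasurable
    _ = μ B * ∫⁻ x in D, g x ∂μ := by
        simp_rw [lintegral_sub_left_eq_self (D.indicator g)]
        rw [lintegral_indicator hD, setLIntegral_const, mul_comm]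

end Averaging

section Shift

variable {E α : Type*} [NormedAddCommGroup E] [NormedSpace ℝ E] [FiniteDimensional ℝ E]
  [MeasurableSpace E] [BorelSpace E] (μ : Measure E) [μ.IsAddHaarMeasure]
  [PseudoEMetricSpace α] [MeasurableSpace α] [OpensMeasurableSpace α]
  [SecondCountableTopology α]

lemma exists_mem_ball_setLIntegral_comp_le {V : E → E} (hV : Measurable V) {A D : Set E}
    (hA : MeasurableSet A) (hD : MeasurableSet D) {M δ : ℝ} (hM : 0 < M) (hδ : 0 < δ)
    (hAM : A ⊆ ball 0 (M * δ)) (hAD : ∀ z ∈ ball 0 δ, MapsTo (fun x => x - V (x + z)) A D)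
    {g h : E → ℝ≥0∞} (hg : Measurable g) (hh : Measurable h) :
    ∃ z ∈ ball (0 : E) δ,
      ∫⁻ x in A, g (x - V (x + z)) ∂μ ≤
        2 * ENNReal.ofReal ((M + 1) ^ finrank ℝ E) * ∫⁻ x in D, g x ∂μ ∧
      ∫⁻ x in A, h (x - V (x + z)) ∂μ ≤
        2 * ENNReal.ofReal ((M + 1) ^ finrank ℝ E) * ∫⁻ x in D, h x ∂μ := by
  have hAB : ∀ z ∈ ball (0 : E) δ, ∀ x ∈ A, x + z ∈ ball (0 : E) ((M + 1) * δ) := by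
    intro z hz x hx
    rw [mem_ball_zero_iff] at hz ⊢
    linarith [norm_add_le x z, mem_ball_zero_iff.1 (hAM hx)]
  have hmeas {f : E → ℝ≥0∞} (hf : Measurable f) :
      Measurable fun z => ∫⁻ x in A, f (x - V (x + z)) ∂μ :=
    Measurable.lintegral_prod_right' (ν := μ.restrict A)
      (f := fun q : E × E => f (q.2 - V (q.2 + q.1))) (hf.comp (by fun_prop))
  have h0 : μ (ball 0 δ) ≠ 0 := (measure_ball_pos μ _ hδ).ne'
  have htop : μ (ball 0 δ) ≠ ⊤ := measure_ball_lt_top.ne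
  have hvol : 2 / μ (ball 0 δ) * μ (ball 0 ((M + 1) * δ)) =
      2 * ENNReal.ofReal ((M + 1) ^ finrank ℝ E) := by
    rw [Measure.addHaar_ball_mul_of_pos μ _ (by linarith), mul_comm (ENNReal.ofReal _),
      div_eq_mul_inv, mul_assoc, ENNReal.inv_mul_cancel_left h0 htop]
  have hmean {f : E → ℝ≥0∞} (hf : Measurable f) :
      2 / μ (ball 0 δ) * ∫⁻ z in ball 0 δ, ∫⁻ x in A, f (x - V (x + z)) ∂μ ∂μ ≤
        2 * ENNReal.ofReal ((M + 1) ^ finrank ℝ E) * ∫⁻ x in D, f x ∂μ := by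
    rw [← hvol, mul_assoc]
    gcongr
    exact setLIntegral_setLIntegral_comp_sub_le hV hA measurableSet_ball hD measurableSet_ball
      hAB hAD hf
  obtain ⟨z, hz, hgz, hhz⟩ := exists_le_two_div_measure_mul_setLIntegral h0 htop
    (hmeas hg).aemeasurable (hmeas hh).aemeasurable
  exact ⟨z, hz, hgz.trans (hmean hg), hhz.trans (hmean hh)⟩

/-- For a single shift `z` the map `x ↦ x - V (x + z)` may squeeze `A` onto a null set;
only an average over `z` controls the compositions. -/
theorem exists_gagliardoDensity_comp_sub_le {p N M : ℝ} (hp : 0 < p) (hN : 0 < N) (hM : 0 < M)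
    (K : ℝ≥0) :
    ∃ C : ℝ≥0∞, C ≠ ⊤ ∧ ∀ {V : E → E} {A D : Set E} {δ : ℝ}, LipschitzWith K V →
      MeasurableSet A → MeasurableSet D → 0 < δ → A ⊆ ball 0 (M * δ) → thickening δ A ⊆ D →
      (∀ z ∈ ball 0 δ, MapsTo (fun x => x - V (x + z)) A A) →
      ∀ {u : E → α} {g : E → ℝ≥0∞}, Measurable u → Measurable g →
        ∃ z ∈ ball (0 : E) δ,
          ∫⁻ x in A, gagliardoDensity μ p N A (fun x => u (x - V (x + z))) x ∂μ ≤
            C * ∫⁻ x in D, gagliardoDensity μ p N D u x ∂μ ∧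
          ∫⁻ x in A, g (x - V (x + z)) ∂μ ≤ C * ∫⁻ x in D, g x ∂μ := by
  have hκ : 0 < (2 * M)⁻¹ := by positivity
  obtain ⟨C, hC, hcomp⟩ := exists_lintegral_gagliardoDensity_comp_le (α := α) μ hp hN
    (by positivity : (0 : ℝ) ≤ 1 + K) hκ
  set c : ℝ≥0∞ := 2 * ENNReal.ofReal ((M + 1) ^ finrank ℝ E)
  refine ⟨(C + 1) * c, by finiteness, ?_⟩
  intro V A D δ hV hA hD hδ hAM hthick hmaps u g hu hg
  have hAD : A ⊆ D := (self_subset_thickening hδ A).trans hthick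
  obtain ⟨z, hz, hdens, hgz⟩ := exists_mem_ball_setLIntegral_comp_le μ hV.continuous.measurable
    hA hD hM hδ hAM (fun z hz => (hmaps z hz).mono_right hAD)
    (measurable_gagliardoDensity μ p N D hu) hg
  have hc : c ≤ (C + 1) * c := le_mul_of_one_le_left' le_add_self
  refine ⟨z, hz, ?_, hgz.trans (by gcongr)⟩
  have hLip (x y : E) : dist (x - V (x + z)) (y - V (y + z)) ≤ (1 + K) * dist x y := by
    calc dist (x - V (x + z)) (y - V (y + z))
        ≤ dist x y + dist (V (x + z)) (V (y + z)) := dist_sub_sub_le _ _ _ _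
      _ ≤ dist x y + K * dist (x + z) (y + z) := by gcongr; exact hV.dist_le_mul _ _
      _ = (1 + K) * dist x y := by rw [dist_add_right]; ring
  have hball : ∀ x ∈ A, ∀ y ∈ A, ball (x - V (x + z)) ((2 * M)⁻¹ * dist x y) ⊆ D := by
    intro x hx y hy
    have hdist : dist x y ≤ 2 * M * δ := by
      linarith [dist_triangle_right x y 0, mem_ball.1 (hAM hx), mem_ball.1 (hAM hy)]
    refine (ball_subset_ball ?_).trans ((ball_subset_thickening (hmaps z hz hx) δ).trans hthick)
    rwa [inv_mul_le_iff₀ (by positivity)]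
  calc ∫⁻ x in A, gagliardoDensity μ p N A (fun x => u (x - V (x + z))) x ∂μ
      ≤ C * ∫⁻ x in A, gagliardoDensity μ p N D u (x - V (x + z)) ∂μ :=
        hcomp hu ((measurable_id.sub (hV.continuous.measurable.comp (by fun_prop)))) hA
          (fun x _ y _ => hLip x y) hball
    _ ≤ (C + 1) * (c * ∫⁻ x in D, gagliardoDensity μ p N D u x ∂μ) := by
        gcongr
        exact le_self_add
    _ = (C + 1) * c * ∫⁻ x in D, gagliardoDensity μ p N D u x ∂μ := (mul_assoc _ _ _).symm

end Shift

section Box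

variable {ι : Type*}

/-- The product of the open cube of radius `a` in the coordinates of `S` with the open cube of
radius `b` in the remaining coordinates. -/
def box (S : Set ι) (a b : ℝ) : Set (EuclideanSpace ℝ ι) :=
  {x | ∀ i, (i ∈ S → |x i| < a) ∧ (i ∉ S → |x i| < b)}

lemma rect_eq_box (m d : ℕ) (a b : ℝ) : rect m d a b = box {i : Fin m | (i : ℕ) < d} a b := by
  simp only [rect, box, mem_ofPred_eq, not_lt]

lemma inv_smul_mem_box_iff {S : Set ι} {a b η : ℝ} (hη : 0 < η) {x : EuclideanSpace ℝ ι} :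
    η⁻¹ • x ∈ box S a b ↔ x ∈ box S (a * η) (b * η) := by
  simp only [box, mem_ofPred_eq, PiLp.smul_apply, smul_eq_mul, abs_mul, abs_inv, abs_of_pos hη,
    inv_mul_lt_iff₀ hη, mul_comm η]

lemma isOpen_box [Finite ι] (S : Set ι) (a b : ℝ) : IsOpen (box S a b) := by
  simp only [box, ofPred_forall, ofPred_and]
  refine isOpen_iInter_of_finite fun i => ?_
  refine .inter (isOpen_iInter_of_finite fun _ => ?_) (isOpen_iInter_of_finite fun _ => ?_) <;>
    exact isOpen_lt (by fun_prop) continuous_const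

lemma closure_box_subset {S : Set ι} {a a' b b' : ℝ} (ha : a < a') (hb : b < b') :
    closure (box S a b) ⊆ box S a' b' := by
  have hsub : closure (box S a b) ⊆
      {x : EuclideanSpace ℝ ι | ∀ i, (i ∈ S → |x i| ≤ a) ∧ (i ∉ S → |x i| ≤ b)} := by
    refine closure_minimal
      (fun x hx i => ⟨fun h => ((hx i).1 h).le, fun h => ((hx i).2 h).le⟩) ?_
    simp only [ofPred_forall, ofPred_and]
    refine isClosed_iInter fun i => ?_
    refine .inter (isClosed_iInter fun _ => ?_) (isClosed_iInter fun _ => ?_) <;>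
      exact isClosed_le (by fun_prop) continuous_const
  exact fun x hx i => ⟨fun h => ((hsub hx i).1 h).trans_lt ha,
    fun h => ((hsub hx i).2 h).trans_lt hb⟩

variable [Fintype ι]

lemma thickening_box_subset {S : Set ι} {a a' b b' r : ℝ} (ha : a + r ≤ a') (hb : b + r ≤ b') :
    thickening r (box S a b) ⊆ box S a' b' := by
  intro y hy i
  obtain ⟨x, hx, hyx⟩ := mem_thickening_iff.1 hy
  have hi : |y i| < |x i| + r := by
    have := PiLp.norm_apply_le (y - x) i
    rw [← dist_eq_norm, PiLp.sub_apply, Real.norm_eq_abs] at this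
    linarith [abs_sub_abs_le_abs_sub (y i) (x i)]
  exact ⟨fun hS => by linarith [(hx i).1 hS], fun hS => by linarith [(hx i).2 hS]⟩

lemma add_mem_box {S : Set ι} {a a' b b' r : ℝ} (ha : a + r ≤ a') (hb : b + r ≤ b')
    {x z : EuclideanSpace ℝ ι} (hx : x ∈ box S a b) (hz : ‖z‖ < r) : x + z ∈ box S a' b' :=
  thickening_box_subset ha hb (mem_thickening_iff.2 ⟨x, hx, by simpa using hz⟩)

lemma exists_box_subset_ball (ι : Type*) [Fintype ι] (a b : ℝ) :
    ∃ R : ℝ, 0 < R ∧ ∀ (S : Set ι) {η : ℝ}, 0 < η → box S (a * η) (b * η) ⊆ ball 0 (R * η) := by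
  set K : ℝ≥0 := (Fintype.card ι : ℝ≥0) ^ (1 / (2 : ℝ≥0∞)).toReal
  refine ⟨K * max |a| |b| + 1, by positivity, fun S η hη x hx => ?_⟩
  have hcoord (i : ι) : ‖x i‖ ≤ max |a| |b| * η := by
    rw [Real.norm_eq_abs]
    by_cases hi : i ∈ S
    · exact ((hx i).1 hi).le.trans (by gcongr; exact (le_abs_self a).trans (le_max_left _ _))
    · exact ((hx i).2 hi).le.trans (by gcongr; exact (le_abs_self b).trans (le_max_right _ _))
  have hsup : ‖WithLp.ofLp x‖ ≤ max |a| |b| * η :=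
    (pi_norm_le_iff_of_nonneg (by positivity)).2 hcoord
  rw [mem_ball_zero_iff]
  calc ‖x‖ ≤ K * ‖WithLp.ofLp x‖ := by
        simpa only [dist_zero_right, WithLp.ofLp_zero] using
          (PiLp.antilipschitzWith_ofLp 2 fun _ : ι => ℝ).le_mul_dist x 0
    _ ≤ K * (max |a| |b| * η) := by gcongr
    _ < (K * max |a| |b| + 1) * η := by linarith

end Box

section Cutoff

variable {ι : Type*} [Fintype ι]

/-- The projection of `ℝ^ι` that kills the coordinates of `S`. -/
def normalPart (S : Set ι) : EuclideanSpace ℝ ι →L[ℝ] EuclideanSpace ℝ ι :=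
  LinearMap.toContinuousLinearMap
    { toFun := fun x => WithLp.toLp 2 (Sᶜ.indicator x)
      map_add' := fun x y => by simp only [WithLp.ofLp_add, indicator_add', WithLp.toLp_add]
      map_smul' := fun c x => congrArg (WithLp.toLp 2) (indicator_const_smul Sᶜ c x) }

lemma normalPart_apply_of_mem {S : Set ι} {i : ι} (hi : i ∈ S) (x : EuclideanSpace ℝ ι) :
    normalPart S x i = 0 :=
  indicator_of_notMem (by simpa using hi) _

lemma normalPart_apply_of_notMem {S : Set ι} {i : ι} (hi : i ∉ S) (x : EuclideanSpace ℝ ι) :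
    normalPart S x i = x i :=
  indicator_of_mem (s := Sᶜ) hi _

lemma exists_cutoff_unit (S : Set ι) {a a' b b' : ℝ} (ha : a < a') (hb : b < b') :
    ∃ (χ : EuclideanSpace ℝ ι → ℝ) (K : ℝ≥0), ContDiff ℝ (⊤ : ℕ∞) χ ∧ (∀ y, χ y ∈ Icc 0 1) ∧
      (∀ y ∈ box S a b, χ y = 1) ∧ (∀ y ∉ box S a' b', χ y = 0) ∧
      LipschitzWith K fun y => χ y • normalPart S y := by
  have hdisj : Disjoint (box S a' b')ᶜ (closure (box S a b)) :=
    disjoint_compl_left_iff_subset.2 (closure_box_subset ha hb)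
  obtain ⟨χ, hχ0, hχ1, hχ⟩ := exists_contMDiffMap_zero_one_of_isClosed (n := (⊤ : ℕ∞))
    (modelWithCornersSelf ℝ (EuclideanSpace ℝ ι)) (isOpen_box S a' b').isClosed_compl
    isClosed_closure hdisj
  have hsmooth : ContDiff ℝ (⊤ : ℕ∞) χ := χ.contMDiff.contDiff
  obtain ⟨R, -, hR⟩ := exists_box_subset_ball ι a' b'
  have hsupp : HasCompactSupport fun y => χ y • normalPart S y := by
    refine .intro (isCompact_closedBall 0 R) fun y hy => ?_
    have : y ∉ box S a' b' := fun h =>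
      hy (ball_subset_closedBall (by simpa using hR S one_pos (by simpa using h)))
    rw [show χ y = 0 from hχ0 this, zero_smul]
  obtain ⟨K, hK⟩ := ContDiff.lipschitzWith_of_hasCompactSupport hsupp
    (hsmooth.smul (normalPart S).contDiff) (by simp)
  exact ⟨χ, K, hsmooth, hχ, fun y hy => hχ1 (subset_closure hy), fun y hy => hχ0 hy, hK⟩

lemma exists_cutoff_lipschitzWith_smul_normalPart (ι : Type*) [Fintype ι] {a a' b b' : ℝ}
    (ha : a < a') (hb : b < b') :
    ∃ K : ℝ≥0, ∀ (S : Set ι) {η : ℝ}, 0 < η → ∃ χ : EuclideanSpace ℝ ι → ℝ,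
      ContDiff ℝ (⊤ : ℕ∞) χ ∧ (∀ y, χ y ∈ Icc 0 1) ∧
      (∀ y ∈ box S (a * η) (b * η), χ y = 1) ∧ (∀ y ∉ box S (a' * η) (b' * η), χ y = 0) ∧
      LipschitzWith K fun y => χ y • normalPart S y := by
  choose χ K hsmooth hχ hχ1 hχ0 hK using
    fun S : Set ι => exists_cutoff_unit S ha hb
  obtain ⟨L, hL⟩ := Finite.exists_le K
  refine ⟨L, fun S η hη => ⟨fun y => χ S (η⁻¹ • y), (hsmooth S).comp (contDiff_const_smul _),
    fun y => hχ S _, fun y hy => hχ1 S _ ((inv_smul_mem_box_iff hη).2 hy),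
    fun y hy => hχ0 S _ (mt (inv_smul_mem_box_iff hη).1 hy), ?_⟩⟩
  have hscale (y : EuclideanSpace ℝ ι) : χ S (η⁻¹ • y) • normalPart S y =
      η • (χ S (η⁻¹ • y) • normalPart S (η⁻¹ • y)) := by
    rw [smul_comm, map_smul, smul_inv_smul₀ hη.ne']
  simp_rw [hscale]
  refine ((lipschitzWith_smul η).comp ((hK S).comp (lipschitzWith_smul η⁻¹))).weaken ?_
  rw [nnnorm_inv, mul_comm, mul_assoc, inv_mul_cancel₀ (by simpa using hη.ne'), mul_one]
  exact hL S

end Cutoff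

section OpeningMap

variable {ι : Type*} [Fintype ι]

/-- The opening map with cutoff `χ` and shift `z`: where `χ (x + z) = 1` it replaces the
coordinates of `x` outside `S` by those of `-z`, and where `χ (x + z) = 0` it is the identity. -/
def openingMap (S : Set ι) (χ : EuclideanSpace ℝ ι → ℝ) (z x : EuclideanSpace ℝ ι) :
    EuclideanSpace ℝ ι :=
  x - χ (x + z) • normalPart S (x + z)

variable {S : Set ι} {χ : EuclideanSpace ℝ ι → ℝ} {z : EuclideanSpace ℝ ι}

lemma contDiff_openingMap (hχ : ContDiff ℝ (⊤ : ℕ∞) χ) :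
    ContDiff ℝ (⊤ : ℕ∞) (openingMap S χ z) := by
  have hshift : ContDiff ℝ (⊤ : ℕ∞) fun x => x + z := contDiff_id.add contDiff_const
  exact contDiff_id.sub ((hχ.comp hshift).smul ((normalPart S).contDiff.comp hshift))

lemma openingMap_apply_of_mem {i : ι} (hi : i ∈ S) (x : EuclideanSpace ℝ ι) :
    openingMap S χ z x i = x i := by
  simp [openingMap, normalPart_apply_of_mem hi]

lemma openingMap_apply_of_notMem {i : ι} (hi : i ∉ S) (x : EuclideanSpace ℝ ι) :
    openingMap S χ z x i = x i - χ (x + z) * (x i + z i) := by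
  simp [openingMap, normalPart_apply_of_notMem hi, -map_add]

lemma openingMap_eq_self {x : EuclideanSpace ℝ ι} (h : χ (x + z) = 0) :
    openingMap S χ z x = x := by
  rw [openingMap, h, zero_smul, sub_zero]

lemma openingMap_congr {x y : EuclideanSpace ℝ ι} (hx : χ (x + z) = 1) (hy : χ (y + z) = 1)
    (hxy : ∀ i ∈ S, x i = y i) : openingMap S χ z x = openingMap S χ z y := by
  ext i
  by_cases hi : i ∈ S
  · rw [openingMap_apply_of_mem hi, openingMap_apply_of_mem hi, hxy i hi]
  · rw [openingMap_apply_of_notMem hi, openingMap_apply_of_notMem hi, hx, hy]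
    ring

lemma mapsTo_openingMap_box (hχ : ∀ y, χ y ∈ Icc 0 1) {a b : ℝ} (hz : ‖z‖ < b) :
    MapsTo (openingMap S χ z) (box S a b) (box S a b) := by
  refine fun x hx i => ⟨fun hi => ?_, fun hi => ?_⟩
  · rw [openingMap_apply_of_mem hi]
    exact (hx i).1 hi
  · have hxi : x i ∈ ball (0 : ℝ) b := by simpa using (hx i).2 hi
    have hzi : -z i ∈ ball (0 : ℝ) b := by simpa using (PiLp.norm_apply_le z i).trans_lt hz
    have := convex_ball (0 : ℝ) b hxi hzi (sub_nonneg.2 (hχ (x + z)).2) (hχ (x + z)).1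
      (sub_add_cancel _ _)
    rw [openingMap_apply_of_notMem hi]
    convert mem_ball_zero_iff.1 this using 1
    rw [Real.norm_eq_abs, smul_eq_mul, smul_eq_mul]
    ring_nf

end OpeningMap

lemma exists_cutoff_openingMap (ι : Type*) [Fintype ι] {a₁ a₂ b₁ b₂ τ : ℝ} (hτ : 0 < τ)
    (ha : a₁ + 4 * τ ≤ a₂) (hb : b₁ + 4 * τ ≤ b₂) :
    ∃ K : ℝ≥0, ∀ (S : Set ι) {η : ℝ}, 0 < η → ∃ χ : EuclideanSpace ℝ ι → ℝ,
      ContDiff ℝ (⊤ : ℕ∞) χ ∧ (∀ y, χ y ∈ Icc 0 1) ∧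
      LipschitzWith K (fun y => χ y • normalPart S y) ∧
      ∀ z ∈ ball (0 : EuclideanSpace ℝ ι) (τ * η),
        (∀ x ∈ box S (a₁ * η) (b₁ * η), ∀ y ∈ box S (a₁ * η) (b₁ * η),
          (∀ i ∈ S, x i = y i) → openingMap S χ z x = openingMap S χ z y) ∧
        closure {x | openingMap S χ z x ≠ x} ⊆ box S (a₂ * η) (b₂ * η) := by
  obtain ⟨K, hK⟩ := exists_cutoff_lipschitzWith_smul_normalPart ι
    (by linarith : a₁ + τ < a₂ - 2 * τ) (by linarith : b₁ + τ < b₂ - 2 * τ)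
  refine ⟨K, fun S η hη => ?_⟩
  obtain ⟨χ, hsmooth, hχ, hχ1, hχ0, hLip⟩ := hK S hη
  refine ⟨χ, hsmooth, hχ, hLip, fun z hz => ?_⟩
  rw [mem_ball_zero_iff] at hz
  have hτη : 0 < τ * η := by positivity
  have hone : ∀ x ∈ box S (a₁ * η) (b₁ * η), χ (x + z) = 1 := fun x hx =>
    hχ1 _ (add_mem_box (by linarith) (by linarith) hx hz)
  have hsupp : {x | openingMap S χ z x ≠ x} ⊆ box S ((a₂ - τ) * η) ((b₂ - τ) * η) := by
    intro x hx
    have hmem : x + z ∈ box S ((a₂ - 2 * τ) * η) ((b₂ - 2 * τ) * η) :=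
      not_imp_comm.1 (hχ0 (x + z)) (mt openingMap_eq_self hx)
    simpa using add_mem_box (z := -z) (r := τ * η) (a' := (a₂ - τ) * η) (b' := (b₂ - τ) * η)
      (by linarith) (by linarith) hmem (by simpa using hz)
  exact ⟨fun x hx y hy => openingMap_congr (hone x hx) (hone y hy),
    (closure_mono hsupp).trans (closure_box_subset (by linarith) (by linarith))⟩

lemma exists_pos_rpow_one_div_le {c : ℝ≥0∞} (hc : c ≠ ⊤) {p : ℝ} (hp : 0 < p) :
    ∃ C : ℝ, 0 < C ∧ ∀ {a b : ℝ≥0∞}, a ≤ c * b →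
      a ^ (1 / p) ≤ ENNReal.ofReal C * b ^ (1 / p) := by
  refine ⟨(c.toReal + 1) ^ (1 / p), by positivity, fun {a b} hab => ?_⟩
  rw [← ENNReal.ofReal_rpow_of_pos (by positivity),
    ← ENNReal.mul_rpow_of_nonneg _ _ (by positivity)]
  have hcC : c ≤ ENNReal.ofReal (c.toReal + 1) :=
    (ENNReal.le_ofReal_iff_toReal_le hc (by positivity)).2 (by linarith)
  gcongr
  exact hab.trans (by gcongr)

section Opening

variable {α : Type*} [NormedAddCommGroup α]

lemma gagliardoPow_eq_setLIntegral_gagliardoDensity (m : ℕ) (s p : ℝ) (A : Set (Eucl m))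
    (u : Eucl m → α) :
    gagliardoPow m s p A u = ∫⁻ x in A, gagliardoDensity volume p (m + s * p) A u x := by
  simp only [gagliardoPow, gagliardoDensity, edist_eq_enorm_sub, enorm_eq_nnnorm]

variable [MeasurableSpace α] [OpensMeasurableSpace α] [SecondCountableTopology α]

lemma exists_gagliardoSeminorm_eLpNorm_comp_sub_le {m : ℕ} {s p M : ℝ} (hp : 0 < p)
    (hN : 0 < m + s * p) (hM : 0 < M) (K : ℝ≥0) :
    ∃ C : ℝ, 0 < C ∧ ∀ {V : Eucl m → Eucl m} {A D : Set (Eucl m)} {δ : ℝ}, LipschitzWith K V →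
      MeasurableSet A → MeasurableSet D → 0 < δ → A ⊆ ball 0 (M * δ) → thickening δ A ⊆ D →
      (∀ z ∈ ball 0 δ, MapsTo (fun x => x - V (x + z)) A A) →
      ∀ {u : Eucl m → α}, Measurable u → ∃ z ∈ ball (0 : Eucl m) δ,
        gagliardoSeminorm m s p A (fun x => u (x - V (x + z))) ≤
          ENNReal.ofReal C * gagliardoSeminorm m s p D u ∧
        eLpNorm (fun x => u (x - V (x + z))) (ENNReal.ofReal p) (volume.restrict A) ≤
          ENNReal.ofReal C * eLpNorm u (ENNReal.ofReal p) (volume.restrict D) := by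
  obtain ⟨c, hc, h⟩ := exists_gagliardoDensity_comp_sub_le (α := α)
    (volume : Measure (Eucl m)) hp hN hM K
  obtain ⟨C, hC, hroot⟩ := exists_pos_rpow_one_div_le hc hp
  refine ⟨C, hC, fun {V A D δ} hV hA hD hδ hAM hthick hmaps {u} hu => ?_⟩
  obtain ⟨z, hz, hgag, hLp⟩ := h hV hA hD hδ hAM hthick hmaps hu (hu.enorm.pow_const p)
  refine ⟨z, hz, ?_, ?_⟩
  · simp only [gagliardoSeminorm, gagliardoPow_eq_setLIntegral_gagliardoDensity]
    exact hroot hgag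
  · simp only [eLpNorm_eq_lintegral_rpow_enorm_toReal (ENNReal.ofReal_pos.2 hp).ne'
      ENNReal.ofReal_ne_top, ENNReal.toReal_ofReal hp.le]
    exact hroot hLp

end Opening

theorem opening_block_fractional_general (m : ℕ) (α : Type*) [NormedAddCommGroup α]
    [MeasurableSpace α] [OpensMeasurableSpace α] [SecondCountableTopology α] {s p : ℝ} (hp : 0 < p)
    (hN : 0 < m + s * p) {a₁ a₂ a₃ a₄ b₁ b₂ b₃ b₄ : ℝ} (ha₁₂ : a₁ < a₂) (ha₃₄ : a₃ < a₄)
    (hb₁₂ : b₁ < b₂) (hb₃₄ : b₃ < b₄) (hb₂ : 0 < b₂) (hb₃ : 0 < b₃) :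
    ∃ C : ℝ, 0 < C ∧ ∀ (S : Set (Fin m)) {η : ℝ}, 0 < η → ∀ {u : Eucl m → α}, Measurable u →
      ∃ Φ : Eucl m → Eucl m,
        ContDiff ℝ (⊤ : ℕ∞) Φ ∧
        MapsTo Φ (box S (a₄ * η) (b₄ * η)) (box S (a₄ * η) (b₄ * η)) ∧
        (∀ x, ∀ i ∈ S, Φ x i = x i) ∧
        (∀ x ∈ box S (a₁ * η) (b₁ * η), ∀ y ∈ box S (a₁ * η) (b₁ * η),
          (∀ i ∈ S, x i = y i) → Φ x = Φ y) ∧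
        closure {x | Φ x ≠ x} ⊆ box S (a₂ * η) (b₂ * η) ∧
        MapsTo Φ (box S (a₂ * η) (b₂ * η)) (box S (a₂ * η) (b₂ * η)) ∧
        gagliardoSeminorm m s p (box S (a₃ * η) (b₃ * η)) (fun x => u (Φ x)) ≤
          ENNReal.ofReal C * gagliardoSeminorm m s p (box S (a₄ * η) (b₄ * η)) u ∧
        eLpNorm (fun x => u (Φ x)) (ENNReal.ofReal p)
            (volume.restrict (box S (a₃ * η) (b₃ * η))) ≤
          ENNReal.ofReal C *
            eLpNorm u (ENNReal.ofReal p) (volume.restrict (box S (a₄ * η) (b₄ * η))) := by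
  obtain ⟨τ, hτ, hle⟩ : ∃ τ > 0, τ ≤ min (min (min ((a₂ - a₁) / 4) ((b₂ - b₁) / 4))
      (min (a₄ - a₃) (b₄ - b₃))) (min b₂ b₃) := by
    refine ⟨_, ?_, le_rfl⟩
    simp only [gt_iff_lt, lt_min_iff]
    refine ⟨⟨⟨?_, ?_⟩, ?_, ?_⟩, hb₂, hb₃⟩ <;> linarith
  simp only [le_min_iff] at hle
  obtain ⟨⟨⟨hτa₁₂, hτb₁₂⟩, hτa₃₄, hτb₃₄⟩, hτb₂, hτb₃⟩ := hle
  obtain ⟨R, hR, hbounded⟩ := exists_box_subset_ball (Fin m) a₃ b₃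
  obtain ⟨K, hcutoff⟩ := exists_cutoff_openingMap (Fin m) hτ
    (by linarith : a₁ + 4 * τ ≤ a₂) (by linarith : b₁ + 4 * τ ≤ b₂)
  obtain ⟨C, hC, hshift⟩ := exists_gagliardoSeminorm_eLpNorm_comp_sub_le (α := α) hp hN
    (div_pos hR hτ) K
  refine ⟨C, hC, fun S η hη u hu => ?_⟩
  obtain ⟨χ, hsmooth, hχ, hLip, hgeom⟩ := hcutoff S hη
  have hmaps {a b : ℝ} (hb : τ ≤ b) {z : Eucl m} (hz : z ∈ ball 0 (τ * η)) :
      MapsTo (openingMap S χ z) (box S (a * η) (b * η)) (box S (a * η) (b * η)) :=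
    mapsTo_openingMap_box hχ ((mem_ball_zero_iff.1 hz).trans_le (by gcongr))
  obtain ⟨z, hz, hgag, hLp⟩ := hshift hLip (isOpen_box S (a₃ * η) (b₃ * η)).measurableSet
    (isOpen_box S (a₄ * η) (b₄ * η)).measurableSet (mul_pos hτ hη)
    ((hbounded S hη).trans_eq (by rw [← mul_assoc, div_mul_cancel₀ _ hτ.ne']))
    (thickening_box_subset (by nlinarith) (by nlinarith)) (fun z hz => hmaps hτb₃ hz) hu
  obtain ⟨hslice, hsupp⟩ := hgeom z hz
  exact ⟨openingMap S χ z, contDiff_openingMap hsmooth, hmaps (by linarith) hz,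
    fun x i hi => openingMap_apply_of_mem hi x, hslice, hsupp, hmaps hτb₂ hz, hgag, hLp⟩

/-- **Opening construction (building block, case `0 < s < 1`).**
Let `0 < s < 1`, `1 ≤ p < ∞`, `0 < ρ̲ < r̲ < r̄ < ρ̄ < 1`, and set
`Q₁ = Q^d_{(1-ρ̄)η} × Q^{m-d}_{ρ̲η}`, `Q₂ = Q^d_{(1-r̄)η} × Q^{m-d}_{r̲η}`,
`Q₃ = Q^d_{(1-r̲)η} × Q^{m-d}_{r̄η}`, `Q₄ = Q^d_{(1-ρ̲)η} × Q^{m-d}_{ρ̄η}`.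
There is `C > 0` depending only on `m, s, p, ρ̲, r̲, r̄, ρ̄` such that for every `d < m`,
`η > 0`, and measurable `u : Q₄ → ℝ^ν` with `u ∈ L^p(Q₄)` and `|u|_{W^{s,p}(Q₄)} < ∞`,
there exists a smooth map `Φ : Q₄ → Q₄` (depending on `u`) which preserves the first `d`
coordinates, is constant on the slices `{x′} × Q^{m-d}_{ρ̲η}` over `Q^d_{(1-ρ̄)η}`, has
geometric support in `Q₂` and maps `Q₂` into itself, and satisfies
`|u ∘ Φ|_{W^{s,p}(Q₃)} ≤ C |u|_{W^{s,p}(Q₄)}` and `‖u ∘ Φ‖_{L^p(Q₃)} ≤ C ‖u‖_{L^p(Q₄)}`. -/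
theorem opening_block_fractional
    (m ν : ℕ) (hm : 1 ≤ m) (s p : ℝ) (hs0 : 0 < s) (hs1 : s < 1) (hp : 1 ≤ p)
    (ρ₁ r₁ r₂ ρ₂ : ℝ) (h0 : 0 < ρ₁) (h1 : ρ₁ < r₁) (h2 : r₁ < r₂) (h3 : r₂ < ρ₂)
    (h4 : ρ₂ < 1) :
    ∃ C : ℝ, 0 < C ∧
      ∀ (d : ℕ), d < m → ∀ (η : ℝ), 0 < η →
        ∀ u : Eucl m → Eucl ν, Measurable u →
          (∫⁻ x in rect m d ((1 - ρ₁) * η) (ρ₂ * η), (‖u x‖₊ : ℝ≥0∞) ^ p) < ⊤ →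
          gagliardoPow m s p (rect m d ((1 - ρ₁) * η) (ρ₂ * η)) u < ⊤ →
          ∃ Φ : Eucl m → Eucl m,
            ContDiffOn ℝ (⊤ : ℕ∞) Φ (rect m d ((1 - ρ₁) * η) (ρ₂ * η)) ∧
            MapsTo Φ (rect m d ((1 - ρ₁) * η) (ρ₂ * η)) (rect m d ((1 - ρ₁) * η) (ρ₂ * η)) ∧
            (∀ x ∈ rect m d ((1 - ρ₁) * η) (ρ₂ * η), ∀ i : Fin m, (i : ℕ) < d → Φ x i = x i) ∧
            (∀ x ∈ rect m d ((1 - ρ₂) * η) (ρ₁ * η), ∀ y ∈ rect m d ((1 - ρ₂) * η) (ρ₁ * η),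
              (∀ i : Fin m, (i : ℕ) < d → x i = y i) → Φ x = Φ y) ∧
            closure {x | x ∈ rect m d ((1 - ρ₁) * η) (ρ₂ * η) ∧ Φ x ≠ x}
              ⊆ rect m d ((1 - r₂) * η) (r₁ * η) ∧
            MapsTo Φ (rect m d ((1 - r₂) * η) (r₁ * η)) (rect m d ((1 - r₂) * η) (r₁ * η)) ∧
            gagliardoSeminorm m s p (rect m d ((1 - r₁) * η) (r₂ * η)) (fun x => u (Φ x))
              ≤ ENNReal.ofReal C *
                  gagliardoSeminorm m s p (rect m d ((1 - ρ₁) * η) (ρ₂ * η)) u ∧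
            eLpNorm (fun x => u (Φ x)) (ENNReal.ofReal p)
                (volume.restrict (rect m d ((1 - r₁) * η) (r₂ * η)))
              ≤ ENNReal.ofReal C *
                  eLpNorm u (ENNReal.ofReal p)
                    (volume.restrict (rect m d ((1 - ρ₁) * η) (ρ₂ * η))) := by
  obtain ⟨C, hC, h⟩ := opening_block_fractional_general m (Eucl ν) (s := s) (p := p)
    (a₁ := 1 - ρ₂) (a₂ := 1 - r₂) (a₃ := 1 - r₁) (a₄ := 1 - ρ₁) (b₁ := ρ₁) (b₂ := r₁) (b₃ := r₂)
    (b₄ := ρ₂) (by linarith) (by positivity) (by linarith) (by linarith) h1 h3 (by linarith)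
    (by linarith)
  refine ⟨C, hC, fun d _ η hη u hu _ _ => ?_⟩
  obtain ⟨Φ, hsmooth, hmaps₄, hcoord, hslice, hsupp, hmaps₂, hgag, hLp⟩ :=
    h {i | (i : ℕ) < d} hη hu
  simp only [rect_eq_box]
  exact ⟨Φ, hsmooth.contDiffOn, hmaps₄, fun x _ => hcoord x, hslice,
    (closure_mono fun x hx => hx.2).trans hsupp, hmaps₂, hgag, hLp⟩
end
end

section
/- Let m ≥ 1, 0 < s < 1, 1 ≤ p < ∞, let Ω ⊂ ℝ^m be open, let φ be a mollifier on B^m_1, and let ψ ∈ C^∞(Ω) be a nonnegative function with ‖Dψ‖_{L^∞(Ω)} < 1. Then there is a constant C > 0 depending only on m, s and p such that for every measurable u : Ω → ℝ^ν with |u|_{W^{s,p}(Ω)} < ∞ and every open set ω ⊂ { x ∈ Ω : dist(x, ∂Ω) > ψ(x) }, one has |φ_ψ ∗ u|_{W^{s,p}(ω)} ≤ C (1 − ‖Dψ‖_{L^∞(ω)})^{−2/p} |u|_{W^{s,p}(Ω)}. -/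
open MeasureTheory Set Metric
open scoped ENNReal
noncomputable section

/-- `φ` is a mollifier: a smooth nonnegative radial function, compactly supported in the open
unit ball `B^m_1`, with integral `1`. -/
def IsMollifier (m : ℕ) (φ : Eucl m → ℝ) : Prop :=
  ContDiff ℝ (⊤ : ℕ∞) φ ∧ HasCompactSupport φ ∧ tsupport φ ⊆ Metric.ball 0 1 ∧
    (∀ x, 0 ≤ φ x) ∧ (∀ x y : Eucl m, ‖x‖ = ‖y‖ → φ x = φ y) ∧
    (∫ x in Metric.ball (0 : Eucl m) 1, φ x) = 1

/- With `Φ_z x = x + ψ x • z`, the smoothed map is the average of the maps `u ∘ Φ_z` over the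
probability measure `φ(z) dz`, so Jensen's inequality and Tonelli's theorem reduce the estimate to
a fixed `z` in the unit ball. There `‖Φ_z x - Φ_z y‖ ≤ 2 ‖x - y‖`, which costs the factor
`2 ^ (m + s p)`, while `Φ_z` is injective with Jacobian `1 + Dψ(x) z ≥ 1 - K`, and changing
variables once in `x` and once in `y` costs `(1 - K)⁻²`. The distance bound and the injectivity
rest on `|ψ x - ψ y| ≤ ‖x - y‖` for `x, y ∈ ω`, which holds although `Ω` need not be convex: say
`ψ y ≤ ψ x`; if `ψ x ≤ ‖x - y‖` this is trivial, and otherwise `y` lies in the ball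
`B(x, ψ x) ⊆ Ω`, on which the mean value inequality applies. -/

section Integral

variable {α β γ E : Type*} [MeasurableSpace α] [MeasurableSpace β] [MeasurableSpace γ]
  [NormedAddCommGroup E] [NormedSpace ℝ E]

lemma enorm_integral_sub_integral_le {μ : Measure α} {f g : α → E}
    (hf : AEStronglyMeasurable f μ) (hg : AEStronglyMeasurable g μ) :
    ‖∫ z, f z ∂μ - ∫ z, g z ∂μ‖ₑ ≤ ∫⁻ z, ‖f z - g z‖ₑ ∂μ := by
  by_cases hfg : Integrable (f - g) μ
  · have hiff : Integrable f μ ↔ Integrable g μ := by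
      simpa only [sub_add_cancel] using integrable_add_iff_integrable_right hfg (g := g)
    by_cases hgi : Integrable g μ
    · rw [← integral_sub (hiff.2 hgi) hgi]
      exact enorm_integral_le_lintegral_enorm _
    · simp [integral_undef hgi, integral_undef (hiff.not.2 hgi)]
  · have htop : ∫⁻ z, ‖f z - g z‖ₑ ∂μ = ⊤ :=
      not_lt_top_iff.1 fun hlt => hfg ⟨hf.sub hg, hlt⟩
    exact htop ▸ le_top

lemma rpow_lintegral_le_lintegral_rpow {μ : Measure α} [IsProbabilityMeasure μ] {p : ℝ}
    (hp : 1 ≤ p) {f : α → ℝ≥0∞} (hf : AEMeasurable f μ) :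
    (∫⁻ z, f z ∂μ) ^ p ≤ ∫⁻ z, f z ^ p ∂μ := by
  have hnorm := eLpNorm'_le_eLpNorm'_of_exponent_le one_pos hp μ hf.aestronglyMeasurable
  simpa only [eLpNorm', enorm_eq_self, ENNReal.rpow_one, div_one, one_div,
    ENNReal.le_rpow_inv_iff (one_pos.trans_le hp)] using hnorm

lemma enorm_integral_sub_integral_rpow_le_lintegral {μ : Measure α} [IsProbabilityMeasure μ] {p : ℝ}
    (hp : 1 ≤ p) {f g : α → E} (hf : AEStronglyMeasurable f μ) (hg : AEStronglyMeasurable g μ) :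
    ‖∫ z, f z ∂μ - ∫ z, g z ∂μ‖ₑ ^ p ≤ ∫⁻ z, ‖f z - g z‖ₑ ^ p ∂μ :=
  (ENNReal.rpow_le_rpow (enorm_integral_sub_integral_le hf hg) (zero_le_one.trans hp)).trans
    (rpow_lintegral_le_lintegral_rpow hp (hf.sub hg).enorm)

lemma lintegral_lintegral_lintegral_rotate {μ : Measure α} {ν : Measure β} {κ : Measure γ}
    [SFinite μ] [SFinite ν] [SFinite κ] {f : α → β → γ → ℝ≥0∞}
    (hf : AEMeasurable (fun w : (α × β) × γ => f w.1.1 w.1.2 w.2) ((μ.prod ν).prod κ)) :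
    ∫⁻ x, ∫⁻ y, ∫⁻ z, f x y z ∂κ ∂ν ∂μ = ∫⁻ z, ∫⁻ x, ∫⁻ y, f x y z ∂ν ∂μ ∂κ := by
  calc ∫⁻ x, ∫⁻ y, ∫⁻ z, f x y z ∂κ ∂ν ∂μ
      = ∫⁻ w, ∫⁻ z, f w.1 w.2 z ∂κ ∂μ.prod ν := (lintegral_prod _ hf.lintegral_prod_right').symm
    _ = ∫⁻ z, ∫⁻ w, f w.1 w.2 z ∂μ.prod ν ∂κ := lintegral_lintegral_swap hf
    _ = ∫⁻ z, ∫⁻ x, ∫⁻ y, f x y z ∂ν ∂μ ∂κ :=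
        lintegral_congr_ae <| hf.aestronglyMeasurable.prod_swap.prodMk_left.mono fun _ hz =>
          lintegral_prod _ hz.aemeasurable

end Integral

lemma closedBall_subset_of_lt_infEDist_frontier {V : Type*} [NormedAddCommGroup V]
    [NormedSpace ℝ V] {Ω : Set V} (hΩ : IsOpen Ω) {x : V} (hx : x ∈ Ω) {r : ℝ}
    (hr : ENNReal.ofReal r < infEDist x (frontier Ω)) : closedBall x r ⊆ Ω := by
  rcases lt_or_ge r 0 with hneg | hnonneg
  · simp [closedBall_eq_empty.2 hneg]
  refine (convex_closedBall x r).isPreconnected.subset_of_closure_inter_subset hΩ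
    ⟨x, mem_closedBall_self hnonneg, hx⟩ fun w ⟨hw, hwr⟩ => ?_
  by_contra hwΩ
  have hwf : w ∈ frontier Ω := hΩ.frontier_eq ▸ ⟨hw, hwΩ⟩
  refine hr.not_ge ((infEDist_le_edist_of_mem hwf).trans ?_)
  rw [edist_dist]
  exact ENNReal.ofReal_le_ofReal (mem_closedBall'.1 hwr)

lemma lipschitzOnWith_of_ball_subset {V : Type*} [NormedAddCommGroup V] [NormedSpace ℝ V]
    {Ω ω : Set V} {ψ : V → ℝ} {ψ' : V → V →L[ℝ] ℝ} {C : NNReal} (hC : 1 ≤ C)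
    (hψ : ∀ x ∈ Ω, HasFDerivWithinAt ψ (ψ' x) Ω x) (hψ' : ∀ x ∈ Ω, ‖ψ' x‖₊ ≤ C)
    (hψ0 : ∀ x ∈ ω, 0 ≤ ψ x) (hball : ∀ x ∈ ω, ball x (ψ x) ⊆ Ω) :
    LipschitzOnWith C ψ ω := by
  refine LipschitzOnWith.of_dist_le_mul fun x hx y hy => ?_
  wlog hxy : ψ y ≤ ψ x generalizing x y
  · rw [dist_comm (ψ x), dist_comm x]
    exact this y hy x hx (le_of_not_ge hxy)
  rcases lt_or_ge (dist y x) (ψ x) with hnear | hfar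
  · have hlip : LipschitzOnWith C ψ (ball x (ψ x)) :=
      (convex_ball x _).lipschitzOnWith_of_nnnorm_hasFDerivWithin_le
        (fun w hw => (hψ w (hball x hx hw)).mono (hball x hx)) fun w hw => hψ' w (hball x hx hw)
    exact hlip.dist_le_mul x (mem_ball_self (dist_nonneg.trans_lt hnear)) y hnear
  · calc dist (ψ x) (ψ y) = ψ x - ψ y := abs_of_nonneg (sub_nonneg.2 hxy)
      _ ≤ ψ x := sub_le_self _ (hψ0 y hy)
      _ ≤ dist x y := hfar.trans_eq (dist_comm y x)
      _ ≤ C * dist x y := le_mul_of_one_le_left dist_nonneg hC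

section AdaptiveShift

variable {V : Type*} [NormedAddCommGroup V] [NormedSpace ℝ V]

/-- The map `x ↦ x + ψ x • z` along which adaptive smoothing samples a function, in the fixed
direction `z`. -/
def adaptiveShift (ψ : V → ℝ) (z x : V) : V := x + ψ x • z

variable {Ω ω : Set V} {ψ : V → ℝ} {z : V} {C : NNReal}

lemma adaptiveShift_sub_adaptiveShift (ψ : V → ℝ) (z x y : V) :
    adaptiveShift ψ z x - adaptiveShift ψ z y = (x - y) + (ψ x - ψ y) • z := by
  simp only [adaptiveShift]
  module

lemma norm_sub_smul_le_of_lipschitzOnWith (hψ : LipschitzOnWith C ψ ω) (z : V) {x y : V}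
    (hx : x ∈ ω) (hy : y ∈ ω) : ‖(ψ x - ψ y) • z‖ ≤ C * ‖z‖ * ‖x - y‖ := by
  rw [norm_smul, mul_right_comm, ← dist_eq_norm, ← dist_eq_norm]
  gcongr
  exact hψ.dist_le_mul x hx y hy

lemma lipschitzOnWith_adaptiveShift (hψ : LipschitzOnWith C ψ ω) (z : V) :
    LipschitzOnWith (1 + C * ‖z‖₊) (adaptiveShift ψ z) ω := by
  refine LipschitzOnWith.of_dist_le_mul fun x hx y hy => ?_
  rw [dist_eq_norm, dist_eq_norm, adaptiveShift_sub_adaptiveShift]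
  calc ‖(x - y) + (ψ x - ψ y) • z‖ ≤ ‖x - y‖ + C * ‖z‖ * ‖x - y‖ :=
        norm_add_le_of_le le_rfl (norm_sub_smul_le_of_lipschitzOnWith hψ z hx hy)
    _ = (1 + C * ‖z‖) * ‖x - y‖ := by ring

lemma injOn_adaptiveShift (hψ : LipschitzOnWith C ψ ω) (hz : C * ‖z‖ < 1) :
    InjOn (adaptiveShift ψ z) ω := by
  intro x hx y hy hxy
  have hsum : (x - y) + (ψ x - ψ y) • z = 0 := by
    rw [← adaptiveShift_sub_adaptiveShift, hxy, sub_self]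
  have hle : ‖x - y‖ ≤ C * ‖z‖ * ‖x - y‖ :=
    calc ‖x - y‖ = ‖(ψ x - ψ y) • z‖ := by rw [eq_neg_of_add_eq_zero_left hsum, norm_neg]
      _ ≤ C * ‖z‖ * ‖x - y‖ := norm_sub_smul_le_of_lipschitzOnWith hψ z hx hy
  have hzero : ‖x - y‖ = 0 := by nlinarith [norm_nonneg (x - y)]
  exact sub_eq_zero.1 (norm_eq_zero.1 hzero)

lemma mapsTo_adaptiveShift (hωΩ : ω ⊆ Ω) (hψ0 : ∀ x ∈ ω, 0 ≤ ψ x)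
    (hball : ∀ x ∈ ω, ball x (ψ x) ⊆ Ω) (hz : ‖z‖ < 1) : MapsTo (adaptiveShift ψ z) ω Ω := by
  intro x hx
  rcases (hψ0 x hx).eq_or_lt with hzero | hpos
  · simpa [adaptiveShift, ← hzero] using hωΩ hx
  · refine hball x hx ?_
    rw [mem_ball_iff_norm, adaptiveShift, add_sub_cancel_left, norm_smul,
      Real.norm_of_nonneg hpos.le]
    exact mul_lt_of_lt_one_right hpos hz

lemma one_sub_le_abs_det_id_add_smulRight [FiniteDimensional ℝ V] {L : V →L[ℝ] ℝ} {K : ℝ}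
    (hL : ‖L‖ ≤ K) (hz : ‖z‖ ≤ 1) :
    1 - K ≤ |(ContinuousLinearMap.id ℝ V + L.smulRight z).det| := by
  have hdet : (ContinuousLinearMap.id ℝ V + L.smulRight z).det = 1 + L z :=
    LinearMap.transvection.det (L : V →ₗ[ℝ] ℝ) z
  have hLz : |L z| ≤ K := (L.le_of_opNorm_le_of_le hL hz).trans_eq (mul_one K)
  rw [hdet]
  linarith [neg_le_of_abs_le hLz, le_abs_self (1 + L z)]

lemma lintegral_lintegral_lintegral_comp_adaptiveShift_rotate [MeasurableSpace V] [BorelSpace V]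
    [SecondCountableTopology V] {μ ν : Measure V} [SFinite μ] [SFinite ν] {G : V → V → ℝ≥0∞}
    (hG : Measurable fun w : V × V => G w.1 w.2) (hψ : AEMeasurable ψ ν) :
    ∫⁻ x, ∫⁻ y, ∫⁻ z, G (adaptiveShift ψ z x) (adaptiveShift ψ z y) ∂μ ∂ν ∂ν
      = ∫⁻ z, ∫⁻ x, ∫⁻ y, G (adaptiveShift ψ z x) (adaptiveShift ψ z y) ∂ν ∂ν ∂μ := by
  have hfst : AEMeasurable (fun w : (V × V) × V => adaptiveShift ψ w.2 w.1.1)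
      ((ν.prod ν).prod μ) :=
    measurable_fst.fst.aemeasurable.add (hψ.comp_fst.comp_fst.smul measurable_snd.aemeasurable)
  have hsnd : AEMeasurable (fun w : (V × V) × V => adaptiveShift ψ w.2 w.1.2)
      ((ν.prod ν).prod μ) :=
    measurable_fst.snd.aemeasurable.add (hψ.comp_snd.comp_fst.smul measurable_snd.aemeasurable)
  exact lintegral_lintegral_lintegral_rotate
    (f := fun x y z => G (adaptiveShift ψ z x) (adaptiveShift ψ z y))
    (hG.comp_aemeasurable (hfst.prodMk hsnd))

variable [FiniteDimensional ℝ V] [MeasurableSpace V] [BorelSpace V] (ρ : Measure V)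
  [ρ.IsAddHaarMeasure] {ψ' : V → V →L[ℝ] ℝ} {K : ℝ}

lemma setLIntegral_comp_adaptiveShift_le (hω : MeasurableSet ω)
    (hψ : ∀ x ∈ ω, HasFDerivWithinAt ψ (ψ' x) ω x) (hK : K < 1) (hψ' : ∀ x ∈ ω, ‖ψ' x‖ ≤ K)
    (hz : ‖z‖ ≤ 1) (hinj : InjOn (adaptiveShift ψ z) ω)
    (hmaps : MapsTo (adaptiveShift ψ z) ω Ω) (G : V → ℝ≥0∞) :
    ∫⁻ x in ω, G (adaptiveShift ψ z x) ∂ρ ≤ ENNReal.ofReal (1 - K)⁻¹ * ∫⁻ x in Ω, G x ∂ρ := by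
  set J : V → V →L[ℝ] V := fun x => ContinuousLinearMap.id ℝ V + (ψ' x).smulRight z
  have hderiv : ∀ x ∈ ω, HasFDerivWithinAt (adaptiveShift ψ z) (J x) ω x := fun x hx =>
    (hasFDerivWithinAt_id x ω).add ((hψ x hx).smul_const z)
  have hdet : ∀ x ∈ ω, 1 ≤ ENNReal.ofReal (1 - K)⁻¹ * ENNReal.ofReal |(J x).det| := by
    intro x hx
    rw [← ENNReal.ofReal_mul (inv_nonneg.2 (sub_pos.2 hK).le), ENNReal.one_le_ofReal,
      ← div_eq_inv_mul, one_le_div (sub_pos.2 hK)]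
    exact one_sub_le_abs_det_id_add_smulRight (hψ' x hx) hz
  calc ∫⁻ x in ω, G (adaptiveShift ψ z x) ∂ρ
      ≤ ∫⁻ x in ω, ENNReal.ofReal (1 - K)⁻¹ *
          (ENNReal.ofReal |(J x).det| * G (adaptiveShift ψ z x)) ∂ρ :=
        setLIntegral_mono' hω fun x hx => by
          rw [← mul_assoc]
          exact le_mul_of_one_le_left' (hdet x hx)
    _ = ENNReal.ofReal (1 - K)⁻¹ * ∫⁻ x in adaptiveShift ψ z '' ω, G x ∂ρ := by
        rw [lintegral_const_mul' _ _ ENNReal.ofReal_ne_top,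
          lintegral_image_eq_lintegral_abs_det_fderiv_mul ρ hω hderiv hinj]
    _ ≤ ENNReal.ofReal (1 - K)⁻¹ * ∫⁻ x in Ω, G x ∂ρ := by
        gcongr
        exact hmaps.image_subset

lemma setLIntegral_setLIntegral_comp_adaptiveShift_le (hω : MeasurableSet ω)
    (hψ : ∀ x ∈ ω, HasFDerivWithinAt ψ (ψ' x) ω x) (hK : K < 1) (hψ' : ∀ x ∈ ω, ‖ψ' x‖ ≤ K)
    (hz : ‖z‖ ≤ 1) (hinj : InjOn (adaptiveShift ψ z) ω)
    (hmaps : MapsTo (adaptiveShift ψ z) ω Ω) (G : V → V → ℝ≥0∞) :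
    ∫⁻ x in ω, ∫⁻ y in ω, G (adaptiveShift ψ z x) (adaptiveShift ψ z y) ∂ρ ∂ρ
      ≤ ENNReal.ofReal (1 - K)⁻¹ ^ 2 * ∫⁻ x in Ω, ∫⁻ y in Ω, G x y ∂ρ ∂ρ := by
  have hcov := setLIntegral_comp_adaptiveShift_le ρ hω hψ hK hψ' hz hinj hmaps
  calc ∫⁻ x in ω, ∫⁻ y in ω, G (adaptiveShift ψ z x) (adaptiveShift ψ z y) ∂ρ ∂ρ
      ≤ ∫⁻ x in ω, ENNReal.ofReal (1 - K)⁻¹ * ∫⁻ y in Ω, G (adaptiveShift ψ z x) y ∂ρ ∂ρ :=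
        lintegral_mono fun x => hcov (G (adaptiveShift ψ z x))
    _ ≤ ENNReal.ofReal (1 - K)⁻¹ *
          ∫⁻ x in Ω, ENNReal.ofReal (1 - K)⁻¹ * ∫⁻ y in Ω, G x y ∂ρ ∂ρ :=
        hcov fun x => ENNReal.ofReal (1 - K)⁻¹ * ∫⁻ y in Ω, G x y ∂ρ
    _ = ENNReal.ofReal (1 - K)⁻¹ ^ 2 * ∫⁻ x in Ω, ∫⁻ y in Ω, G x y ∂ρ ∂ρ := by
        rw [lintegral_const_mul' _ _ ENNReal.ofReal_ne_top, ← mul_assoc, sq]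

end AdaptiveShift

lemma div_rpow_le_mul_div_rpow {q : ℝ} (hq : 0 ≤ q) {a c r R : ℝ≥0∞} (hc0 : c ≠ 0)
    (hc : c ≠ ⊤) (h : R ≤ c * r) : a / r ^ q ≤ c ^ q * (a / R ^ q) := by
  calc a / r ^ q = c ^ q * a / (c ^ q * r ^ q) :=
        (ENNReal.mul_div_mul_left _ _ (ENNReal.rpow_pos (pos_iff_ne_zero.2 hc0) hc).ne'
          (ENNReal.rpow_ne_top_of_nonneg hq hc)).symm
    _ = c ^ q * a / (c * r) ^ q := by rw [ENNReal.mul_rpow_of_nonneg _ _ hq]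
    _ ≤ c ^ q * a / R ^ q := by gcongr
    _ = c ^ q * (a / R ^ q) := mul_div_assoc _ _ _

section GagliardoKernel

variable {V E : Type*} [NormedAddCommGroup V] [NormedAddCommGroup E]

/-- The integrand `‖u x - u y‖ ^ p / ‖x - y‖ ^ q` of the Gagliardo seminorm, which corresponds to
`q = m + σ * p`. It vanishes on the diagonal when `0 < p`, since `0 / 0 = 0`. -/
def gagliardoKernel (p q : ℝ) (u : V → E) (x y : V) : ℝ≥0∞ :=
  ‖u x - u y‖ₑ ^ p / ‖x - y‖ₑ ^ q

lemma measurable_gagliardoKernel [MeasurableSpace V] [BorelSpace V] [SecondCountableTopology V]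
    (p q : ℝ) {u : V → E} (hu : StronglyMeasurable u) :
    Measurable fun w : V × V => gagliardoKernel p q u w.1 w.2 := by
  have hnum : Measurable fun w : V × V => ‖u w.1 - u w.2‖ₑ :=
    ((hu.comp_measurable measurable_fst).sub (hu.comp_measurable measurable_snd)).enorm
  exact (hnum.pow_const p).div ((measurable_fst.sub measurable_snd).enorm.pow_const q)

variable [NormedSpace ℝ V] [NormedSpace ℝ E] [MeasurableSpace V] [BorelSpace V]
  {Ω ω : Set V} {ψ : V → ℝ} {p q : ℝ} {u : V → E}
  {μ : Measure V} [IsProbabilityMeasure μ]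

lemma gagliardoKernel_integral_adaptiveShift_le [SecondCountableTopology V]
    (hp : 1 ≤ p) (hq : 0 ≤ q) (hψ : LipschitzOnWith 1 ψ ω) (hu : StronglyMeasurable u)
    (hμ : ∀ᵐ z ∂μ, ‖z‖ ≤ 1) {x y : V} (hx : x ∈ ω) (hy : y ∈ ω) :
    gagliardoKernel p q (fun x => ∫ z, u (adaptiveShift ψ z x) ∂μ) x y
      ≤ 2 ^ q * ∫⁻ z, gagliardoKernel p q u (adaptiveShift ψ z x) (adaptiveShift ψ z y) ∂μ := by
  have hmeas : ∀ x, StronglyMeasurable fun z => u (adaptiveShift ψ z x) := fun x =>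
    hu.comp_measurable (measurable_const.add (measurable_id.const_smul (ψ x)))
  calc gagliardoKernel p q (fun x => ∫ z, u (adaptiveShift ψ z x) ∂μ) x y
      ≤ (∫⁻ z, ‖u (adaptiveShift ψ z x) - u (adaptiveShift ψ z y)‖ₑ ^ p ∂μ) / ‖x - y‖ₑ ^ q := by
        unfold gagliardoKernel
        gcongr
        exact enorm_integral_sub_integral_rpow_le_lintegral hp (hmeas x).aestronglyMeasurable
          (hmeas y).aestronglyMeasurable
    _ = ∫⁻ z, ‖u (adaptiveShift ψ z x) - u (adaptiveShift ψ z y)‖ₑ ^ p / ‖x - y‖ₑ ^ q ∂μ := by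
        simp only [div_eq_mul_inv]
        exact (lintegral_mul_const _ (((hmeas x).sub (hmeas y)).enorm.pow_const p)).symm
    _ ≤ ∫⁻ z, 2 ^ q *
          gagliardoKernel p q u (adaptiveShift ψ z x) (adaptiveShift ψ z y) ∂μ := by
        refine lintegral_mono_ae (hμ.mono fun z hz => ?_)
        refine div_rpow_le_mul_div_rpow hq two_ne_zero ENNReal.ofNat_ne_top ?_
        have hlip : LipschitzOnWith 2 (adaptiveShift ψ z) ω :=
          (lipschitzOnWith_adaptiveShift hψ z).weaken <| by
            rw [one_mul, ← one_add_one_eq_two]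
            gcongr
            exact hz
        simpa only [edist_eq_enorm_sub, ENNReal.coe_ofNat] using hlip hx hy
    _ = 2 ^ q * ∫⁻ z, gagliardoKernel p q u (adaptiveShift ψ z x) (adaptiveShift ψ z y) ∂μ :=
        lintegral_const_mul' _ _ (ENNReal.rpow_ne_top_of_nonneg hq ENNReal.ofNat_ne_top)

variable [FiniteDimensional ℝ V] (ρ : Measure V) [ρ.IsAddHaarMeasure]

lemma setLIntegral_gagliardoKernel_integral_adaptiveShift_le
    (hp : 1 ≤ p) (hq : 0 ≤ q) (hω : MeasurableSet ω) {ψ' : V → V →L[ℝ] ℝ}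
    (hψ : ∀ x ∈ ω, HasFDerivWithinAt ψ (ψ' x) ω x) {K : ℝ} (hK : K < 1)
    (hψ' : ∀ x ∈ ω, ‖ψ' x‖ ≤ K) (hlip : LipschitzOnWith 1 ψ ω) (hu : StronglyMeasurable u)
    (hμ : ∀ᵐ z ∂μ, ‖z‖ < 1) (hmaps : ∀ z, ‖z‖ < 1 → MapsTo (adaptiveShift ψ z) ω Ω) :
    ∫⁻ x in ω, ∫⁻ y in ω,
        gagliardoKernel p q (fun x => ∫ z, u (adaptiveShift ψ z x) ∂μ) x y ∂ρ ∂ρ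
      ≤ 2 ^ q * (ENNReal.ofReal (1 - K)⁻¹ ^ 2 *
        ∫⁻ x in Ω, ∫⁻ y in Ω, gagliardoKernel p q u x y ∂ρ ∂ρ) := by
  have h2q : (2 : ℝ≥0∞) ^ q ≠ ⊤ := ENNReal.rpow_ne_top_of_nonneg hq ENNReal.ofNat_ne_top
  calc ∫⁻ x in ω, ∫⁻ y in ω,
        gagliardoKernel p q (fun x => ∫ z, u (adaptiveShift ψ z x) ∂μ) x y ∂ρ ∂ρ
      ≤ ∫⁻ x in ω, ∫⁻ y in ω, 2 ^ q * ∫⁻ z,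
          gagliardoKernel p q u (adaptiveShift ψ z x) (adaptiveShift ψ z y) ∂μ ∂ρ ∂ρ :=
        setLIntegral_mono' hω fun x hx => setLIntegral_mono' hω fun y hy =>
          gagliardoKernel_integral_adaptiveShift_le hp hq hlip hu (hμ.mono fun _ => le_of_lt) hx hy
    _ = 2 ^ q * ∫⁻ z, ∫⁻ x in ω, ∫⁻ y in ω,
          gagliardoKernel p q u (adaptiveShift ψ z x) (adaptiveShift ψ z y) ∂ρ ∂ρ ∂μ := by
        simp only [lintegral_const_mul' _ _ h2q]
        rw [lintegral_lintegral_lintegral_comp_adaptiveShift_rotate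
          (measurable_gagliardoKernel p q hu) (hlip.continuousOn.aemeasurable hω)]
    _ ≤ 2 ^ q * ∫⁻ _, ENNReal.ofReal (1 - K)⁻¹ ^ 2 *
          ∫⁻ x in Ω, ∫⁻ y in Ω, gagliardoKernel p q u x y ∂ρ ∂ρ ∂μ := by
        gcongr 2 ^ q * ?_
        exact lintegral_mono_ae <| hμ.mono fun z hz =>
          setLIntegral_setLIntegral_comp_adaptiveShift_le ρ hω hψ hK hψ' hz.le
            (injOn_adaptiveShift hlip (by simpa using hz)) (hmaps z hz) _
    _ = 2 ^ q * (ENNReal.ofReal (1 - K)⁻¹ ^ 2 *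
          ∫⁻ x in Ω, ∫⁻ y in Ω, gagliardoKernel p q u x y ∂ρ ∂ρ) := by
        rw [lintegral_const, measure_univ, mul_one]

end GagliardoKernel

lemma gagliardoSeminorm_le_of_gagliardoPow_le {m : ℕ} {σ p : ℝ} {E F : Type*}
    [NormedAddCommGroup E] [NormedAddCommGroup F] {A B : Set (Eucl m)} {u : Eucl m → E}
    {v : Eucl m → F} (hp : 0 ≤ p) {c : ℝ} (hc : 0 ≤ c)
    (h : gagliardoPow m σ p A u ≤ ENNReal.ofReal c * gagliardoPow m σ p B v) :
    gagliardoSeminorm m σ p A u ≤ ENNReal.ofReal (c ^ (1 / p)) * gagliardoSeminorm m σ p B v := by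
  have hp' : 0 ≤ 1 / p := one_div_nonneg.2 hp
  calc gagliardoSeminorm m σ p A u ≤ (ENNReal.ofReal c * gagliardoPow m σ p B v) ^ (1 / p) :=
        ENNReal.rpow_le_rpow h hp'
    _ = ENNReal.ofReal (c ^ (1 / p)) * gagliardoSeminorm m σ p B v := by
        rw [ENNReal.mul_rpow_of_nonneg _ _ hp', ENNReal.ofReal_rpow_of_nonneg hc hp',
          gagliardoSeminorm]

section MollifierMeasure

/-- The measure `φ(z) dz` on the open unit ball, against which mollification averages. -/
def mollifierMeasure {m : ℕ} (φ : Eucl m → ℝ) : Measure (Eucl m) :=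
  (volume.restrict (ball 0 1)).withDensity fun z => ENNReal.ofReal (φ z)

variable {m : ℕ} {φ : Eucl m → ℝ}

lemma ae_norm_lt_one_mollifierMeasure (φ : Eucl m → ℝ) : ∀ᵐ z ∂mollifierMeasure φ, ‖z‖ < 1 := by
  refine (withDensity_absolutelyContinuous _ _).ae_le ?_
  filter_upwards [ae_restrict_mem measurableSet_ball] with z hz
  exact mem_ball_zero_iff.1 hz

lemma isProbabilityMeasure_mollifierMeasure (hφ0 : ∀ z, 0 ≤ φ z)
    (hφ1 : ∫ z in ball (0 : Eucl m) 1, φ z = 1) : IsProbabilityMeasure (mollifierMeasure φ) := by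
  constructor
  rw [mollifierMeasure, withDensity_apply _ MeasurableSet.univ, Measure.restrict_univ,
    ← ofReal_integral_eq_lintegral_ofReal (integrable_of_integral_eq_one hφ1)
      (.of_forall hφ0), hφ1, ENNReal.ofReal_one]

lemma integral_mollifierMeasure {E : Type*} [NormedAddCommGroup E] [NormedSpace ℝ E]
    (hφ : Measurable φ) (hφ0 : ∀ z, 0 ≤ φ z) (f : Eucl m → E) :
    ∫ z, f z ∂mollifierMeasure φ = ∫ z in ball (0 : Eucl m) 1, φ z • f z := by
  rw [mollifierMeasure, integral_withDensity_eq_integral_toReal_smul hφ.ennreal_ofReal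
    (.of_forall fun _ => ENNReal.ofReal_lt_top)]
  simp only [ENNReal.toReal_ofReal (hφ0 _)]

end MollifierMeasure

theorem adaptive_smoothing_gagliardo_bound_general {m : ℕ} {E : Type*} [NormedAddCommGroup E]
    [NormedSpace ℝ E] {s p : ℝ} (hsp : 0 ≤ m + s * p) (hp : 1 ≤ p) {Ω ω : Set (Eucl m)}
    (hω : MeasurableSet ω) (hωΩ : ω ⊆ Ω) {ψ : Eucl m → ℝ} {ψ' : Eucl m → Eucl m →L[ℝ] ℝ}
    (hψ : ∀ x ∈ Ω, HasFDerivWithinAt ψ (ψ' x) Ω x) (hψ' : ∀ x ∈ Ω, ‖ψ' x‖ ≤ 1)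
    (hψ0 : ∀ x ∈ ω, 0 ≤ ψ x) (hball : ∀ x ∈ ω, ball x (ψ x) ⊆ Ω) {K : ℝ} (hK : K < 1)
    (hψK : ∀ x ∈ ω, ‖ψ' x‖ ≤ K) {u : Eucl m → E} (hu : StronglyMeasurable u)
    {μ : Measure (Eucl m)} [IsProbabilityMeasure μ] (hμ : ∀ᵐ z ∂μ, ‖z‖ < 1) :
    gagliardoSeminorm m s p ω (fun x => ∫ z, u (x + ψ x • z) ∂μ)
      ≤ ENNReal.ofReal (2 ^ ((m + s * p) / p) * (1 - K) ^ (-(2 / p))) *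
        gagliardoSeminorm m s p Ω u := by
  have hpow : gagliardoPow m s p ω (fun x => ∫ z, u (x + ψ x • z) ∂μ)
      ≤ ENNReal.ofReal (2 ^ (m + s * p) * (1 - K)⁻¹ ^ 2) * gagliardoPow m s p Ω u := by
    rw [ENNReal.ofReal_mul (by positivity), ← ENNReal.ofReal_rpow_of_pos two_pos,
      ENNReal.ofReal_ofNat, ENNReal.ofReal_pow (inv_nonneg.2 (sub_pos.2 hK).le), mul_assoc]
    exact setLIntegral_gagliardoKernel_integral_adaptiveShift_le volume hp hsp hω
      (fun x hx => (hψ x (hωΩ hx)).mono hωΩ) hK hψK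
      (lipschitzOnWith_of_ball_subset le_rfl hψ hψ' hψ0 hball) hu hμ
      fun z hz => mapsTo_adaptiveShift hωΩ hψ0 hball hz
  have hconst : (2 ^ (m + s * p) * (1 - K)⁻¹ ^ 2) ^ (1 / p)
      = 2 ^ ((m + s * p) / p) * (1 - K) ^ (-(2 / p)) := by
    have hK' : 0 ≤ 1 - K := (sub_pos.2 hK).le
    rw [Real.mul_rpow (by positivity) (by positivity), ← Real.rpow_mul zero_le_two, mul_one_div,
      ← Real.rpow_natCast, Real.inv_rpow hK', ← Real.rpow_neg hK', ← Real.rpow_mul hK',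
      Nat.cast_ofNat, neg_mul, mul_one_div]
  exact hconst ▸ gagliardoSeminorm_le_of_gagliardoPow_le (zero_le_one.trans hp)
    (by positivity) hpow

/-- **Gagliardo seminorm bound for adaptive smoothing, `0 < s < 1`.**
There is `C > 0` depending only on `m`, `s` and `p` such that: for every open `Ω ⊆ ℝ^m`,
every mollifier `φ`, every nonnegative `ψ ∈ C^∞(Ω)` with `‖Dψ‖_{L^∞(Ω)} < 1`, every
measurable `u : Ω → ℝ^ν` with `|u|_{W^{s,p}(Ω)} < ∞`, every open
`ω ⊆ {x ∈ Ω : dist(x, ∂Ω) > ψ(x)}`, and every `K < 1` with `‖Dψ‖_{L^∞(ω)} ≤ K`,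
`|φ_ψ ∗ u|_{W^{s,p}(ω)} ≤ C (1 - K)^{-2/p} |u|_{W^{s,p}(Ω)}`. -/
theorem adaptive_smoothing_gagliardo_bound
    (m ν : ℕ) (hm : 1 ≤ m) (s p : ℝ) (hs0 : 0 < s) (hs1 : s < 1) (hp : 1 ≤ p) :
    ∃ C : ℝ, 0 < C ∧
      ∀ (Ω : Set (Eucl m)), IsOpen Ω →
      ∀ φ : Eucl m → ℝ, IsMollifier m φ →
      ∀ ψ : Eucl m → ℝ, ContDiffOn ℝ (⊤ : ℕ∞) ψ Ω → (∀ x ∈ Ω, 0 ≤ ψ x) →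
      ∀ KΩ : ℝ, KΩ < 1 → (∀ x ∈ Ω, ‖fderivWithin ℝ ψ Ω x‖ ≤ KΩ) →
      ∀ u : Eucl m → Eucl ν, Measurable u → gagliardoPow m s p Ω u < ⊤ →
      ∀ ω : Set (Eucl m), IsOpen ω →
        ω ⊆ {x ∈ Ω | ENNReal.ofReal (ψ x) < EMetric.infEdist x (frontier Ω)} →
      ∀ K : ℝ, 0 ≤ K → K < 1 → (∀ x ∈ ω, ‖fderivWithin ℝ ψ Ω x‖ ≤ K) →
        gagliardoSeminorm m s p ω
            (fun x => ∫ z in Metric.ball (0 : Eucl m) 1, φ z • u (x + ψ x • z))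
          ≤ ENNReal.ofReal (C * (1 - K) ^ (-(2 / p))) * gagliardoSeminorm m s p Ω u := by
  refine ⟨2 ^ ((m + s * p) / p), by positivity, ?_⟩
  intro Ω hΩ φ ⟨hφ, _, _, hφ0, _, hφ1⟩ ψ hψ hψ0 KΩ hKΩ hψΩ u hu _ ω hω hωΩ K _ hK hψK
  have := isProbabilityMeasure_mollifierMeasure hφ0 hφ1
  simp only [← integral_mollifierMeasure hφ.continuous.measurable hφ0]
  exact adaptive_smoothing_gagliardo_bound_general (by positivity) hp hω.measurableSet
    (fun x hx => (hωΩ hx).1)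
    (fun x hx => (hψ.differentiableOn (by simp) x hx).hasFDerivWithinAt)
    (fun x hx => (hψΩ x hx).trans hKΩ.le) (fun x hx => hψ0 x (hωΩ hx).1)
    (fun x hx => ball_subset_closedBall.trans
      (closedBall_subset_of_lt_infEDist_frontier hΩ (hωΩ hx).1 (hωΩ hx).2))
    hK hψK hu.stronglyMeasurable (ae_norm_lt_one_mollifierMeasure φ)
end
end

section
/- Let m ≥ 1, 0 < s < 1, 1 ≤ p < ∞, d ∈ {1,…,m} with d > sp, η > 0 and 0 < ρ̲ < ρ < ρ̄ < 1. Set Q₁ = Q^d_{(1−ρ̄)η} × Q^{m−d}_{ρ̲η}, Q₂ = Q^d_{(1−ρ)η} × Q^{m−d}_{ρ̲η}, Q₃ = Q^d_{(1−ρ)η} × Q^{m−d}_{ρη} and T = {0}^d × Q̄^{m−d}_{ρη}. Then there exists a smooth injective map Φ : ℝ^m \ T → ℝ^m with Supp Φ ⊂ Q₃, Φ(Q₂ \ T) ⊂ Q₂ \ Q₁ and Φ(Q₃ \ T) ⊂ Q₃, with the following property: for all c, c′ > 0 there is a constant C > 0, depending only on m, s, p, c, c′, ρ̲, ρ, ρ̄,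 such that for every measurable set ω with Q₃ ⊂ ω ⊂ B^m_{cη} satisfying |B^m_λ(z) ∩ ω| ≥ c′ λ^m for every z ∈ ω and 0 < λ ≤ (1/2) diam ω, and every measurable u : ω → ℝ^ν, the map u ∘ Φ (defined a.e. on ω, since T has measure zero) satisfies |u ∘ Φ|_{W^{s,p}(ω)} ≤ C |u|_{W^{s,p}(ω)} and ‖u ∘ Φ‖_{L^p(ω)} ≤ C ‖u‖_{L^p(ω)}. -/
open MeasureTheory Set Metric
open scoped ENNReal
noncomputable section

/-- The singular set `T = {0}^d × Q̄^{m-d}_b`. -/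
def dualPiece (m d : ℕ) (b : ℝ) : Set (Eucl m) :=
  {x : Eucl m | (∀ i : Fin m, (i : ℕ) < d → x i = 0) ∧ ∀ i : Fin m, d ≤ (i : ℕ) → |x i| ≤ b}

/-!
The map is `Φ x = x + (A x - 1) • P x`, where `P` projects onto the first `d` coordinates and the
factor `A ≥ 1` depends on a smoothed sup norm `N` of `P x` and on a cutoff `χ`, equal to `1` on the
smaller box, through `N (Φ x) ^ (1 / n) = N x ^ (1 / n) + χ x * g (N x ^ (1 / n))` with a decreasing
profile `g`. As a function of `N`, the factor `A` is decreasing while `A * N` is increasing. Hence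
`Φ` has Lipschitz constant `≲ A x` at `x`, whereas its Jacobian is `≳ A x ^ (d - 1 / n)`, which is
at least `A x ^ (s * p)` once `1 / n ≤ d - s * p`: this is where `s * p < d` enters.

For the Gagliardo energy, `u (Φ x)` and `u (Φ y)` are compared through the points `z ∈ ω` of a ball
centred at `Φ x` with radius comparable to `‖Φ x - Φ y‖`, over which one averages thanks to the
lower density bound on `ω`. Integrating out `y` then costs a factor `A x ^ (s * p)`, which the
change of variables `w = Φ x` absorbs. Both the hypotheses and the energies are compatible with
dilations, so conjugating by `x ↦ η • x` gives the result for all `η` with the same constant.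
-/

open Module Topology

/-! ### Integration over a finite-dimensional space -/

section Haar

lemma enorm_sub_rpow_le_add {F : Type*} [NormedAddCommGroup F] {p : ℝ} (hp : 1 ≤ p) (v w z : F) :
    ‖v - w‖ₑ ^ p ≤ 2 ^ (p - 1) * (‖v - z‖ₑ ^ p + ‖w - z‖ₑ ^ p) :=
  calc ‖v - w‖ₑ ^ p = ‖(v - z) - (w - z)‖ₑ ^ p := by rw [sub_sub_sub_cancel_right]
    _ ≤ (‖v - z‖ₑ + ‖w - z‖ₑ) ^ p := by gcongr; exact enorm_sub_le
    _ ≤ 2 ^ (p - 1) * (‖v - z‖ₑ ^ p + ‖w - z‖ₑ ^ p) :=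
      ENNReal.rpow_add_le_mul_rpow_add_rpow _ _ hp

lemma inv_enorm_rpow_le {E : Type*} [NormedAddCommGroup E] [NormedSpace ℝ E] {q t : ℝ}
    (hq : 0 ≤ q) (ht : 0 < t) {y : E} (hy : t ≤ ‖y‖) :
    (‖y‖ₑ ^ q)⁻¹ ≤ ENNReal.ofReal ((2 / t) ^ q) * ENNReal.ofReal ((1 + ‖t⁻¹ • y‖) ^ (-q)) := by
  have hy0 : 0 < ‖y‖ := ht.trans_le hy
  rw [← ofReal_norm, ENNReal.ofReal_rpow_of_pos hy0, ← ENNReal.ofReal_inv_of_pos (by positivity),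
    ← Real.rpow_neg hy0.le, ← ENNReal.ofReal_mul (by positivity)]
  refine ENNReal.ofReal_le_ofReal ?_
  rw [← inv_div, Real.inv_rpow (by positivity), ← Real.rpow_neg (by positivity),
    ← Real.mul_rpow (by positivity) (by positivity)]
  refine Real.rpow_le_rpow_of_nonpos (by positivity) ?_ (neg_nonpos.2 hq)
  calc t / 2 * (1 + ‖t⁻¹ • y‖) = (t + ‖y‖) / 2 := by
        rw [norm_smul, norm_inv, Real.norm_of_nonneg ht.le]; field_simp
    _ ≤ ‖y‖ := by linarith

variable {E : Type*} [NormedAddCommGroup E] [NormedSpace ℝ E] [FiniteDimensional ℝ E]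
  [MeasurableSpace E] [BorelSpace E] {μ : Measure E} [μ.IsAddHaarMeasure]

/-- The constant in the estimate `∫ ‖x - y‖ ^ (-q) dy ≲ t ^ (dim E - q)` over `‖x - y‖ ≥ t`;
it is finite for `q > dim E`. -/
def tailConst (μ : Measure E) (q : ℝ) : ℝ≥0∞ :=
  ENNReal.ofReal (2 ^ q) * ∫⁻ y, ENNReal.ofReal ((1 + ‖y‖) ^ (-q)) ∂μ

lemma tailConst_ne_top {q : ℝ} (hq : finrank ℝ E < q) : tailConst μ q ≠ ⊤ :=
  ENNReal.mul_ne_top ENNReal.ofReal_ne_top (finite_integral_one_add_norm hq).ne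

lemma lintegral_comp_inv_smul {f : E → ℝ≥0∞} (hf : Measurable f) {t : ℝ} (ht : 0 < t) :
    ∫⁻ y, f (t⁻¹ • y) ∂μ = ENNReal.ofReal (t ^ finrank ℝ E) * ∫⁻ y, f y ∂μ := by
  rw [← lintegral_map hf (measurable_const_smul t⁻¹),
    Measure.map_addHaar_smul _ (inv_ne_zero ht.ne'), lintegral_smul_measure, inv_pow, inv_inv,
    abs_of_pos (pow_pos ht _), smul_eq_mul]

lemma setLIntegral_compl_ball_inv_enorm_rpow_le {q t : ℝ} (hq : 0 ≤ q) (ht : 0 < t) (x : E) :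
    ∫⁻ y in (ball x t)ᶜ, (‖x - y‖ₑ ^ q)⁻¹ ∂μ
      ≤ tailConst μ q * ENNReal.ofReal (t ^ (finrank ℝ E - q)) := by
  let f : E → ℝ≥0∞ := fun y => ENNReal.ofReal ((1 + ‖y‖) ^ (-q))
  have hf : Measurable f := by fun_prop
  have hpow : (2 / t) ^ q * t ^ finrank ℝ E = 2 ^ q * t ^ (finrank ℝ E - q) := by
    rw [Real.div_rpow zero_le_two ht.le, Real.rpow_sub ht, Real.rpow_natCast, div_mul_eq_mul_div,
      mul_div_assoc]
  calc ∫⁻ y in (ball x t)ᶜ, (‖x - y‖ₑ ^ q)⁻¹ ∂μ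
      ≤ ∫⁻ y in (ball x t)ᶜ, ENNReal.ofReal ((2 / t) ^ q) * f (t⁻¹ • (x - y)) ∂μ :=
        setLIntegral_mono' measurableSet_ball.compl fun y hy =>
          inv_enorm_rpow_le hq ht (by simpa [dist_eq_norm, norm_sub_rev] using hy)
    _ ≤ ∫⁻ y, ENNReal.ofReal ((2 / t) ^ q) * f (t⁻¹ • (x - y)) ∂μ :=
        setLIntegral_le_lintegral _ _
    _ = ENNReal.ofReal ((2 / t) ^ q) * (ENNReal.ofReal (t ^ finrank ℝ E) * ∫⁻ y, f y ∂μ) := by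
        rw [lintegral_const_mul _ (by fun_prop), lintegral_sub_left_eq_self (fun y => f (t⁻¹ • y)),
          lintegral_comp_inv_smul hf ht]
    _ = tailConst μ q * ENNReal.ofReal (t ^ (finrank ℝ E - q)) := by
        rw [← mul_assoc, ← ENNReal.ofReal_mul (by positivity), hpow,
          ENNReal.ofReal_mul (by positivity), tailConst, mul_right_comm]

lemma setLIntegral_mul_comp_le {Φ : E → E} {ω : Set E} {w f : E → ℝ≥0∞} (hinj : Φ.Injective)
    (hmaps : MapsTo Φ ω ω) (hω : MeasurableSet ω)
    (hdet : ∀ᵐ x ∂μ, DifferentiableAt ℝ Φ x ∧ w x ≤ ENNReal.ofReal |(fderiv ℝ Φ x).det|) :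
    ∫⁻ x in ω, w x * f (Φ x) ∂μ ≤ ∫⁻ x in ω, f x ∂μ := by
  obtain ⟨Z, hsub, hZm, hZ⟩ := exists_measurable_superset_of_null (ae_iff.1 hdet)
  have hgood : ∀ x ∉ Z, DifferentiableAt ℝ Φ x ∧ w x ≤ ENNReal.ofReal |(fderiv ℝ Φ x).det| :=
    fun x hx => by_contra fun h => hx (hsub h)
  calc ∫⁻ x in ω, w x * f (Φ x) ∂μ = ∫⁻ x in ω \ Z, w x * f (Φ x) ∂μ := by
        rw [setLIntegral_congr (sdiff_null_ae_eq_self hZ)]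
    _ ≤ ∫⁻ x in ω \ Z, ENNReal.ofReal |(fderiv ℝ Φ x).det| * f (Φ x) ∂μ :=
        setLIntegral_mono' (hω.diff hZm) fun x hx => mul_le_mul_left (hgood x hx.2).2 _
    _ = ∫⁻ x in Φ '' (ω \ Z), f x ∂μ :=
        (lintegral_image_eq_lintegral_abs_det_fderiv_mul μ (hω.diff hZm)
          (fun x hx => (hgood x hx.2).1.hasFDerivAt.hasFDerivWithinAt) hinj.injOn f).symm
    _ ≤ ∫⁻ x in ω, f x ∂μ :=
        lintegral_mono_set ((image_mono sdiff_subset).trans hmaps.image_subset)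

end Haar

/-! ### Composition with a weighted dilation -/

section Composition

variable {E F : Type*} [NormedAddCommGroup E] [NormedSpace ℝ E] [NormedAddCommGroup F]
  {a p c L δ : ℝ} {Φ : E → E} {A : E → ℝ} {u : E → F} {ω : Set E}

/-- The kernel through which `u (Φ x) - u (Φ y)` is compared with `u (Φ x) - u z` and
`u (Φ y) - u z`, for `z` at distance comparable to `‖Φ x - Φ y‖` from both points. -/
def comparisonKernel (q : ℝ) (Φ : E → E) (x y z : E) : ℝ≥0∞ :=
  if ‖Φ x - z‖ ≤ 2 * ‖Φ x - Φ y‖ then (‖Φ x - Φ y‖ₑ ^ finrank ℝ E)⁻¹ * (‖x - y‖ₑ ^ q)⁻¹ else 0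

lemma enorm_comp_sub_rpow_mul_le (hp : 1 ≤ p) (q : ℝ) {x y z : E}
    (hz : z ∈ ball (Φ x) (‖Φ x - Φ y‖ / 2)) :
    ‖u (Φ x) - u (Φ y)‖ₑ ^ p * ((‖Φ x - Φ y‖ₑ ^ finrank ℝ E)⁻¹ * (‖x - y‖ₑ ^ q)⁻¹) ≤
      2 ^ (p - 1) * (‖u (Φ x) - u z‖ₑ ^ p * comparisonKernel q Φ x y z +
        ‖u (Φ y) - u z‖ₑ ^ p * comparisonKernel q Φ y x z) := by
  rw [mem_ball, dist_comm, dist_eq_norm] at hz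
  have hzx : ‖Φ x - z‖ ≤ 2 * ‖Φ x - Φ y‖ := by linarith [norm_nonneg (Φ x - Φ y)]
  have hzy : ‖Φ y - z‖ ≤ 2 * ‖Φ x - Φ y‖ := by
    have htri := norm_sub_le_norm_sub_add_norm_sub (Φ y) (Φ x) z
    rw [norm_sub_rev (Φ y) (Φ x)] at htri
    linarith [norm_nonneg (Φ x - Φ y)]
  rw [comparisonKernel, if_pos hzx, comparisonKernel, norm_sub_rev (Φ y) (Φ x), if_pos hzy,
    enorm_sub_rev (Φ y), enorm_sub_rev y, ← add_mul]
  exact (mul_le_mul_left (enorm_sub_rpow_le_add hp _ _ _) _).trans_eq (mul_assoc _ _ _)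

lemma comparisonKernel_le_indicator {k q : ℝ} (hk : 0 < k) {x y z : E} (hz : Φ x ≠ z)
    (hlip : ‖Φ x - Φ y‖ ≤ k * ‖x - y‖) :
    comparisonKernel q Φ x y z ≤ (ball x (‖Φ x - z‖ / (2 * k)))ᶜ.indicator
      (fun y => ENNReal.ofReal ((2 / ‖Φ x - z‖) ^ finrank ℝ E) * (‖x - y‖ₑ ^ q)⁻¹) y := by
  have hz0 : 0 < ‖Φ x - z‖ := norm_pos_iff.2 (sub_ne_zero.2 hz)
  unfold comparisonKernel
  split_ifs with hclose
  · have hfar : y ∈ (ball x (‖Φ x - z‖ / (2 * k)))ᶜ := by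
      rw [mem_compl_iff, mem_ball, not_lt, dist_comm, dist_eq_norm, div_le_iff₀ (by positivity)]
      linarith
    rw [indicator_of_mem hfar, ← inv_div, inv_pow, ENNReal.ofReal_inv_of_pos (by positivity),
      ENNReal.ofReal_pow (by positivity), ← ofReal_norm (Φ x - Φ y)]
    gcongr
    linarith
  · exact zero_le

variable [MeasurableSpace E] [BorelSpace E] {μ : Measure E}

/-- The density condition `|B_r(z) ∩ ω| ≥ c r ^ dim E` for `z ∈ ω` and `0 < r ≤ diam ω / 2`. -/
def IsLowerRegular (μ : Measure E) (c : ℝ) (ω : Set E) : Prop :=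
  ∀ z ∈ ω, ∀ r : ℝ, 0 < r → 2 * ENNReal.ofReal r ≤ ediam ω →
    ENNReal.ofReal (c * r ^ finrank ℝ E) ≤ μ (ball z r ∩ ω)

lemma IsLowerRegular.mul_le_setLIntegral (hω : IsLowerRegular μ c ω) {v w : E} (hv : v ∈ ω)
    (hw : w ∈ ω) (hvw : v ≠ w) {k : ℝ≥0∞} {f : E → ℝ≥0∞}
    (hf : ∀ z ∈ ball v (‖v - w‖ / 2), k ≤ f z) :
    ENNReal.ofReal (c * (‖v - w‖ / 2) ^ finrank ℝ E) * k ≤ ∫⁻ z in ω, f z ∂μ := by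
  have hdiam : 2 * ENNReal.ofReal (‖v - w‖ / 2) ≤ ediam ω := by
    rw [ENNReal.ofReal_div_of_pos two_pos, ENNReal.ofReal_ofNat,
      ENNReal.mul_div_cancel two_ne_zero ENNReal.ofNat_ne_top, ← dist_eq_norm, ← edist_dist]
    exact edist_le_ediam_of_mem hv hw
  calc ENNReal.ofReal (c * (‖v - w‖ / 2) ^ finrank ℝ E) * k
      ≤ μ (ball v (‖v - w‖ / 2) ∩ ω) * k := by
        gcongr
        exact hω v hv _ (half_pos (norm_pos_iff.2 (sub_ne_zero.2 hvw))) hdiam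
    _ = ∫⁻ _ in ball v (‖v - w‖ / 2), k ∂μ.restrict ω := by
        rw [setLIntegral_const, Measure.restrict_apply measurableSet_ball, mul_comm]
    _ ≤ ∫⁻ z in ball v (‖v - w‖ / 2), f z ∂μ.restrict ω := setLIntegral_mono' measurableSet_ball hf
    _ ≤ ∫⁻ z in ω, f z ∂μ := setLIntegral_le_lintegral _ _

/-- The differences `u (Φ x) - u z`, averaged over `z ∈ ω` against the comparison kernel. -/
def comparisonIntegral (μ : Measure E) (p q : ℝ) (ω : Set E) (Φ : E → E) (u : E → F)
    (x y : E) : ℝ≥0∞ :=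
  ∫⁻ z in ω, ‖u (Φ x) - u z‖ₑ ^ p * comparisonKernel q Φ x y z ∂μ

/-- An injective map `Φ` that expands distances from almost every point `x` by at most `L * A x`,
while expanding volume near `x` at least by `δ * A x ^ a`: composition with `Φ` is then bounded for
`L^p` norms and for Gagliardo seminorms of exponents `σ p = a`. -/
structure IsWeightedDilation (μ : Measure E) (a L δ : ℝ) (Φ : E → E) (A : E → ℝ) : Prop where
  measurable : Measurable Φ
  injective : Φ.Injective
  one_le : ∀ x, 1 ≤ A x
  norm_sub_le : ∀ᵐ x ∂μ, ∀ᵐ y ∂μ, ‖Φ x - Φ y‖ ≤ L * A x * ‖x - y‖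
  le_abs_det : ∀ᵐ x ∂μ, DifferentiableAt ℝ Φ x ∧ δ * A x ^ a ≤ |(fderiv ℝ Φ x).det|

variable [FiniteDimensional ℝ E]

lemma measurable_comparisonKernel {α : Type*} [MeasurableSpace α] (q : ℝ) (hΦ : Measurable Φ)
    {f g h : α → E} (hf : Measurable f) (hg : Measurable g) (hh : Measurable h) :
    Measurable fun b => comparisonKernel q Φ (f b) (g b) (h b) := by
  unfold comparisonKernel
  exact Measurable.ite (measurableSet_le (by fun_prop) (by fun_prop)) (by fun_prop)
    measurable_const

lemma measurable_mul_comparisonKernel {α : Type*} [MeasurableSpace α] (p q : ℝ)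
    (hΦ : Measurable Φ) (hu : StronglyMeasurable u)
    {f g h : α → E} (hf : Measurable f) (hg : Measurable g) (hh : Measurable h) :
    Measurable fun b => ‖u (Φ (f b)) - u (h b)‖ₑ ^ p * comparisonKernel q Φ (f b) (g b) (h b) :=
  ((((hu.comp_measurable (hΦ.comp hf)).sub (hu.comp_measurable hh)).enorm).pow_const p).mul
    (measurable_comparisonKernel q hΦ hf hg hh)

lemma IsLowerRegular.enorm_comp_sub_rpow_div_le (hω : IsLowerRegular μ c ω) (hc : 0 < c)
    (hp : 1 ≤ p) (q : ℝ) (hΦ : Measurable Φ) (hu : StronglyMeasurable u) {x y : E}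
    (hx : Φ x ∈ ω) (hy : Φ y ∈ ω) :
    ‖u (Φ x) - u (Φ y)‖ₑ ^ p / ‖x - y‖ₑ ^ q ≤
      ENNReal.ofReal (2 ^ finrank ℝ E / c) * 2 ^ (p - 1) *
        (comparisonIntegral μ p q ω Φ u x y + comparisonIntegral μ p q ω Φ u y x) := by
  rcases eq_or_ne (Φ x) (Φ y) with hxy | hxy
  · simp [hxy, ENNReal.zero_rpow_of_pos (zero_lt_one.trans_le hp)]
  set n := finrank ℝ E
  set l : ℝ := ‖Φ x - Φ y‖
  have hl0 : 0 < l := norm_pos_iff.2 (sub_ne_zero.2 hxy)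
  set κ : ℝ≥0∞ := (‖Φ x - Φ y‖ₑ ^ n)⁻¹ * (‖x - y‖ₑ ^ q)⁻¹ with hκ
  set W : ℝ≥0∞ := ‖u (Φ x) - u (Φ y)‖ₑ ^ p
  have hln : ‖Φ x - Φ y‖ₑ ^ n = ENNReal.ofReal (2 ^ n / c) * ENNReal.ofReal (c * (l / 2) ^ n) := by
    rw [← ofReal_norm, ← ENNReal.ofReal_pow hl0.le, ← ENNReal.ofReal_mul (by positivity), div_pow]
    congr 1
    field_simp
  calc W / ‖x - y‖ₑ ^ q = ‖Φ x - Φ y‖ₑ ^ n * (W * κ) := by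
        have hne : ‖Φ x - Φ y‖ₑ ^ n ≠ 0 := pow_ne_zero _ (enorm_ne_zero.2 (sub_ne_zero.2 hxy))
        rw [hκ, mul_left_comm, ← mul_assoc, ← mul_assoc, mul_assoc W,
          ENNReal.mul_inv_cancel hne (ENNReal.pow_ne_top enorm_ne_top), mul_one, div_eq_mul_inv]
    _ = ENNReal.ofReal (2 ^ n / c) * (ENNReal.ofReal (c * (l / 2) ^ n) * (W * κ)) := by
        rw [hln, mul_assoc]
    _ ≤ ENNReal.ofReal (2 ^ n / c) * (2 ^ (p - 1) *
        (comparisonIntegral μ p q ω Φ u x y + comparisonIntegral μ p q ω Φ u y x)) := by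
        have hmeas (x y : E) :
            Measurable fun z => ‖u (Φ x) - u z‖ₑ ^ p * comparisonKernel q Φ x y z :=
          measurable_mul_comparisonKernel p q hΦ hu measurable_const measurable_const measurable_id
        have htwo : (2 : ℝ≥0∞) ^ (p - 1) ≠ ⊤ :=
          ENNReal.rpow_ne_top_of_nonneg (sub_nonneg.2 hp) ENNReal.ofNat_ne_top
        refine mul_le_mul_right ?_ _
        unfold comparisonIntegral
        rw [← lintegral_add_left (hmeas x y), ← lintegral_const_mul' _ _ htwo]
        exact hω.mul_le_setLIntegral hx hy hxy fun z hz => enorm_comp_sub_rpow_mul_le hp q hz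
    _ = _ := (mul_assoc _ _ _).symm

variable [μ.IsAddHaarMeasure]

lemma lintegral_comparisonKernel_le (ha : 0 ≤ a) {k : ℝ} (hk : 0 < k) {x z : E} (hz : Φ x ≠ z)
    (hlip : ∀ᵐ y ∂μ, ‖Φ x - Φ y‖ ≤ k * ‖x - y‖) :
    ∫⁻ y, comparisonKernel (finrank ℝ E + a) Φ x y z ∂μ ≤
      tailConst μ (finrank ℝ E + a) * (ENNReal.ofReal (2 ^ finrank ℝ E * (2 * k) ^ a) /
        ‖Φ x - z‖ₑ ^ (finrank ℝ E + a)) := by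
  set n := finrank ℝ E
  set D : ℝ := ‖Φ x - z‖ with hD
  have hD0 : 0 < D := norm_pos_iff.2 (sub_ne_zero.2 hz)
  have hexp : (2 / D) ^ n * (D / (2 * k)) ^ (n - (n + a)) =
      2 ^ n * (2 * k) ^ a / D ^ (n + a) := by
    rw [sub_add_cancel_left, Real.rpow_neg (by positivity), Real.div_rpow hD0.le (by positivity),
      Real.rpow_add hD0, Real.rpow_natCast, div_pow]
    field_simp
  calc ∫⁻ y, comparisonKernel (n + a) Φ x y z ∂μ
      ≤ ENNReal.ofReal ((2 / D) ^ n) *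
          ∫⁻ y in (ball x (D / (2 * k)))ᶜ, (‖x - y‖ₑ ^ (n + a))⁻¹ ∂μ := by
        rw [← lintegral_const_mul' _ _ ENNReal.ofReal_ne_top,
          ← lintegral_indicator measurableSet_ball.compl]
        exact lintegral_mono_ae (hlip.mono fun y hy => comparisonKernel_le_indicator hk hz hy)
    _ ≤ ENNReal.ofReal ((2 / D) ^ n) *
          (tailConst μ (n + a) * ENNReal.ofReal ((D / (2 * k)) ^ (n - (n + a)))) := by
        gcongr
        exact setLIntegral_compl_ball_inv_enorm_rpow_le (by positivity) (by positivity) x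
    _ = tailConst μ (n + a) * (ENNReal.ofReal (2 ^ n * (2 * k) ^ a) / ‖Φ x - z‖ₑ ^ (n + a)) := by
        rw [mul_left_comm, ← ENNReal.ofReal_mul (by positivity), hexp,
          ENNReal.ofReal_div_of_pos (by positivity), ← ENNReal.ofReal_rpow_of_pos hD0, hD,
          ofReal_norm]

lemma IsWeightedDilation.setLIntegral_rpow_mul_comp_le (hΦ : IsWeightedDilation μ a L δ Φ A)
    (hδ : 0 < δ) (hmaps : MapsTo Φ ω ω) (hω : MeasurableSet ω) (f : E → ℝ≥0∞) :
    ∫⁻ x in ω, ENNReal.ofReal (A x ^ a) * f (Φ x) ∂μ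
      ≤ ENNReal.ofReal δ⁻¹ * ∫⁻ x in ω, f x ∂μ := by
  have hcancel (x : E) : ENNReal.ofReal (A x ^ a) * f (Φ x) =
      ENNReal.ofReal δ⁻¹ * (ENNReal.ofReal (δ * A x ^ a) * f (Φ x)) := by
    rw [← mul_assoc, ← ENNReal.ofReal_mul (by positivity), inv_mul_cancel_left₀ hδ.ne']
  simp only [hcancel]
  rw [lintegral_const_mul' _ _ ENNReal.ofReal_ne_top]
  refine mul_le_mul_right ?_ _
  exact setLIntegral_mul_comp_le hΦ.injective hmaps hω
    (hΦ.le_abs_det.mono fun x hx => ⟨hx.1, ENNReal.ofReal_le_ofReal hx.2⟩)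

lemma IsWeightedDilation.eLpNorm_comp_le (hΦ : IsWeightedDilation μ a L δ Φ A) (ha : 0 ≤ a)
    (hδ : 0 < δ) (hp : 0 < p) (hmaps : MapsTo Φ ω ω) (hω : MeasurableSet ω) (u : E → F) :
    eLpNorm (fun x => u (Φ x)) (ENNReal.ofReal p) (μ.restrict ω)
      ≤ ENNReal.ofReal δ⁻¹ ^ (1 / p) * eLpNorm u (ENNReal.ofReal p) (μ.restrict ω) := by
  have hp0 : ENNReal.ofReal p ≠ 0 := (ENNReal.ofReal_pos.2 hp).ne'
  rw [eLpNorm_eq_lintegral_rpow_enorm_toReal hp0 ENNReal.ofReal_ne_top,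
    eLpNorm_eq_lintegral_rpow_enorm_toReal hp0 ENNReal.ofReal_ne_top, ENNReal.toReal_ofReal hp.le,
    ← ENNReal.mul_rpow_of_nonneg _ _ (by positivity)]
  gcongr
  calc ∫⁻ x in ω, ‖u (Φ x)‖ₑ ^ p ∂μ
      ≤ ∫⁻ x in ω, ENNReal.ofReal (A x ^ a) * ‖u (Φ x)‖ₑ ^ p ∂μ := by
        gcongr with x
        refine le_mul_of_one_le_left zero_le (ENNReal.one_le_ofReal.2 ?_)
        exact Real.one_le_rpow (hΦ.one_le x) ha
    _ ≤ _ := hΦ.setLIntegral_rpow_mul_comp_le hδ hmaps hω fun x => ‖u x‖ₑ ^ p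

lemma IsWeightedDilation.ae_setLIntegral_mul_comparisonKernel_le
    (hΦ : IsWeightedDilation μ a L δ Φ A) (ha : 0 ≤ a) (hL : 0 < L) (hp : 0 < p) (ω : Set E)
    (u : E → F) :
    ∀ᵐ x ∂μ, ∀ z,
      ∫⁻ y in ω, ‖u (Φ x) - u z‖ₑ ^ p * comparisonKernel (finrank ℝ E + a) Φ x y z ∂μ ≤
        tailConst μ (finrank ℝ E + a) * ENNReal.ofReal (2 ^ finrank ℝ E * (2 * L) ^ a) *
          (ENNReal.ofReal (A x ^ a) *
            (‖u (Φ x) - u z‖ₑ ^ p / ‖Φ x - z‖ₑ ^ (finrank ℝ E + a))) := by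
  filter_upwards [hΦ.norm_sub_le] with x hx z
  rcases eq_or_ne (Φ x) z with rfl | hz
  · simp [ENNReal.zero_rpow_of_pos hp]
  have hA : 0 < A x := zero_lt_one.trans_le (hΦ.one_le x)
  have hpow : (2 : ℝ) ^ finrank ℝ E * (2 * (L * A x)) ^ a =
      2 ^ finrank ℝ E * (2 * L) ^ a * A x ^ a := by
    rw [← mul_assoc 2, Real.mul_rpow (by positivity) hA.le, mul_assoc]
  set q := finrank ℝ E + a
  calc ∫⁻ y in ω, ‖u (Φ x) - u z‖ₑ ^ p * comparisonKernel q Φ x y z ∂μ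
      = ‖u (Φ x) - u z‖ₑ ^ p * ∫⁻ y in ω, comparisonKernel q Φ x y z ∂μ :=
        lintegral_const_mul' _ _ (ENNReal.rpow_ne_top_of_nonneg hp.le enorm_ne_top)
    _ ≤ ‖u (Φ x) - u z‖ₑ ^ p *
          (tailConst μ q * ENNReal.ofReal (2 ^ finrank ℝ E * (2 * L) ^ a) *
            (ENNReal.ofReal (A x ^ a) / ‖Φ x - z‖ₑ ^ q)) := by
        gcongr
        refine (setLIntegral_le_lintegral _ _).trans
          ((lintegral_comparisonKernel_le ha (mul_pos hL hA) hz hx).trans_eq ?_)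
        rw [hpow, ENNReal.ofReal_mul (by positivity), mul_div_assoc, mul_assoc]
    _ = _ := by simp only [div_eq_mul_inv]; ring

lemma IsWeightedDilation.lintegral_comparisonIntegral_le (hΦ : IsWeightedDilation μ a L δ Φ A)
    (ha : 0 < a) (hL : 0 < L) (hδ : 0 < δ) (hp : 0 < p) (hmaps : MapsTo Φ ω ω)
    (hω : MeasurableSet ω) (hu : StronglyMeasurable u) :
    ∫⁻ x in ω, ∫⁻ y in ω, comparisonIntegral μ p (finrank ℝ E + a) ω Φ u x y ∂μ ∂μ ≤
      tailConst μ (finrank ℝ E + a) * ENNReal.ofReal (2 ^ finrank ℝ E * (2 * L) ^ a) *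
        (ENNReal.ofReal δ⁻¹ *
          ∫⁻ x in ω, ∫⁻ z in ω, ‖u x - u z‖ₑ ^ p / ‖x - z‖ₑ ^ (finrank ℝ E + a) ∂μ ∂μ) := by
  set q := finrank ℝ E + a
  set k := tailConst μ q * ENNReal.ofReal (2 ^ finrank ℝ E * (2 * L) ^ a)
  have hk : k ≠ ⊤ := ENNReal.mul_ne_top
    (tailConst_ne_top (lt_add_of_pos_right _ ha)) ENNReal.ofReal_ne_top
  calc ∫⁻ x in ω, ∫⁻ y in ω, comparisonIntegral μ p q ω Φ u x y ∂μ ∂μ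
      = ∫⁻ x in ω, ∫⁻ z in ω, ∫⁻ y in ω,
          ‖u (Φ x) - u z‖ₑ ^ p * comparisonKernel q Φ x y z ∂μ ∂μ ∂μ :=
        lintegral_congr fun x => lintegral_lintegral_swap (measurable_mul_comparisonKernel p q
          hΦ.measurable hu measurable_const measurable_fst measurable_snd).aemeasurable
    _ ≤ ∫⁻ x in ω, ∫⁻ z in ω,
          k * (ENNReal.ofReal (A x ^ a) * (‖u (Φ x) - u z‖ₑ ^ p / ‖Φ x - z‖ₑ ^ q)) ∂μ ∂μ :=
        lintegral_mono_ae (ae_restrict_of_ae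
          ((hΦ.ae_setLIntegral_mul_comparisonKernel_le ha.le hL hp ω u).mono
            fun x hx => lintegral_mono hx))
    _ = k * ∫⁻ x in ω, ENNReal.ofReal (A x ^ a) *
          ∫⁻ z in ω, ‖u (Φ x) - u z‖ₑ ^ p / ‖Φ x - z‖ₑ ^ q ∂μ ∂μ := by
        rw [← lintegral_const_mul' _ _ hk]
        refine lintegral_congr fun x => ?_
        rw [lintegral_const_mul' _ _ hk, lintegral_const_mul' _ _ ENNReal.ofReal_ne_top]
    _ ≤ _ := by
        gcongr
        exact hΦ.setLIntegral_rpow_mul_comp_le hδ hmaps hω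
          fun w => ∫⁻ z in ω, ‖u w - u z‖ₑ ^ p / ‖w - z‖ₑ ^ q ∂μ

/-- The constant in the Gagliardo estimate `IsWeightedDilation.lintegral_enorm_comp_sub_le`. -/
def gagliardoCompConst (μ : Measure E) (a p c L δ : ℝ) : ℝ≥0∞ :=
  ENNReal.ofReal (2 ^ finrank ℝ E / c) * 2 ^ (p - 1) * (2 * (tailConst μ (finrank ℝ E + a) *
    ENNReal.ofReal (2 ^ finrank ℝ E * (2 * L) ^ a) * ENNReal.ofReal δ⁻¹))

lemma gagliardoCompConst_ne_top (ha : 0 < a) (hp : 1 ≤ p) :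
    gagliardoCompConst μ a p c L δ ≠ ⊤ := by
  unfold gagliardoCompConst
  have htail : tailConst μ (finrank ℝ E + a) ≠ ⊤ := tailConst_ne_top (by linarith)
  have hpow : (2 : ℝ≥0∞) ^ (p - 1) ≠ ⊤ :=
    ENNReal.rpow_ne_top_of_nonneg (sub_nonneg.2 hp) ENNReal.ofNat_ne_top
  finiteness

lemma IsWeightedDilation.lintegral_enorm_comp_sub_le (hΦ : IsWeightedDilation μ a L δ Φ A)
    (ha : 0 < a) (hL : 0 < L) (hδ : 0 < δ) (hp : 1 ≤ p) (hmaps : MapsTo Φ ω ω)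
    (hω : MeasurableSet ω) (hc : 0 < c) (hreg : IsLowerRegular μ c ω) (hu : StronglyMeasurable u) :
    ∫⁻ x in ω, ∫⁻ y in ω, ‖u (Φ x) - u (Φ y)‖ₑ ^ p / ‖x - y‖ₑ ^ (finrank ℝ E + a) ∂μ ∂μ ≤
      gagliardoCompConst μ a p c L δ *
        ∫⁻ x in ω, ∫⁻ y in ω, ‖u x - u y‖ₑ ^ p / ‖x - y‖ₑ ^ (finrank ℝ E + a) ∂μ ∂μ := by
  set q := finrank ℝ E + a
  set G := comparisonIntegral μ p q ω Φ u
  set k := ENNReal.ofReal (2 ^ finrank ℝ E / c) * 2 ^ (p - 1)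
  have hk_top : k ≠ ⊤ := ENNReal.mul_ne_top ENNReal.ofReal_ne_top
    (ENNReal.rpow_ne_top_of_nonneg (sub_nonneg.2 hp) ENNReal.ofNat_ne_top)
  have hker : Measurable fun b : (E × E) × E =>
      ‖u (Φ b.1.1) - u b.2‖ₑ ^ p * comparisonKernel q Φ b.1.1 b.1.2 b.2 :=
    measurable_mul_comparisonKernel p q hΦ.measurable hu (by fun_prop) (by fun_prop) (by fun_prop)
  have hGm : Measurable (Function.uncurry G) := hker.lintegral_prod_right'
  have hsymm : ∫⁻ x in ω, ∫⁻ y in ω, G y x ∂μ ∂μ = ∫⁻ x in ω, ∫⁻ y in ω, G x y ∂μ ∂μ :=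
    lintegral_lintegral_swap (hGm.comp measurable_swap).aemeasurable
  calc ∫⁻ x in ω, ∫⁻ y in ω, ‖u (Φ x) - u (Φ y)‖ₑ ^ p / ‖x - y‖ₑ ^ q ∂μ ∂μ
      ≤ ∫⁻ x in ω, ∫⁻ y in ω, k * (G x y + G y x) ∂μ ∂μ :=
        setLIntegral_mono' hω fun x hx => setLIntegral_mono' hω fun y hy =>
          hreg.enorm_comp_sub_rpow_div_le hc hp q hΦ.measurable hu (hmaps hx) (hmaps hy)
    _ = k * ∫⁻ x in ω, (∫⁻ y in ω, G x y ∂μ) + ∫⁻ y in ω, G y x ∂μ ∂μ := by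
        rw [← lintegral_const_mul' _ _ hk_top]
        refine lintegral_congr fun x => ?_
        rw [lintegral_const_mul' _ _ hk_top, lintegral_add_left hGm.of_uncurry_left]
    _ = k * (2 * ∫⁻ x in ω, ∫⁻ y in ω, G x y ∂μ ∂μ) := by
        rw [lintegral_add_left (f := fun x => ∫⁻ y in ω, G x y ∂μ) hGm.lintegral_prod_right',
          hsymm, two_mul]
    _ ≤ _ := by
        rw [gagliardoCompConst, mul_assoc k, mul_assoc 2, mul_assoc (_ * _) (ENNReal.ofReal δ⁻¹)]
        gcongr
        exact hΦ.lintegral_comparisonIntegral_le ha hL hδ (by linarith) hmaps hω hu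

lemma IsWeightedDilation.smul_conj (hΦ : IsWeightedDilation μ a L δ Φ A) {η : ℝ} (hη : 0 < η) :
    IsWeightedDilation μ a L δ (fun x => η • Φ (η⁻¹ • x)) fun x => A (η⁻¹ • x) where
  measurable := (hΦ.measurable.comp (measurable_const_smul η⁻¹)).const_smul η
  injective := (smul_right_injective E hη.ne').comp
    (hΦ.injective.comp (smul_right_injective E (inv_ne_zero hη.ne')))
  one_le x := hΦ.one_le _
  norm_sub_le := by
    have hqmp := Measure.quasiMeasurePreserving_smul μ (inv_ne_zero hη.ne')
    filter_upwards [hqmp.ae hΦ.norm_sub_le] with x hx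
    filter_upwards [hqmp.ae hx] with y hy
    rw [← smul_sub, norm_smul, Real.norm_of_nonneg hη.le]
    rw [← smul_sub, norm_smul, norm_inv, Real.norm_of_nonneg hη.le, mul_left_comm,
      ← div_eq_inv_mul, le_div_iff₀' hη] at hy
    exact hy
  le_abs_det := by
    have hqmp := Measure.quasiMeasurePreserving_smul μ (inv_ne_zero hη.ne')
    filter_upwards [hqmp.ae hΦ.le_abs_det] with x ⟨hdiff, hdet⟩
    have hderiv : HasFDerivAt (fun x => η • Φ (η⁻¹ • x)) (fderiv ℝ Φ (η⁻¹ • x)) x := by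
      simpa [smul_smul, hη.ne', Pi.smul_def, Function.comp_def] using
        (hdiff.hasFDerivAt.comp x ((hasFDerivAt_id x).const_smul η⁻¹)).const_smul η
    exact ⟨hderiv.differentiableAt, hderiv.fderiv ▸ hdet⟩

end Composition

/-! ### Radial profiles -/

section Profile

open scoped ContDiff

/-- A smooth decreasing function `g` with slope at least `δ - 1`, vanishing on `[β, ∞)`: for every
`c ∈ [0, 1]` the map `t ↦ t + c * g t` is then an increasing diffeomorphism fixing `[β, ∞)`, which
for `c = 1` moves `0` away from the origin. -/
structure IsProfile (β δ : ℝ) (g : ℝ → ℝ) : Prop where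
  pos : 0 < δ
  contDiff : ContDiff ℝ ∞ g
  deriv_nonpos : ∀ t, deriv g t ≤ 0
  le_deriv : ∀ t, δ - 1 ≤ deriv g t
  eq_zero : ∀ t, β ≤ t → g t = 0

lemma exists_isProfile {α β : ℝ} (hα : 0 < α) (hαβ : α < β) :
    ∃ g δ, α ≤ g 0 ∧ IsProfile β δ g := by
  obtain ⟨β', hαβ', hβ'⟩ := exists_between hαβ
  have hβ'0 : 0 < β' := hα.trans hαβ'
  let T : ℝ → ℝ := fun t => α / β' * Real.smoothTransition ((β - t) / (β - β'))
  have hT : ContDiff ℝ ∞ T := contDiff_const.mul (Real.smoothTransition.contDiff.comp (by fun_prop))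
  have hT0 (t : ℝ) : 0 ≤ T t := mul_nonneg (by positivity) (Real.smoothTransition.nonneg _)
  have hTle (t : ℝ) : T t ≤ α / β' :=
    mul_le_of_le_one_right (by positivity) (Real.smoothTransition.le_one _)
  have hTint (s t : ℝ) : IntervalIntegrable T volume s t := hT.continuous.intervalIntegrable s t
  have hderiv (t : ℝ) : HasDerivAt (fun t => ∫ l in t..β, T l) (-T t) t :=
    intervalIntegral.integral_hasDerivAt_left (hTint _ _)
      (hT.continuous.stronglyMeasurableAtFilter _ _) hT.continuous.continuousAt
  have hderiv_eq : deriv (fun t => ∫ l in t..β, T l) = fun t => -T t :=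
    funext fun t => (hderiv t).deriv
  have hTone : ∀ l ∈ uIcc 0 β', T l = α / β' := by
    intro l hl
    rw [uIcc_of_le hβ'0.le] at hl
    have hsat : 1 ≤ (β - l) / (β - β') := (one_le_div (by linarith)).2 (by linarith [hl.2])
    simp only [T, Real.smoothTransition.one_of_one_le hsat, mul_one]
  refine ⟨fun t => ∫ l in t..β, T l, 1 - α / β', ?_, ?_⟩
  · calc α = ∫ l in 0..β', T l := by
          rw [intervalIntegral.integral_congr hTone, intervalIntegral.integral_const, smul_eq_mul,
            sub_zero, mul_div_cancel₀ _ hβ'0.ne']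
      _ ≤ (∫ l in 0..β', T l) + ∫ l in β'..β, T l :=
          le_add_of_nonneg_right (intervalIntegral.integral_nonneg hβ'.le fun t _ => hT0 t)
      _ = ∫ l in 0..β, T l :=
          intervalIntegral.integral_add_adjacent_intervals (hTint _ _) (hTint _ _)
  · refine ⟨sub_pos.2 ((div_lt_one hβ'0).2 hαβ'), ?_, fun t => ?_, fun t => ?_, fun t ht => ?_⟩
    · exact contDiff_infty_iff_deriv.2
        ⟨fun t => (hderiv t).differentiableAt, hderiv_eq ▸ hT.neg⟩
    · rw [hderiv_eq]; linarith [hT0 t]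
    · rw [hderiv_eq]; linarith [hTle t]
    · refine (intervalIntegral.integral_congr fun l hl => ?_).trans intervalIntegral.integral_zero
      rw [uIcc_of_ge ht] at hl
      have hsat : (β - l) / (β - β') ≤ 0 :=
        div_nonpos_of_nonpos_of_nonneg (by linarith [hl.1]) (by linarith)
      simp only [T, Real.smoothTransition.zero_of_nonpos hsat, mul_zero]

namespace IsProfile

variable {β δ c c' r t : ℝ} {g : ℝ → ℝ} {n : ℕ}

lemma differentiable (hg : IsProfile β δ g) : Differentiable ℝ g :=
  hg.contDiff.differentiable (by simp)

lemma antitone (hg : IsProfile β δ g) : Antitone g :=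
  antitone_of_deriv_nonpos hg.differentiable hg.deriv_nonpos

lemma nonneg (hg : IsProfile β δ g) (t : ℝ) : 0 ≤ g t :=
  hg.eq_zero (max t β) (le_max_right _ _) ▸ hg.antitone (le_max_left t β)

lemma hasDerivAt_add_mul (hg : IsProfile β δ g) (c t : ℝ) :
    HasDerivAt (fun t => t + c * g t) (1 + c * deriv g t) t :=
  (hasDerivAt_id t).add ((hg.differentiable t).hasDerivAt.const_mul c)

lemma le_one_add_mul_deriv (hg : IsProfile β δ g) (hc : c ∈ Icc (0 : ℝ) 1) (t : ℝ) :
    δ ≤ 1 + c * deriv g t :=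
  calc δ ≤ 1 + deriv g t := by linarith [hg.le_deriv t]
    _ ≤ 1 + c * deriv g t := by nlinarith [hg.deriv_nonpos t, hc.2]

lemma strictMono_add_mul (hg : IsProfile β δ g) (hc : c ∈ Icc (0 : ℝ) 1) :
    StrictMono fun t => t + c * g t :=
  strictMono_of_deriv_pos fun t => by
    rw [(hg.hasDerivAt_add_mul c t).deriv]
    exact hg.pos.trans_le (hg.le_one_add_mul_deriv hc t)

lemma add_mul_le (hg : IsProfile β δ g) (hc : c ∈ Icc (0 : ℝ) 1) (ht : t ≤ β) :
    t + c * g t ≤ β := by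
  simpa [hg.eq_zero β le_rfl] using (hg.strictMono_add_mul hc).monotone ht

end IsProfile

/-- The `n`-th root of `dilationFactor`. -/
def dilationRoot (n : ℕ) (g : ℝ → ℝ) (c r : ℝ) : ℝ :=
  1 + c * g (r ^ (n : ℝ)⁻¹) / r ^ (n : ℝ)⁻¹

/-- The factor `A` for which `A * r = (σ + c * g σ) ^ n`, where `σ ^ n = r`; it is `1` for `r = 0`,
by the convention on division by zero. The power `n` makes `A` grow like `1 / r` near `r = 0` while
the derivative of `A * r` is still of size `A ^ (1 - 1 / n)` there. -/
def dilationFactor (n : ℕ) (g : ℝ → ℝ) (c r : ℝ) : ℝ :=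
  dilationRoot n g c r ^ n

variable {β δ c c' r r' : ℝ} {g : ℝ → ℝ} {n : ℕ}

lemma mul_dilationFactor (hn : n ≠ 0) (g : ℝ → ℝ) (c : ℝ) (hr : 0 < r) :
    r * dilationFactor n g c r = (r ^ (n : ℝ)⁻¹ + c * g (r ^ (n : ℝ)⁻¹)) ^ n := by
  have hσ : 0 < r ^ (n : ℝ)⁻¹ := Real.rpow_pos_of_pos hr _
  nth_rewrite 1 [← Real.rpow_inv_natCast_pow hr.le hn]
  rw [dilationFactor, dilationRoot, ← mul_pow, mul_add, mul_one, mul_div_cancel₀ _ hσ.ne']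

@[simp]
lemma dilationFactor_zero_left (n : ℕ) (g : ℝ → ℝ) (r : ℝ) : dilationFactor n g 0 r = 1 := by
  simp [dilationFactor, dilationRoot]

lemma contDiffAt_dilationFactor {E : Type*} [NormedAddCommGroup E] [NormedSpace ℝ E]
    {χ N : E → ℝ} {x : E} (hg : ContDiff ℝ ∞ g) (n : ℕ) (hχ : ContDiffAt ℝ ∞ χ x)
    (hN : ContDiffAt ℝ ∞ N x) (hx : 0 < N x) :
    ContDiffAt ℝ ∞ (fun y => dilationFactor n g (χ y) (N y)) x := by
  have hσ : ContDiffAt ℝ ∞ (fun y => N y ^ (n : ℝ)⁻¹) x :=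
    hN.rpow_const_of_ne hx.ne'
  exact (contDiffAt_const.add ((hχ.mul (hg.contDiffAt.comp x hσ)).div hσ
    (Real.rpow_pos_of_pos hx _).ne')).pow n

lemma measurable_dilationFactor {α : Type*} [MeasurableSpace α] {χ N : α → ℝ} (n : ℕ)
    (hg : Measurable g) (hχ : Measurable χ) (hN : Measurable N) :
    Measurable fun y => dilationFactor n g (χ y) (N y) :=
  (measurable_const.add ((hχ.mul (hg.comp (hN.pow_const _))).div (hN.pow_const _))).pow_const n

lemma abs_mul_sub_mul_le_of_antitoneOn {f : ℝ → ℝ} (hf : AntitoneOn f (Ioi 0))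
    (hmul : MonotoneOn (fun r => r * f r) (Ioi 0)) (hr : 0 < r) (hr' : 0 < r') :
    |r * f r - r' * f r'| ≤ f r * |r - r'| := by
  rcases le_total r r' with h | h
  · have hle : f r' ≤ f r := hf hr hr' h
    rw [abs_sub_comm, abs_of_nonneg (sub_nonneg.2 (hmul hr hr' h)), abs_sub_comm,
      abs_of_nonneg (sub_nonneg.2 h)]
    nlinarith
  · have hle : f r ≤ f r' := hf hr' hr h
    rw [abs_of_nonneg (sub_nonneg.2 (hmul hr' hr h)), abs_of_nonneg (sub_nonneg.2 h)]
    nlinarith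

namespace IsProfile

lemma one_le_dilationRoot (hg : IsProfile β δ g) (hc : 0 ≤ c) (hr : 0 ≤ r) :
    1 ≤ dilationRoot n g c r :=
  le_add_of_nonneg_right
    (div_nonneg (mul_nonneg hc (hg.nonneg _)) (Real.rpow_nonneg hr _))

lemma one_le_dilationFactor (hg : IsProfile β δ g) (hc : 0 ≤ c) (hr : 0 ≤ r) :
    1 ≤ dilationFactor n g c r :=
  one_le_pow₀ (hg.one_le_dilationRoot hc hr)

lemma dilationFactor_eq_one (hg : IsProfile β δ g) (hn : n ≠ 0) (hβ : 0 ≤ β) (hr : β ^ n ≤ r) :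
    dilationFactor n g c r = 1 := by
  have hσ : β ≤ r ^ (n : ℝ)⁻¹ :=
    (Real.le_rpow_inv_iff_of_pos hβ ((pow_nonneg hβ n).trans hr) (by positivity)).2 (by simpa)
  simp [dilationFactor, dilationRoot, hg.eq_zero _ hσ]

lemma antitoneOn_dilationFactor (hg : IsProfile β δ g) (hc : 0 ≤ c) :
    AntitoneOn (dilationFactor n g c) (Ioi 0) := by
  intro r (hr : 0 < r) r' (hr' : 0 < r') hrr'
  have hσ : r ^ (n : ℝ)⁻¹ ≤ r' ^ (n : ℝ)⁻¹ := Real.rpow_le_rpow hr.le hrr' (by positivity)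
  have hroot : dilationRoot n g c r' ≤ dilationRoot n g c r := by
    unfold dilationRoot
    gcongr
    · exact mul_nonneg hc (hg.nonneg _)
    · exact hg.antitone hσ
  exact pow_le_pow_left₀ (zero_le_one.trans (hg.one_le_dilationRoot hc hr'.le)) hroot n

lemma strictMonoOn_mul_dilationFactor (hg : IsProfile β δ g) (hn : n ≠ 0)
    (hc : c ∈ Icc (0 : ℝ) 1) : StrictMonoOn (fun r => r * dilationFactor n g c r) (Ici 0) := by
  intro r (hr : 0 ≤ r) r' _ hrr'
  have hr' : 0 < r' := hr.trans_lt hrr'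
  rcases hr.eq_or_lt with rfl | hr
  · simpa using mul_pos hr' (one_pos.trans_le (hg.one_le_dilationFactor hc.1 hr'.le))
  simp only [mul_dilationFactor hn g c hr, mul_dilationFactor hn g c hr']
  have hnonneg : 0 ≤ r ^ (n : ℝ)⁻¹ + c * g (r ^ (n : ℝ)⁻¹) :=
    add_nonneg (Real.rpow_nonneg hr.le _) (mul_nonneg hc.1 (hg.nonneg _))
  exact pow_lt_pow_left₀ (hg.strictMono_add_mul hc
    (Real.rpow_lt_rpow hr.le hrr' (by positivity))) hnonneg hn

lemma mul_dilationFactor_lt (hg : IsProfile β δ g) (hn : n ≠ 0) (hβ : 0 < β)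
    (hc : c ∈ Icc (0 : ℝ) 1) (hr : 0 ≤ r) (hrβ : r < β ^ n) :
    r * dilationFactor n g c r < β ^ n := by
  simpa [hg.dilationFactor_eq_one hn hβ.le le_rfl] using
    hg.strictMonoOn_mul_dilationFactor hn hc hr (pow_nonneg hβ.le n) hrβ

lemma pow_le_mul_dilationFactor_one (hg : IsProfile β δ g) (hn : n ≠ 0) (hr : 0 < r) :
    g 0 ^ n ≤ r * dilationFactor n g 1 r := by
  rw [mul_dilationFactor hn g 1 hr]
  refine pow_le_pow_left₀ (hg.nonneg 0) ?_ n
  simpa using (hg.strictMono_add_mul (right_mem_Icc.2 zero_le_one)).monotone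
    (Real.rpow_nonneg hr.le (n : ℝ)⁻¹)

lemma abs_mul_dilationFactor_sub_le (hg : IsProfile β δ g) (hn : n ≠ 0) (hβ : 0 ≤ β)
    (hc : c ∈ Icc (0 : ℝ) 1) (hc' : c' ∈ Icc (0 : ℝ) 1) (hr : 0 < r) :
    |r * dilationFactor n g c r - r * dilationFactor n g c' r| ≤ n * β ^ n * |c - c'| := by
  rw [mul_dilationFactor hn g c hr, mul_dilationFactor hn g c' hr]
  set σ := r ^ (n : ℝ)⁻¹
  have hσ : 0 < σ := Real.rpow_pos_of_pos hr _
  rcases le_total β σ with hβσ | hσβ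
  · simp only [hg.eq_zero σ hβσ, mul_zero, sub_self, abs_zero]
    positivity
  · have hgσ : g σ ≤ β := by linarith [hg.add_mul_le (right_mem_Icc.2 zero_le_one) hσβ]
    have habs {e : ℝ} (he : e ∈ Icc (0 : ℝ) 1) : |σ + e * g σ| ≤ β := by
      rw [abs_of_nonneg (add_nonneg hσ.le (mul_nonneg he.1 (hg.nonneg σ)))]
      exact hg.add_mul_le he hσβ
    calc |(σ + c * g σ) ^ n - (σ + c' * g σ) ^ n|
        ≤ |(σ + c * g σ) - (σ + c' * g σ)| * n *
            max |σ + c * g σ| |σ + c' * g σ| ^ (n - 1) := abs_pow_sub_pow_le ..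
      _ = |c - c'| * g σ * n * max |σ + c * g σ| |σ + c' * g σ| ^ (n - 1) := by
          rw [add_sub_add_left_eq_sub, ← sub_mul, abs_mul, abs_of_nonneg (hg.nonneg σ)]
      _ ≤ |c - c'| * β * n * β ^ (n - 1) := by
          gcongr
          exact max_le (habs hc) (habs hc')
      _ = n * β ^ n * |c - c'| := by
          rw [← mul_pow_sub_one hn β]; ring

lemma hasDerivAt_mul_dilationFactor (hg : IsProfile β δ g) (hn : n ≠ 0) (c : ℝ) (hr : 0 < r) :
    HasDerivAt (fun r => r * dilationFactor n g c r)
      (dilationRoot n g c r ^ (n - 1) * (1 + c * deriv g (r ^ (n : ℝ)⁻¹))) r := by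
  have hσ : 0 < r ^ (n : ℝ)⁻¹ := Real.rpow_pos_of_pos hr _
  have hn' : (n : ℝ) ≠ 0 := Nat.cast_ne_zero.2 hn
  have hroot : HasDerivAt (fun r => (r ^ (n : ℝ)⁻¹ + c * g (r ^ (n : ℝ)⁻¹)) ^ n) _ r :=
    ((hg.hasDerivAt_add_mul c _).comp r
      (Real.hasDerivAt_rpow_const (p := (n : ℝ)⁻¹) (Or.inl hr.ne'))).pow n
  have heq : (fun r => r * dilationFactor n g c r) =ᶠ[𝓝 r]
      fun r => (r ^ (n : ℝ)⁻¹ + c * g (r ^ (n : ℝ)⁻¹)) ^ n :=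
    (eventually_gt_nhds hr).mono fun r hr => mul_dilationFactor hn g c hr
  refine (hroot.congr_of_eventuallyEq heq).congr_deriv ?_
  have hpow : r ^ ((n : ℝ)⁻¹ - 1) * (r ^ (n : ℝ)⁻¹) ^ (n - 1) = 1 := by
    rw [Real.rpow_sub_one hr.ne', div_mul_eq_mul_div, mul_pow_sub_one hn,
      Real.rpow_inv_natCast_pow hr.le hn, div_self hr.ne']
  have hmul : r ^ (n : ℝ)⁻¹ + c * g (r ^ (n : ℝ)⁻¹) = r ^ (n : ℝ)⁻¹ * dilationRoot n g c r := by
    rw [dilationRoot, mul_add, mul_one, mul_div_cancel₀ _ hσ.ne']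
  simp only [Function.comp_apply, hmul, mul_pow]
  linear_combination
    (dilationRoot n g c r ^ (n - 1) * (1 + c * deriv g (r ^ (n : ℝ)⁻¹))) * hpow +
    ((r ^ (n : ℝ)⁻¹) ^ (n - 1) * dilationRoot n g c r ^ (n - 1) *
      (1 + c * deriv g (r ^ (n : ℝ)⁻¹)) * r ^ ((n : ℝ)⁻¹ - 1)) * mul_inv_cancel₀ hn'

end IsProfile

end Profile

/-! ### Fibre dilations -/

lemma det_id_add_smul_of_isIdempotentElem {K V : Type*} [Field K] [AddCommGroup V] [Module K V]
    [FiniteDimensional K V] {P : V →ₗ[K] V} (hP : IsIdempotentElem P) (c : K) :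
    (LinearMap.id + c • P).det = (1 + c) ^ finrank K (LinearMap.range P) := by
  have hproj := LinearMap.IsIdempotentElem.isProj_range P hP
  let e := (LinearMap.range P).prodEquivOfIsCompl (LinearMap.ker P) hproj.isCompl
  have hconj : LinearMap.id + c • P =
      e.conj (LinearMap.prodMap ((1 + c) • LinearMap.id) LinearMap.id) := by
    nth_rewrite 1 [hproj.eq_conj_prodMap, ← e.conj_id, ← map_smul, ← map_add]
    congr 1
    ext x <;> simp [add_smul]
  rw [hconj, LinearEquiv.conj_apply, LinearMap.comp_assoc, LinearMap.det_conj,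
    LinearMap.det_prodMap, LinearMap.det_smul, LinearMap.det_id, LinearMap.det_id, mul_one, mul_one]

section FiberDilation

open scoped ContDiff NNReal

variable {E : Type*} [NormedAddCommGroup E] [NormedSpace ℝ E] {P : E →L[ℝ] E} {A : E → ℝ}
  {x y : E}

/-- The map which dilates by the factor `A x` in the range of the projection `P`, and is the
identity in the complementary directions. -/
def fiberDilation (P : E →L[ℝ] E) (A : E → ℝ) (x : E) : E :=
  x + (A x - 1) • P x

lemma fiberDilation_eq_self (hA : A x = 1) : fiberDilation P A x = x := by
  simp [fiberDilation, hA]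

lemma map_fiberDilation (hP : IsIdempotentElem P) (A : E → ℝ) (x : E) :
    P (fiberDilation P A x) = A x • P x := by
  have hPP : P (P x) = P x := congr($hP.eq x)
  rw [fiberDilation, map_add, map_smul, hPP]
  module

lemma contDiffAt_fiberDilation {k : WithTop ℕ∞} (hA : ContDiffAt ℝ k A x) :
    ContDiffAt ℝ k (fiberDilation P A) x :=
  contDiffAt_id.add ((hA.sub contDiffAt_const).smul P.contDiff.contDiffAt)

lemma hasFDerivAt_fiberDilation {A' : E →L[ℝ] ℝ} (hA : HasFDerivAt A A' x) :
    HasFDerivAt (fiberDilation P A)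
      (ContinuousLinearMap.id ℝ E + ((A x - 1) • P + A'.smulRight (P x))) x :=
  (hasFDerivAt_id x).add ((hA.sub_const 1).smul P.hasFDerivAt)

lemma det_fderiv_fiberDilation [FiniteDimensional ℝ E] (hP : IsIdempotentElem P)
    (hA : DifferentiableAt ℝ A x) (hA0 : A x ≠ 0) :
    (fderiv ℝ (fiberDilation P A) x).det =
      A x ^ finrank ℝ (LinearMap.range (P : E →ₗ[ℝ] E)) *
        (1 + (A x)⁻¹ * fderiv ℝ A x (P x)) := by
  have hP' : IsIdempotentElem (P : E →ₗ[ℝ] E) := congr(($hP.eq : E →ₗ[ℝ] E))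
  have hPP : P (P x) = P x := congr($hP.eq x)
  have hcomp : (fderiv ℝ (fiberDilation P A) x : E →ₗ[ℝ] E) =
      (LinearMap.id + (A x - 1) • (P : E →ₗ[ℝ] E)) ∘ₗ
        LinearMap.transvection (fderiv ℝ A x : E →ₗ[ℝ] ℝ) ((A x)⁻¹ • P x) := by
    rw [(hasFDerivAt_fiberDilation hA.hasFDerivAt).fderiv]
    ext v
    simp only [LinearMap.transvection, ContinuousLinearMap.coe_coe, add_apply, LinearMap.coe_comp,
      LinearMap.coe_mk, AddHom.coe_mk, Function.comp_apply, LinearMap.add_apply, LinearMap.id_apply,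
      LinearMap.smul_apply, smul_apply,
      ContinuousLinearMap.smulRight_apply, ContinuousLinearMap.id_apply, map_add, map_smul, hPP]
    match_scalars <;> field_simp
    ring
  rw [ContinuousLinearMap.det, hcomp, LinearMap.det_comp, det_id_add_smul_of_isIdempotentElem hP',
    LinearMap.transvection.det, add_sub_cancel, map_smul, smul_eq_mul, ContinuousLinearMap.coe_coe]

lemma norm_fiberDilation_sub_le (hA : 1 ≤ A x) (y : E) :
    ‖fiberDilation P A x - fiberDilation P A y‖ ≤
      (1 + ‖P‖) * A x * ‖x - y‖ + |A x - A y| * ‖P y‖ := by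
  have hsplit : fiberDilation P A x - fiberDilation P A y =
      (x - y) + (A x - 1) • P (x - y) + (A x - A y) • P y := by
    simp only [fiberDilation, map_sub]
    module
  have hxy : ‖x - y‖ ≤ A x * ‖x - y‖ := le_mul_of_one_le_left (norm_nonneg _) hA
  have hP : ‖(A x - 1) • P (x - y)‖ ≤ A x * (‖P‖ * ‖x - y‖) := by
    rw [norm_smul, Real.norm_of_nonneg (sub_nonneg.2 hA)]
    gcongr
    · linarith
    · exact P.le_opNorm _
  calc ‖fiberDilation P A x - fiberDilation P A y‖
      ≤ ‖x - y‖ + ‖(A x - 1) • P (x - y)‖ + ‖(A x - A y) • P y‖ := hsplit ▸ norm_add₃_le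
    _ ≤ A x * ‖x - y‖ + A x * (‖P‖ * ‖x - y‖) + |A x - A y| * ‖P y‖ := by
        rw [norm_smul (A x - A y), Real.norm_eq_abs]
        gcongr
    _ = (1 + ‖P‖) * A x * ‖x - y‖ + |A x - A y| * ‖P y‖ := by ring

/-- A seminorm measuring the size of the component `P x` of `x`, up to the constant `M`, and smooth
off the kernel of the projection `P`. -/
structure IsSmoothGauge (P : E →L[ℝ] E) (M : ℝ≥0) (N : Seminorm ℝ E) : Prop where
  isIdempotentElem : IsIdempotentElem P
  continuous : Continuous N
  map_proj : ∀ x, N (P x) = N x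
  norm_le : ∀ x, ‖P x‖ ≤ M * N x
  contDiffAt : ∀ x, N x ≠ 0 → ContDiffAt ℝ ∞ N x

/-- A smooth cutoff function which is constant along the range of the projection `P`. -/
structure IsFiberCutoff (P : E →L[ℝ] E) (K : ℝ≥0) (χ : E → ℝ) : Prop where
  contDiff : ContDiff ℝ ∞ χ
  lipschitzWith : LipschitzWith K χ
  mem_Icc : ∀ x, χ x ∈ Icc (0 : ℝ) 1
  add_proj : ∀ x y, χ (x + P y) = χ x

variable {β δ : ℝ} {M K : ℝ≥0} {g : ℝ → ℝ} {N : Seminorm ℝ E} {χ : E → ℝ} {n : ℕ}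

namespace IsSmoothGauge

lemma map_add_smul (hN : IsSmoothGauge P M N) (x : E) {t : ℝ} (ht : 0 ≤ 1 + t) :
    N (x + t • P x) = (1 + t) * N x := by
  have hPP : P (P x) = P x := congr($hN.isIdempotentElem.eq x)
  calc N (x + t • P x) = N ((1 + t) • P x) := by
        rw [← hN.map_proj, map_add, map_smul, hPP, add_smul, one_smul]
    _ = (1 + t) * N x := by
        rw [map_smul_eq_mul, hN.map_proj, Real.norm_of_nonneg ht]

lemma map_fiberDilation (hN : IsSmoothGauge P M N) (hA : 0 ≤ A x) :
    N (fiberDilation P A x) = N x * A x := by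
  rw [fiberDilation, hN.map_add_smul x (by linarith), add_sub_cancel, mul_comm]

lemma contDiff_contDiffBump_comp (hN : IsSmoothGauge P M N) (ψ : ContDiffBump (0 : ℝ)) :
    ContDiff ℝ ∞ (ψ ∘ N) := by
  refine contDiff_iff_contDiffAt.2 fun x => ?_
  by_cases hx : N x = 0
  · have hone : ψ ∘ N =ᶠ[𝓝 x] fun _ => 1 := by
      filter_upwards [hN.continuous.continuousAt.eventually_lt continuousAt_const
        (hx.trans_lt ψ.rIn_pos)] with y hy
      refine ψ.one_of_mem_closedBall ?_
      rw [mem_closedBall_zero_iff, Real.norm_of_nonneg (apply_nonneg N y)]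
      exact hy.le
    exact contDiffAt_const.congr_of_eventuallyEq hone
  · exact ψ.contDiff.contDiffAt.comp x (hN.contDiffAt x hx)

end IsSmoothGauge

namespace IsFiberCutoff

lemma map_fiberDilation (hχ : IsFiberCutoff P K χ) (A : E → ℝ) (x : E) :
    χ (fiberDilation P A x) = χ x := by
  rw [fiberDilation, ← map_smul, hχ.add_proj]

end IsFiberCutoff

/-- The factor `dilationFactor` with its two parameters given by functions on `E`. -/
def dilationField (n : ℕ) (g : ℝ → ℝ) (χ N : E → ℝ) (x : E) : ℝ :=
  dilationFactor n g (χ x) (N x)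

lemma injective_fiberDilation_dilationField (hg : IsProfile β δ g) (hn : n ≠ 0)
    (hN : IsSmoothGauge P M N) (hχ : IsFiberCutoff P K χ) :
    (fiberDilation P (dilationField n g χ N)).Injective := by
  intro x y hxy
  have hA (z : E) : 1 ≤ dilationField n g χ N z :=
    hg.one_le_dilationFactor (hχ.mem_Icc z).1 (apply_nonneg N z)
  have hχxy : χ x = χ y := by
    rw [← hχ.map_fiberDilation (dilationField n g χ N) x, hxy, hχ.map_fiberDilation]
  have hNxy : N x = N y := by
    refine (hg.strictMonoOn_mul_dilationFactor hn (hχ.mem_Icc y)).injOn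
      (apply_nonneg N x) (apply_nonneg N y) ?_
    have h := congr(N $hxy)
    rwa [hN.map_fiberDilation (zero_le_one.trans (hA x)),
      hN.map_fiberDilation (zero_le_one.trans (hA y)), dilationField, dilationField, hχxy] at h
  have hAxy : dilationField n g χ N x = dilationField n g χ N y := by
    rw [dilationField, dilationField, hχxy, hNxy]
  have hPxy : P x = P y := by
    have h := congr(P $hxy)
    rw [map_fiberDilation hN.isIdempotentElem, map_fiberDilation hN.isIdempotentElem, hAxy] at h
    exact smul_right_injective E (one_pos.trans_le (hA y)).ne' h
  simpa [fiberDilation, hAxy, hPxy] using hxy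

lemma abs_dilationFactor_sub_mul_le (hg : IsProfile β δ g) (hn : n ≠ 0) (hβ : 0 ≤ β)
    {c c' r r' : ℝ} (hc : c ∈ Icc (0 : ℝ) 1) (hc' : c' ∈ Icc (0 : ℝ) 1) (hr : 0 < r)
    (hr' : 0 < r') :
    |dilationFactor n g c r - dilationFactor n g c' r'| * r' ≤
      dilationFactor n g c r * (2 * |r - r'| + n * β ^ n * |c - c'|) := by
  set a := dilationFactor n g c r
  set b := dilationFactor n g c' r'
  have ha : 1 ≤ a := hg.one_le_dilationFactor hc.1 hr.le
  have hradial : |r * a - r' * dilationFactor n g c r'| ≤ a * |r - r'| :=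
    abs_mul_sub_mul_le_of_antitoneOn (hg.antitoneOn_dilationFactor hc.1)
      ((hg.strictMonoOn_mul_dilationFactor hn hc).monotoneOn.mono Ioi_subset_Ici_self) hr hr'
  have hcutoff : |r' * dilationFactor n g c r' - r' * b| ≤ a * (n * β ^ n * |c - c'|) :=
    (hg.abs_mul_dilationFactor_sub_le hn hβ hc hc' hr').trans
      (le_mul_of_one_le_left (by positivity) ha)
  calc |a - b| * r' = |(r * a - r' * dilationFactor n g c r') +
          (r' * dilationFactor n g c r' - r' * b) - a * (r - r')| := by
        rw [← abs_of_pos hr', ← abs_mul, abs_of_pos hr']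
        congr 1
        ring
    _ ≤ |r * a - r' * dilationFactor n g c r'| + |r' * dilationFactor n g c r' - r' * b| +
          |a * (r - r')| := (abs_sub _ _).trans (add_le_add_left (abs_add_le _ _) _)
    _ ≤ a * |r - r'| + a * (n * β ^ n * |c - c'|) + a * |r - r'| := by
        rw [abs_mul a, abs_of_nonneg (zero_le_one.trans ha)]
        gcongr
    _ = a * (2 * |r - r'| + n * β ^ n * |c - c'|) := by ring

lemma exists_norm_fiberDilation_dilationField_sub_le (hg : IsProfile β δ g) (hn : n ≠ 0)
    (hβ : 0 ≤ β) (hN : IsSmoothGauge P M N) (hχ : IsFiberCutoff P K χ) :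
    ∃ L > 0, ∀ x y, N x ≠ 0 → N y ≠ 0 →
      ‖fiberDilation P (dilationField n g χ N) x - fiberDilation P (dilationField n g χ N) y‖ ≤
        L * dilationField n g χ N x * ‖x - y‖ := by
  obtain ⟨KN, hKN, hNle⟩ := Seminorm.bound_of_continuous_normedSpace N hN.continuous
  refine ⟨1 + ‖P‖ + M * (2 * KN + n * β ^ n * K), by positivity, fun x y hx hy => ?_⟩
  have hx' : 0 < N x := hx.lt_of_le' (apply_nonneg N x)
  have hy' : 0 < N y := hy.lt_of_le' (apply_nonneg N y)
  have hA : 1 ≤ dilationField n g χ N x :=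
    hg.one_le_dilationFactor (hχ.mem_Icc x).1 hx'.le
  have hNxy : |N x - N y| ≤ KN * ‖x - y‖ := (abs_sub_map_le_sub N x y).trans (hNle _)
  have hχxy : |χ x - χ y| ≤ K * ‖x - y‖ := hχ.lipschitzWith.norm_sub_le x y
  refine (norm_fiberDilation_sub_le hA y).trans ?_
  set a := dilationField n g χ N x
  set b := dilationField n g χ N y
  have hab : |a - b| * ‖P y‖ ≤ M * (a * ((2 * KN + n * β ^ n * K) * ‖x - y‖)) :=
    calc |a - b| * ‖P y‖ ≤ |a - b| * (M * N y) := by gcongr; exact hN.norm_le y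
      _ = M * (|a - b| * N y) := by ring
      _ ≤ M * (a * (2 * |N x - N y| + n * β ^ n * |χ x - χ y|)) := by
          gcongr M * ?_
          exact abs_dilationFactor_sub_mul_le hg hn hβ (hχ.mem_Icc x) (hχ.mem_Icc y) hx' hy'
      _ ≤ M * (a * (2 * (KN * ‖x - y‖) + n * β ^ n * (K * ‖x - y‖))) := by gcongr
      _ = M * (a * ((2 * KN + n * β ^ n * K) * ‖x - y‖)) := by ring
  linarith

lemma contDiffAt_dilationField (hg : IsProfile β δ g) (n : ℕ) (hN : IsSmoothGauge P M N)
    (hχ : IsFiberCutoff P K χ) (hx : N x ≠ 0) : ContDiffAt ℝ ∞ (dilationField n g χ N) x :=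
  contDiffAt_dilationFactor hg.contDiff n hχ.contDiff.contDiffAt (hN.contDiffAt x hx)
    (hx.lt_of_le' (apply_nonneg N x))

lemma differentiableAt_dilationField (hg : IsProfile β δ g) (n : ℕ) (hN : IsSmoothGauge P M N)
    (hχ : IsFiberCutoff P K χ) (hx : N x ≠ 0) : DifferentiableAt ℝ (dilationField n g χ N) x :=
  (contDiffAt_dilationField hg n hN hχ hx).differentiableAt (by simp)

lemma add_fderiv_dilationField (hg : IsProfile β δ g) (hn : n ≠ 0)
    (hN : IsSmoothGauge P M N) (hχ : IsFiberCutoff P K χ) (hx : N x ≠ 0) :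
    dilationField n g χ N x + fderiv ℝ (dilationField n g χ N) x (P x) =
      dilationRoot n g (χ x) (N x) ^ (n - 1) * (1 + χ x * deriv g (N x ^ (n : ℝ)⁻¹)) := by
  have hx' : 0 < N x := hx.lt_of_le' (apply_nonneg N x)
  have hray : HasDerivAt (fun t : ℝ => x + t • P x) (P x) 0 := by
    simpa using ((hasDerivAt_id (0 : ℝ)).smul_const (P x)).const_add x
  have hscale : HasDerivAt (fun t : ℝ => (1 + t) * N x) (N x) 0 := by
    simpa using ((hasDerivAt_id (0 : ℝ)).const_add 1).mul_const (N x)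
  have hA : HasFDerivAt (dilationField n g χ N) (fderiv ℝ (dilationField n g χ N) x)
      (x + (0 : ℝ) • P x) := by
    rw [zero_smul, add_zero]
    exact (differentiableAt_dilationField hg n hN hχ hx).hasFDerivAt
  have hradial := (hg.hasDerivAt_mul_dilationFactor hn (χ x)
    (r := (1 + 0) * N x) (by simpa)).comp (0 : ℝ) hscale
  have heq : (fun t : ℝ => (1 + t) * N x) *
      (dilationField n g χ N ∘ fun t : ℝ => x + t • P x) =ᶠ[𝓝 0]
      (fun r => r * dilationFactor n g (χ x) r) ∘ fun t : ℝ => (1 + t) * N x := by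
    filter_upwards [eventually_gt_nhds (show (-1 : ℝ) < 0 by simp)] with t ht
    simp only [Pi.mul_apply, Function.comp_apply, dilationField]
    rw [← map_smul, hχ.add_proj, map_smul, hN.map_add_smul x (by linarith)]
  have huniq := (hscale.mul (hA.comp_hasDerivAt 0 hray)).unique (hradial.congr_of_eventuallyEq heq)
  simp only [Function.comp_apply, zero_smul, add_zero, one_mul] at huniq
  exact mul_left_cancel₀ hx (by linear_combination huniq)

lemma det_fderiv_fiberDilation_dilationField [FiniteDimensional ℝ E] (hg : IsProfile β δ g)
    (hn : n ≠ 0) (hN : IsSmoothGauge P M N) (hχ : IsFiberCutoff P K χ) (hP : P ≠ 0)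
    (hx : N x ≠ 0) :
    (fderiv ℝ (fiberDilation P (dilationField n g χ N)) x).det =
      (1 + χ x * deriv g (N x ^ (n : ℝ)⁻¹)) * dilationRoot n g (χ x) (N x) ^
        (n * finrank ℝ (LinearMap.range (P : E →ₗ[ℝ] E)) - 1) := by
  have hroot : 1 ≤ dilationRoot n g (χ x) (N x) :=
    hg.one_le_dilationRoot (hχ.mem_Icc x).1 (apply_nonneg N x)
  have hA : dilationField n g χ N x = dilationRoot n g (χ x) (N x) ^ n := rfl
  have hA0 : dilationField n g χ N x ≠ 0 := (pow_pos (one_pos.trans_le hroot) n).ne'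
  rw [det_fderiv_fiberDilation hN.isIdempotentElem
    (differentiableAt_dilationField hg n hN hχ hx) hA0]
  have hradial := add_fderiv_dilationField hg hn hN hχ hx
  set R := dilationRoot n g (χ x) (N x)
  set d := finrank ℝ (LinearMap.range (P : E →ₗ[ℝ] E))
  have hd : d ≠ 0 := fun h =>
    hP (ContinuousLinearMap.coe_inj.1 (LinearMap.range_eq_bot.1 (Submodule.finrank_eq_zero.1 h)))
  have hexp : n * (d - 1) + (n - 1) = n * d - 1 := by
    rw [Nat.mul_sub_one]
    have := Nat.le_mul_of_pos_right n (Nat.pos_of_ne_zero hd)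
    lia
  calc _ = (R ^ n) ^ (d - 1) *
        (dilationField n g χ N x + fderiv ℝ (dilationField n g χ N) x (P x)) := by
        rw [← hA, ← pow_sub_one_mul hd (dilationField n g χ N x)]
        field_simp
    _ = (1 + χ x * deriv g (N x ^ (n : ℝ)⁻¹)) * R ^ (n * d - 1) := by
        rw [hradial, ← mul_assoc, ← pow_mul, ← pow_add, hexp, mul_comm]

lemma mul_rpow_le_abs_det_fderiv_fiberDilation [FiniteDimensional ℝ E] (hg : IsProfile β δ g)
    (hn : n ≠ 0) (hN : IsSmoothGauge P M N) (hχ : IsFiberCutoff P K χ) (hP : P ≠ 0) {a : ℝ}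
    (ha : n * a ≤ n * finrank ℝ (LinearMap.range (P : E →ₗ[ℝ] E)) - 1) (hx : N x ≠ 0) :
    δ * dilationField n g χ N x ^ a ≤
      |(fderiv ℝ (fiberDilation P (dilationField n g χ N)) x).det| := by
  rw [det_fderiv_fiberDilation_dilationField hg hn hN hχ hP hx]
  have hroot : 1 ≤ dilationRoot n g (χ x) (N x) :=
    hg.one_le_dilationRoot (hχ.mem_Icc x).1 (apply_nonneg N x)
  have hδ := hg.le_one_add_mul_deriv (hχ.mem_Icc x) (N x ^ (n : ℝ)⁻¹)
  have hA : dilationField n g χ N x = dilationRoot n g (χ x) (N x) ^ n := rfl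
  set R := dilationRoot n g (χ x) (N x)
  set d := finrank ℝ (LinearMap.range (P : E →ₗ[ℝ] E))
  have hRa : dilationField n g χ N x ^ a ≤ R ^ (n * d - 1) :=
    calc dilationField n g χ N x ^ a = R ^ (n * a) := by
          rw [hA, ← Real.rpow_natCast_mul (zero_le_one.trans hroot)]
      _ ≤ R ^ (((n * d - 1 : ℕ) : ℤ) : ℝ) := by
          refine Real.rpow_le_rpow_of_exponent_le hroot (ha.trans ?_)
          exact_mod_cast Int.le_natCast_sub (n * d) 1
      _ = R ^ (n * d - 1) := by simp
  rw [abs_of_nonneg (mul_nonneg (hg.pos.le.trans hδ) (by positivity))]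
  exact mul_le_mul hδ hRa (by rw [hA]; positivity) (hg.pos.le.trans hδ)

theorem exists_isWeightedDilation_fiberDilation [FiniteDimensional ℝ E] [MeasurableSpace E]
    [BorelSpace E] (μ : Measure E) [μ.IsAddHaarMeasure] (hg : IsProfile β δ g) (hn : n ≠ 0)
    (hβ : 0 ≤ β) (hN : IsSmoothGauge P M N) (hχ : IsFiberCutoff P K χ) (hP : P ≠ 0) {a : ℝ}
    (ha : n * a ≤ n * finrank ℝ (LinearMap.range (P : E →ₗ[ℝ] E)) - 1) :
    ∃ L > 0, IsWeightedDilation μ a L δ (fiberDilation P (dilationField n g χ N))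
      (dilationField n g χ N) := by
  obtain ⟨L, hL, hLip⟩ := exists_norm_fiberDilation_dilationField_sub_le hg hn hβ hN hχ
  have hker : LinearMap.ker (P : E →ₗ[ℝ] E) ≠ ⊤ := fun h =>
    hP (ContinuousLinearMap.coe_inj.1 (LinearMap.ker_eq_top.1 h))
  have hne : ∀ᵐ x ∂μ, N x ≠ 0 := by
    refine measure_mono_null (fun x hx => ?_) (Measure.addHaar_submodule μ _ hker)
    have hPx := hN.norm_le x
    rw [not_not.1 hx, mul_zero] at hPx
    exact norm_le_zero_iff.1 hPx
  have hA : Measurable (dilationField n g χ N) :=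
    measurable_dilationFactor n hg.contDiff.continuous.measurable
      hχ.contDiff.continuous.measurable hN.continuous.measurable
  exact ⟨L, hL,
    { measurable := measurable_id.add ((hA.sub_const 1).smul P.continuous.measurable)
      injective := injective_fiberDilation_dilationField hg hn hN hχ
      one_le := fun x => hg.one_le_dilationFactor (hχ.mem_Icc x).1 (apply_nonneg N x)
      norm_sub_le := hne.mono fun x hx => hne.mono fun y hy => hLip x y hx hy
      le_abs_det := hne.mono fun x hx =>
        ⟨(hasFDerivAt_fiberDilation
          (differentiableAt_dilationField hg n hN hχ hx).hasFDerivAt).differentiableAt,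
        mul_rpow_le_abs_det_fderiv_fiberDilation hg hn hN hχ hP ha hx⟩ }⟩

end FiberDilation

/-! ### Smoothed sup norms of coordinates -/

section Coordinates

open scoped ContDiff NNReal Finset

variable {ι : Type*} {I : Finset ι} {i : ι}

/-- The `ℓ^{2(k+1)}`-norm of the coordinates with index in `I`. For large `k` it approximates their
sup norm, and unlike the latter it is smooth off its zeros because the exponent is even. -/
def lpGauge (I : Finset ι) (k : ℕ) : Seminorm ℝ (EuclideanSpace ℝ ι) :=
  Seminorm.of (fun x => (∑ i ∈ I, x i ^ (2 * (k + 1))) ^ ((2 * (k + 1) : ℕ) : ℝ)⁻¹)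
    (fun x y => by
      have h := Real.Lp_add_le I (fun i => x i) (fun i => y i) (p := (2 * (k + 1) : ℕ))
        (by norm_cast; lia)
      simpa only [Real.rpow_natCast, (even_two_mul (k + 1)).pow_abs, one_div, PiLp.add_apply]
        using h)
    (fun c x => by
      have hx : 0 ≤ ∑ i ∈ I, x i ^ (2 * (k + 1)) :=
        Finset.sum_nonneg fun i _ => (even_two_mul (k + 1)).pow_nonneg _
      simp only [PiLp.smul_apply, smul_eq_mul, mul_pow, ← Finset.mul_sum]
      rw [← (even_two_mul (k + 1)).pow_abs c, Real.mul_rpow (by positivity) hx,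
        Real.pow_rpow_inv_natCast (abs_nonneg c) (by lia), Real.norm_eq_abs])

variable {k : ℕ} {x : EuclideanSpace ℝ ι}

lemma lpGauge_apply (I : Finset ι) (k : ℕ) (x : EuclideanSpace ℝ ι) :
    lpGauge I k x = (∑ i ∈ I, x i ^ (2 * (k + 1))) ^ ((2 * (k + 1) : ℕ) : ℝ)⁻¹ :=
  rfl

lemma lpGauge_congr {y : EuclideanSpace ℝ ι} (hxy : ∀ i ∈ I, x i = y i) :
    lpGauge I k x = lpGauge I k y := by
  rw [lpGauge_apply, lpGauge_apply, Finset.sum_congr rfl fun i hi => by rw [hxy i hi]]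

lemma lpGauge_pow (I : Finset ι) (k : ℕ) (x : EuclideanSpace ℝ ι) :
    lpGauge I k x ^ (2 * (k + 1)) = ∑ i ∈ I, x i ^ (2 * (k + 1)) :=
  Real.rpow_inv_natCast_pow
    (Finset.sum_nonneg fun i _ => (even_two_mul (k + 1)).pow_nonneg _) (by lia)

lemma abs_apply_le_lpGauge (k : ℕ) (x : EuclideanSpace ℝ ι) (hi : i ∈ I) :
    |x i| ≤ lpGauge I k x := by
  refine le_of_pow_le_pow_left₀ (n := 2 * (k + 1)) (by lia) (apply_nonneg _ x) ?_
  rw [lpGauge_pow, (even_two_mul (k + 1)).pow_abs]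
  exact Finset.single_le_sum (f := fun i => x i ^ (2 * (k + 1)))
    (fun j _ => (even_two_mul (k + 1)).pow_nonneg _) hi

lemma lpGauge_le_mul {θ b : ℝ} (hθ : 0 ≤ θ) (hI : (#I : ℝ) ≤ θ ^ (2 * (k + 1))) (hb : 0 ≤ b)
    (hx : ∀ i ∈ I, |x i| ≤ b) : lpGauge I k x ≤ θ * b := by
  refine le_of_pow_le_pow_left₀ (n := 2 * (k + 1)) (by lia) (by positivity) ?_
  calc lpGauge I k x ^ (2 * (k + 1)) = ∑ i ∈ I, |x i| ^ (2 * (k + 1)) := by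
        simp_rw [lpGauge_pow, (even_two_mul (k + 1)).pow_abs]
    _ ≤ #I * b ^ (2 * (k + 1)) := by
        rw [← nsmul_eq_mul]
        exact Finset.sum_le_card_nsmul _ _ _ fun i hi => by gcongr; exact hx i hi
    _ ≤ (θ * b) ^ (2 * (k + 1)) := by rw [mul_pow]; gcongr

variable [Fintype ι] [DecidableEq ι]

/-- The orthogonal projection of `ℝ^ι` onto the coordinates with index in `I`. -/
def coordProj (I : Finset ι) : EuclideanSpace ℝ ι →L[ℝ] EuclideanSpace ℝ ι :=
  ∑ i ∈ I, (EuclideanSpace.proj i).smulRight (EuclideanSpace.single i (1 : ℝ))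

lemma coordProj_apply (I : Finset ι) (x : EuclideanSpace ℝ ι) (i : ι) :
    coordProj I x i = if i ∈ I then x i else 0 := by
  simp [coordProj, Pi.single_apply]

lemma isIdempotentElem_coordProj (I : Finset ι) : IsIdempotentElem (coordProj I) := by
  ext x i
  by_cases hi : i ∈ I <;> simp [coordProj_apply, hi]

lemma coordProj_ne_zero (hI : I.Nonempty) : coordProj I ≠ 0 := by
  obtain ⟨i, hi⟩ := hI
  intro h
  simpa [h, hi] using coordProj_apply I (EuclideanSpace.single i 1) i

lemma finrank_range_coordProj (I : Finset ι) :
    finrank ℝ (LinearMap.range (coordProj I : EuclideanSpace ℝ ι →ₗ[ℝ] EuclideanSpace ℝ ι)) =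
      #I := by
  have hP : IsIdempotentElem (coordProj I : EuclideanSpace ℝ ι →ₗ[ℝ] EuclideanSpace ℝ ι) :=
    congr(($((isIdempotentElem_coordProj I).eq) : EuclideanSpace ℝ ι →ₗ[ℝ] EuclideanSpace ℝ ι))
  have htrace := (LinearMap.IsIdempotentElem.isProj_range _ hP).trace
  have hsum : (coordProj I : EuclideanSpace ℝ ι →ₗ[ℝ] EuclideanSpace ℝ ι) =
      ∑ i ∈ I, (PiLp.projₗ 2 (fun _ : ι => ℝ) i).smulRight
        (EuclideanSpace.single i (1 : ℝ)) := by
    ext x i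
    simp [coordProj]
  have hcard : LinearMap.trace ℝ (EuclideanSpace ℝ ι) (coordProj I) = #I := by
    simp [hsum, LinearMap.trace_smulRight]
  exact_mod_cast htrace.symm.trans hcard

lemma norm_coordProj_le {x : EuclideanSpace ℝ ι} {b : ℝ} (hb : ∀ i ∈ I, |x i| ≤ b) :
    ‖coordProj I x‖ ≤ #I * b := by
  have hx : coordProj I x = ∑ i ∈ I, x i • EuclideanSpace.single i (1 : ℝ) := by simp [coordProj]
  rw [hx]
  have hsum : ∑ _i ∈ I, b = #I * b := by rw [Finset.sum_const, nsmul_eq_mul]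
  refine (norm_sum_le_of_le I fun i hi => ?_).trans_eq hsum
  simpa [norm_smul] using hb i hi

lemma isSmoothGauge_lpGauge (I : Finset ι) (k : ℕ) :
    IsSmoothGauge (coordProj I) #I (lpGauge I k) where
  isIdempotentElem := isIdempotentElem_coordProj I
  continuous := by
    simp only [funext (lpGauge_apply I k)]
    exact Continuous.rpow_const (by fun_prop) fun _ => Or.inr (by positivity)
  map_proj x := lpGauge_congr fun i hi => by rw [coordProj_apply, if_pos hi]
  norm_le x := norm_coordProj_le fun i hi => abs_apply_le_lpGauge k x hi
  contDiffAt x hx := by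
    have hsum : ∑ i ∈ I, x i ^ (2 * (k + 1)) ≠ 0 := by
      rw [← lpGauge_pow]
      exact pow_ne_zero _ hx
    simp only [funext (lpGauge_apply I k)]
    exact ContDiffAt.rpow_const_of_ne (by fun_prop) hsum

lemma exists_forall_card_le_pow (ι : Type*) [Finite ι] {θ : ℝ} (hθ : 1 < θ) :
    ∃ k : ℕ, ∀ I : Finset ι, (#I : ℝ) ≤ θ ^ (2 * (k + 1)) := by
  have := Fintype.ofFinite ι
  obtain ⟨k, hk⟩ := pow_unbounded_of_one_lt (Fintype.card ι : ℝ) hθ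
  refine ⟨k, fun I => ?_⟩
  calc (#I : ℝ) ≤ Fintype.card ι := by exact_mod_cast I.card_le_univ
    _ ≤ θ ^ k := hk.le
    _ ≤ θ ^ (2 * (k + 1)) := pow_le_pow_right₀ hθ.le (by lia)

/-- A cutoff function in the coordinates with index outside `I`, equal to `1` where these are
smaller than `b₁` and to `0` where one of them is at least `b`. -/
structure IsBoxCutoff (I : Finset ι) (b₁ b : ℝ) (K : ℝ≥0) (χ : EuclideanSpace ℝ ι → ℝ) : Prop
    extends IsFiberCutoff (coordProj I) K χ where
  eq_one : ∀ x, (∀ i ∉ I, |x i| < b₁) → χ x = 1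
  eq_zero : ∀ x, (∃ i ∉ I, b ≤ |x i|) → χ x = 0

lemma exists_isBoxCutoff (I : Finset ι) {b₁ b : ℝ} (hb₁ : 0 < b₁) (hb : b₁ < b) :
    ∃ K χ, IsBoxCutoff I b₁ b K χ := by
  obtain ⟨θ, hθ, hθb⟩ := exists_between ((one_lt_div hb₁).2 hb)
  obtain ⟨k, hk⟩ := exists_forall_card_le_pow ι hθ
  have hN := isSmoothGauge_lpGauge Iᶜ k
  let ψ : ContDiffBump (0 : ℝ) := ⟨θ * b₁, b, by positivity, (lt_div_iff₀ hb₁).1 hθb⟩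
  obtain ⟨K₁, hψ⟩ := ContDiff.lipschitzWith_of_hasCompactSupport ψ.hasCompactSupport
    (ψ.contDiff (n := 1)) one_ne_zero
  obtain ⟨K₂, -, hK₂⟩ := Seminorm.bound_of_continuous_normedSpace (lpGauge Iᶜ k) hN.continuous
  have hNlip : LipschitzWith K₂.toNNReal (lpGauge Iᶜ k) := by
    refine LipschitzWith.of_dist_le' fun x y => ?_
    rw [Real.dist_eq, dist_eq_norm]
    exact (abs_sub_map_le_sub _ x y).trans (hK₂ _)
  refine ⟨_, ψ ∘ lpGauge Iᶜ k, ⟨hN.contDiff_contDiffBump_comp ψ, hψ.comp hNlip,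
    fun _ => ⟨ψ.nonneg, ψ.le_one⟩, fun x y => ?_⟩, fun x hx => ?_, fun x ⟨i, hi, hxi⟩ => ?_⟩
  · refine congrArg ψ (lpGauge_congr fun i hi => ?_)
    rw [PiLp.add_apply, coordProj_apply, if_neg (Finset.mem_compl.1 hi), add_zero]
  · refine ψ.one_of_mem_closedBall ?_
    rw [mem_closedBall_zero_iff, Real.norm_of_nonneg (apply_nonneg _ x)]
    exact lpGauge_le_mul (zero_le_one.trans hθ.le) (hk _) hb₁.le fun i hi =>
      (hx i (Finset.mem_compl.1 hi)).le
  · refine ψ.zero_of_le_dist ?_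
    rw [Real.dist_0_eq_abs, abs_of_nonneg (apply_nonneg _ x)]
    exact hxi.trans (abs_apply_le_lpGauge k x (Finset.mem_compl.2 hi))

end Coordinates

/-! ### The thickening map -/

section Thickening

open scoped ContDiff NNReal Finset

variable {β δ a₁ b₁ b : ℝ} {K : ℝ≥0} {g : ℝ → ℝ} {n : ℕ}

section BoxCutoff

variable {ι : Type*} [Fintype ι] [DecidableEq ι] {I : Finset ι} {i : ι} {k : ℕ}
  {A χ : EuclideanSpace ℝ ι → ℝ} {x : EuclideanSpace ℝ ι}

lemma fiberDilation_coordProj_of_mem (hi : i ∈ I) :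
    fiberDilation (coordProj I) A x i = A x * x i := by
  simp only [fiberDilation, PiLp.add_apply, PiLp.smul_apply, coordProj_apply, if_pos hi,
    smul_eq_mul]
  ring

lemma fiberDilation_coordProj_of_notMem (hi : i ∉ I) :
    fiberDilation (coordProj I) A x i = x i := by
  simp [fiberDilation, coordProj_apply, hi]

namespace IsBoxCutoff

lemma fiberDilation_eq_self (hχ : IsBoxCutoff I b₁ b K χ) (hg : IsProfile β δ g) (hn : n ≠ 0)
    (hβ : 0 ≤ β) (hx : (∃ i ∈ I, β ^ n ≤ |x i|) ∨ ∃ i ∉ I, b ≤ |x i|) :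
    fiberDilation (coordProj I) (dilationField n g χ (lpGauge I k)) x = x := by
  apply _root_.fiberDilation_eq_self
  rcases hx with ⟨i, hi, hxi⟩ | hx
  · exact hg.dilationFactor_eq_one hn hβ (hxi.trans (abs_apply_le_lpGauge k x hi))
  · rw [dilationField, hχ.eq_zero x hx, dilationFactor_zero_left]

lemma abs_fiberDilation_lt (hχ : IsBoxCutoff I b₁ b K χ) (hg : IsProfile β δ g) (hn : n ≠ 0)
    (hβ : 0 < β) (hi : i ∈ I) (hx : |x i| < β ^ n) :
    |fiberDilation (coordProj I) (dilationField n g χ (lpGauge I k)) x i| < β ^ n := by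
  have hNx : 0 ≤ lpGauge I k x := apply_nonneg _ x
  have hA : 1 ≤ dilationField n g χ (lpGauge I k) x :=
    hg.one_le_dilationFactor (hχ.mem_Icc x).1 hNx
  rcases lt_or_ge (lpGauge I k x) (β ^ n) with hNβ | hNβ
  · rw [fiberDilation_coordProj_of_mem hi, abs_mul, abs_of_nonneg (zero_le_one.trans hA), mul_comm]
    calc |x i| * dilationField n g χ (lpGauge I k) x
        ≤ lpGauge I k x * dilationField n g χ (lpGauge I k) x := by
          gcongr
          exact abs_apply_le_lpGauge k x hi
      _ < β ^ n := hg.mul_dilationFactor_lt hn hβ (hχ.mem_Icc x) hNx hNβ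
  · have hA1 : dilationField n g χ (lpGauge I k) x = 1 := hg.dilationFactor_eq_one hn hβ.le hNβ
    rwa [_root_.fiberDilation_eq_self hA1]

lemma exists_le_abs_fiberDilation {θ : ℝ} (hχ : IsBoxCutoff I b₁ b K χ) (hg : IsProfile β δ g)
    (hn : n ≠ 0) (hθ : 0 ≤ θ) (hI : (#I : ℝ) ≤ θ ^ (2 * (k + 1))) (ha₁ : 0 ≤ a₁)
    (hα : θ * a₁ < g 0 ^ n) (hx : lpGauge I k x ≠ 0) (hxb : ∀ i ∉ I, |x i| < b₁) :
    ∃ i ∈ I, a₁ ≤ |fiberDilation (coordProj I) (dilationField n g χ (lpGauge I k)) x i| := by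
  by_contra! hlt
  have hNx : 0 < lpGauge I k x := hx.lt_of_le' (apply_nonneg _ x)
  have hA : 1 ≤ dilationField n g χ (lpGauge I k) x :=
    hg.one_le_dilationFactor (hχ.mem_Icc x).1 hNx.le
  have hup := lpGauge_le_mul hθ hI ha₁ fun i hi => (hlt i hi).le
  have hlow := hg.pow_le_mul_dilationFactor_one hn hNx
  rw [(isSmoothGauge_lpGauge I k).map_fiberDilation (zero_le_one.trans hA), dilationField,
    hχ.eq_one x hxb] at hup
  linarith

lemma contDiffAt_fiberDilation (hχ : IsBoxCutoff I b₁ b K χ) (hg : IsProfile β δ g) (n : ℕ)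
    (hx : lpGauge I k x ≠ 0 ∨ ∃ i ∉ I, b < |x i|) :
    ContDiffAt ℝ ∞ (fiberDilation (coordProj I) (dilationField n g χ (lpGauge I k))) x := by
  rcases hx with hx | ⟨i, hi, hxi⟩
  · exact _root_.contDiffAt_fiberDilation
      (contDiffAt_dilationField hg n (isSmoothGauge_lpGauge I k) hχ.toIsFiberCutoff hx)
  · have hid : fiberDilation (coordProj I) (dilationField n g χ (lpGauge I k)) =ᶠ[𝓝 x] id := by
      have hcont : Continuous fun y : EuclideanSpace ℝ ι => |y i| := by fun_prop
      filter_upwards [hcont.continuousAt.eventually (lt_mem_nhds hxi)] with y hy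
      apply _root_.fiberDilation_eq_self
      rw [dilationField, hχ.eq_zero y ⟨i, hi, hy.le⟩, dilationFactor_zero_left]
    exact contDiffAt_id.congr_of_eventuallyEq hid

end IsBoxCutoff

end BoxCutoff

variable {m d : ℕ} {a : ℝ} {x : Eucl m}

/-- The indices of the coordinates `x′ ∈ ℝ^d` of `x = (x′, x″) ∈ ℝ^m`. -/
def firstCoords (m d : ℕ) : Finset (Fin m) := {i | (i : ℕ) < d}

lemma card_firstCoords (hdm : d ≤ m) : #(firstCoords m d) = d := by
  simp [firstCoords, Fin.card_filter_val_lt, hdm]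

lemma mem_rect : x ∈ rect m d a b ↔
    (∀ i ∈ firstCoords m d, |x i| < a) ∧ ∀ i ∉ firstCoords m d, |x i| < b := by
  simp [rect, firstCoords, forall_and]

lemma mem_dualPiece : x ∈ dualPiece m d b ↔
    (∀ i ∈ firstCoords m d, x i = 0) ∧ ∀ i ∉ firstCoords m d, |x i| ≤ b := by
  simp [dualPiece, firstCoords]

lemma smul_mem_rect {η : ℝ} (hη : 0 < η) : η • x ∈ rect m d (a * η) (b * η) ↔ x ∈ rect m d a b := by
  simp [rect, abs_mul, abs_of_pos hη, mul_comm η, hη]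

lemma smul_mem_dualPiece {η : ℝ} (hη : 0 < η) :
    η • x ∈ dualPiece m d (b * η) ↔ x ∈ dualPiece m d b := by
  simp [dualPiece, abs_mul, abs_of_pos hη, mul_comm η, hη, hη.ne']

/-- The geometric conditions on a thickening map at the singular set `dualPiece m d b`: with
`Q₁ = rect m d a₁ b₁`, `Q₂ = rect m d a b₁` and `Q₃ = rect m d a b`, it is supported in `Q₃` and
pushes `Q₂` out of `Q₁`. -/
structure IsThickening (m d : ℕ) (a₁ a b₁ b : ℝ) (Φ : Eucl m → Eucl m) : Prop where
  contDiffOn : ContDiffOn ℝ ∞ Φ (dualPiece m d b)ᶜ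
  injective : Φ.Injective
  eq_self : ∀ x ∉ rect m d a b, Φ x = x
  mapsTo_sdiff : MapsTo Φ (rect m d a b₁ \ dualPiece m d b) (rect m d a b₁ \ rect m d a₁ b₁)
  mapsTo : MapsTo Φ (rect m d a b) (rect m d a b)

namespace IsThickening

variable {Φ : Eucl m → Eucl m}

lemma mapsTo_of_subset (hΦ : IsThickening m d a₁ a b₁ b Φ) {s : Set (Eucl m)}
    (hs : rect m d a b ⊆ s) : MapsTo Φ s s := by
  intro x hx
  by_cases hxr : x ∈ rect m d a b
  · exact hs (hΦ.mapsTo hxr)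
  · rwa [hΦ.eq_self x hxr]

lemma smul_conj (hΦ : IsThickening m d a₁ a b₁ b Φ) {η : ℝ} (hη : 0 < η) :
    IsThickening m d (a₁ * η) (a * η) (b₁ * η) (b * η) fun x => η • Φ (η⁻¹ • x) := by
  have hrect {a b : ℝ} {x : Eucl m} (hx : x ∈ rect m d (a * η) (b * η)) :
      η⁻¹ • x ∈ rect m d a b := by rwa [← smul_mem_rect hη, smul_inv_smul₀ hη.ne']
  have hdual {x : Eucl m} (hx : x ∉ dualPiece m d (b * η)) : η⁻¹ • x ∉ dualPiece m d b := by
    rwa [← smul_mem_dualPiece hη, smul_inv_smul₀ hη.ne']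
  constructor
  · exact (hΦ.contDiffOn.comp (contDiff_const_smul η⁻¹).contDiffOn fun x => hdual).const_smul η
  · exact (smul_right_injective _ hη.ne').comp
      (hΦ.injective.comp (smul_right_injective _ (inv_ne_zero hη.ne')))
  · intro x hx
    have hx' : η⁻¹ • x ∉ rect m d a b := by rwa [← smul_mem_rect hη, smul_inv_smul₀ hη.ne']
    rw [hΦ.eq_self _ hx', smul_inv_smul₀ hη.ne']
  · intro x hx
    obtain ⟨hin, hout⟩ := hΦ.mapsTo_sdiff ⟨hrect hx.1, hdual hx.2⟩
    exact ⟨(smul_mem_rect hη).2 hin, fun h => hout ((smul_mem_rect hη).1 h)⟩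
  · exact fun x hx => (smul_mem_rect hη).2 (hΦ.mapsTo (hrect hx))

end IsThickening

lemma IsBoxCutoff.isThickening_fiberDilation {k : ℕ} {θ : ℝ} {χ : Eucl m → ℝ}
    (hχ : IsBoxCutoff (firstCoords m d) b₁ b K χ) (hg : IsProfile β δ g) (hn : n ≠ 0) (hβ : 0 < β)
    (hθ : 0 ≤ θ) (hcard : (#(firstCoords m d) : ℝ) ≤ θ ^ (2 * (k + 1))) (ha₁ : 0 ≤ a₁)
    (hα : θ * a₁ < g 0 ^ n) (hb : b₁ ≤ b) :
    IsThickening m d a₁ (β ^ n) b₁ b (fiberDilation (coordProj (firstCoords m d))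
      (dilationField n g χ (lpGauge (firstCoords m d) k))) := by
  set I := firstCoords m d
  set Φ := fiberDilation (coordProj I) (dilationField n g χ (lpGauge I k))
  have hmaps {c : ℝ} : MapsTo Φ (rect m d (β ^ n) c) (rect m d (β ^ n) c) := by
    intro x hx
    rw [mem_rect] at hx ⊢
    refine ⟨fun i hi => hχ.abs_fiberDilation_lt hg hn hβ hi (hx.1 i hi), fun i hi => ?_⟩
    rw [fiberDilation_coordProj_of_notMem hi]
    exact hx.2 i hi
  have hgauge {x : Eucl m} (hx : ∃ i ∈ I, x i ≠ 0) : lpGauge I k x ≠ 0 := by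
    obtain ⟨i, hi, hxi⟩ := hx
    exact ((abs_pos.2 hxi).trans_le (abs_apply_le_lpGauge k x hi)).ne'
  refine ⟨fun x hx => ?_, injective_fiberDilation_dilationField hg hn (isSmoothGauge_lpGauge I k)
    hχ.toIsFiberCutoff, fun x hx => ?_, fun x hx => ⟨hmaps hx.1, fun hcore => ?_⟩, hmaps⟩
  · rw [mem_compl_iff, mem_dualPiece] at hx
    refine (hχ.contDiffAt_fiberDilation hg n ?_).contDiffWithinAt
    exact (not_and_or.1 hx).imp (fun h => hgauge (by push Not at h; exact h))
      fun h => by push Not at h; exact h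
  · rw [mem_rect, not_and_or] at hx
    push Not at hx
    exact hχ.fiberDilation_eq_self hg hn hβ.le hx
  · obtain ⟨hxr, hxd⟩ := hx
    rw [mem_rect] at hxr hcore
    rw [mem_dualPiece] at hxd
    have hx0 : ∃ i ∈ I, x i ≠ 0 := by
      by_contra! h
      exact hxd ⟨h, fun i hi => (hxr.2 i hi).le.trans hb⟩
    obtain ⟨i, hi, hle⟩ :=
      hχ.exists_le_abs_fiberDilation hg hn hθ hcard ha₁ hα (hgauge hx0) hxr.2
    exact hle.not_gt (hcore.1 i hi)

theorem exists_isThickening_isWeightedDilation {t : ℝ} (htd : t < d) (hdm : d ≤ m) (hd : d ≠ 0)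
    (ha₁ : 0 < a₁) (ha : a₁ < a) (hb₁ : 0 < b₁) (hb : b₁ < b) :
    ∃ Φ A L δ, 0 < L ∧ 0 < δ ∧ IsThickening m d a₁ a b₁ b Φ ∧
      IsWeightedDilation volume t L δ Φ A := by
  have hcard := card_firstCoords hdm
  set I := firstCoords m d
  obtain ⟨n, hn⟩ := exists_nat_one_div_lt (sub_pos.2 htd)
  have hroot {r : ℝ} (hr : 0 < r) : ∃ q > 0, q ^ (n + 1) = r :=
    ⟨r ^ ((n + 1 : ℕ) : ℝ)⁻¹, by positivity, Real.rpow_inv_natCast_pow hr.le n.succ_ne_zero⟩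
  obtain ⟨a', ha₁', ha'⟩ := exists_between ha
  obtain ⟨α, hα, rfl⟩ := hroot (ha₁.trans ha₁')
  obtain ⟨β, hβ, rfl⟩ := hroot (ha₁.trans ha)
  obtain ⟨θ, hθ, hθα⟩ := exists_between ((one_lt_div ha₁).2 ha₁')
  obtain ⟨k, hk⟩ := exists_forall_card_le_pow (Fin m) hθ
  obtain ⟨K, χ, hχ⟩ := exists_isBoxCutoff I hb₁ hb
  obtain ⟨g, δ, hαg, hg⟩ := exists_isProfile hα (lt_of_pow_lt_pow_left₀ (n + 1) hβ.le ha')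
  have hP : coordProj I ≠ 0 := coordProj_ne_zero (Finset.card_ne_zero.1 (hcard ▸ hd))
  have hexp : ((n + 1 : ℕ) : ℝ) * t ≤ (n + 1 : ℕ) *
      finrank ℝ (LinearMap.range (coordProj I : Eucl m →ₗ[ℝ] Eucl m)) - 1 := by
    rw [finrank_range_coordProj, hcard]
    rw [div_lt_iff₀ (by positivity)] at hn
    push_cast
    linarith
  have hθg : θ * a₁ < g 0 ^ (n + 1) :=
    calc θ * a₁ < α ^ (n + 1) := (lt_div_iff₀ ha₁).1 hθα
      _ ≤ g 0 ^ (n + 1) := by gcongr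
  obtain ⟨L, hL, hdil⟩ := exists_isWeightedDilation_fiberDilation volume hg n.succ_ne_zero hβ.le
    (isSmoothGauge_lpGauge I k) hχ.toIsFiberCutoff hP hexp
  exact ⟨_, _, L, δ, hL, hg.pos, hχ.isThickening_fiberDilation hg n.succ_ne_zero hβ
    (zero_le_one.trans hθ.le) (hk I) ha₁.le hθg hb.le, hdil⟩

end Thickening

section Estimates

variable {m d : ℕ} {s p : ℝ} {F : Type*} [NormedAddCommGroup F]

lemma IsWeightedDilation.gagliardoSeminorm_comp_le {Φ : Eucl m → Eucl m} {A : Eucl m → ℝ}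
    {c L δ : ℝ} (hΦ : IsWeightedDilation volume (s * p) L δ Φ A) (hs : 0 < s) (hp : 1 ≤ p)
    (hL : 0 < L) (hδ : 0 < δ) {ω : Set (Eucl m)} (hmaps : MapsTo Φ ω ω) (hω : MeasurableSet ω)
    (hc : 0 < c) (hreg : IsLowerRegular volume c ω) {u : Eucl m → F} (hu : StronglyMeasurable u) :
    gagliardoSeminorm m s p ω (u ∘ Φ) ≤
      gagliardoCompConst (volume : Measure (Eucl m)) (s * p) p c L δ ^ (1 / p) *
        gagliardoSeminorm m s p ω u := by
  have h := hΦ.lintegral_enorm_comp_sub_le (by positivity) hL hδ hp hmaps hω hc hreg hu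
  rw [finrank_euclideanSpace_fin] at h
  rw [gagliardoSeminorm, gagliardoSeminorm, ← ENNReal.mul_rpow_of_nonneg _ _ (by positivity)]
  exact ENNReal.rpow_le_rpow h (by positivity)

theorem thickening_block_fractional_general (hs : 0 < s) (hp : 1 ≤ p) (hdm : d ≤ m)
    (hdsp : s * p < d) {a₁ a b₁ b : ℝ} (ha₁ : 0 < a₁) (ha : a₁ < a) (hb₁ : 0 < b₁) (hb : b₁ < b) :
    ∃ Φ : ℝ → Eucl m → Eucl m,
      (∀ η > 0, IsThickening m d (a₁ * η) (a * η) (b₁ * η) (b * η) (Φ η)) ∧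
      ∀ c > 0, ∃ C > 0, ∀ η > 0, ∀ ω, MeasurableSet ω → rect m d (a * η) (b * η) ⊆ ω →
        IsLowerRegular volume c ω → ∀ u : Eucl m → F, StronglyMeasurable u →
          gagliardoSeminorm m s p ω (u ∘ Φ η) ≤ ENNReal.ofReal C * gagliardoSeminorm m s p ω u ∧
          eLpNorm (u ∘ Φ η) (ENNReal.ofReal p) (volume.restrict ω) ≤
            ENNReal.ofReal C * eLpNorm u (ENNReal.ofReal p) (volume.restrict ω) := by
  have hsp : 0 < s * p := by positivity
  have hd : d ≠ 0 := by rintro rfl; simp at hdsp; linarith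
  obtain ⟨Φ, A, L, δ, hL, hδ, hthick, hdil⟩ :=
    exists_isThickening_isWeightedDilation hdsp hdm hd ha₁ ha hb₁ hb
  refine ⟨fun η x => η • Φ (η⁻¹ • x), fun η hη => hthick.smul_conj hη, fun c hc => ?_⟩
  set D := gagliardoCompConst (volume : Measure (Eucl m)) (s * p) p c L δ ^ (1 / p)
  have hD : D ≠ ⊤ :=
    ENNReal.rpow_ne_top_of_nonneg (by positivity) (gagliardoCompConst_ne_top hsp hp)
  have hδp : ENNReal.ofReal δ⁻¹ ^ (1 / p) ≠ ⊤ :=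
    ENNReal.rpow_ne_top_of_nonneg (by positivity) ENNReal.ofReal_ne_top
  obtain ⟨C, hC⟩ : ∃ C : NNReal, (C : ℝ≥0∞) = D + ENNReal.ofReal δ⁻¹ ^ (1 / p) :=
    ENNReal.canLift.prf _ (ENNReal.add_ne_top.2 ⟨hD, hδp⟩)
  have hCpos : 0 < (C : ℝ) := by
    rw [NNReal.coe_pos, ← ENNReal.coe_pos, hC]
    exact (ENNReal.rpow_pos (ENNReal.ofReal_pos.2 (inv_pos.2 hδ)) ENNReal.ofReal_ne_top).trans_le
      le_add_self
  refine ⟨C, hCpos, fun η hη ω hω hsub hreg u hu => ?_⟩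
  rw [ENNReal.ofReal_coe_nnreal, hC]
  have hdilη := hdil.smul_conj hη
  have hmaps := (hthick.smul_conj hη).mapsTo_of_subset hsub
  constructor
  · refine (hdilη.gagliardoSeminorm_comp_le hs hp hL hδ hmaps hω hc hreg hu).trans ?_
    gcongr
    exact le_self_add
  · refine (hdilη.eLpNorm_comp_le hsp.le hδ (by positivity) hmaps hω u).trans ?_
    gcongr
    exact le_add_self

end Estimates

/-- **Thickening construction (building block, case `0 < s < 1`).**
Let `0 < s < 1`, `1 ≤ p < ∞`, `1 ≤ d ≤ m` with `d > sp`, `0 < ρ̲ < ρ < ρ̄ < 1`, and set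
`Q₁ = Q^d_{(1-ρ̄)η} × Q^{m-d}_{ρ̲η}`, `Q₂ = Q^d_{(1-ρ)η} × Q^{m-d}_{ρ̲η}`,
`Q₃ = Q^d_{(1-ρ)η} × Q^{m-d}_{ρη}` and `T = {0}^d × Q̄^{m-d}_{ρη}`. For all `c, c′ > 0`
there is `C > 0` depending only on `m, s, p, c, c′, ρ̲, ρ, ρ̄` such that for every `η > 0`
there is a smooth injective map `Φ : ℝ^m \ T → ℝ^m` supported in `Q₃` with
`Φ(Q₂ \ T) ⊆ Q₂ \ Q₁` and `Φ(Q₃ \ T) ⊆ Q₃`, such that for every measurable `ω` with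
`Q₃ ⊆ ω ⊆ B^m_{cη}` satisfying `|B_λ(z) ∩ ω| ≥ c′ λ^m` for `z ∈ ω`, `0 < λ ≤ ½ diam ω`,
and every measurable `u : ω → ℝ^ν`, one has
`|u ∘ Φ|_{W^{s,p}(ω)} ≤ C |u|_{W^{s,p}(ω)}` and `‖u ∘ Φ‖_{L^p(ω)} ≤ C ‖u‖_{L^p(ω)}`. -/
theorem thickening_block_fractional
    (m ν : ℕ) (s p : ℝ) (hs0 : 0 < s) (hs1 : s < 1) (hp : 1 ≤ p)
    (d : ℕ) (hd1 : 1 ≤ d) (hdm : d ≤ m) (hdsp : s * p < d)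
    (ρ₁ ρ ρ₂ : ℝ) (h0 : 0 < ρ₁) (h1 : ρ₁ < ρ) (h2 : ρ < ρ₂) (h3 : ρ₂ < 1)
    (c c' : ℝ) (hc : 0 < c) (hc' : 0 < c') :
    ∃ C : ℝ, 0 < C ∧
      ∀ (η : ℝ), 0 < η →
        ∃ Φ : Eucl m → Eucl m,
          ContDiffOn ℝ (⊤ : ℕ∞) Φ (dualPiece m d (ρ * η))ᶜ ∧
          InjOn Φ (dualPiece m d (ρ * η))ᶜ ∧
          (∀ x, x ∉ dualPiece m d (ρ * η) → x ∉ rect m d ((1 - ρ) * η) (ρ * η) → Φ x = x) ∧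
          (∀ x ∈ rect m d ((1 - ρ) * η) (ρ₁ * η) \ dualPiece m d (ρ * η),
            Φ x ∈ rect m d ((1 - ρ) * η) (ρ₁ * η) \ rect m d ((1 - ρ₂) * η) (ρ₁ * η)) ∧
          (∀ x ∈ rect m d ((1 - ρ) * η) (ρ * η) \ dualPiece m d (ρ * η),
            Φ x ∈ rect m d ((1 - ρ) * η) (ρ * η)) ∧
          ∀ ω : Set (Eucl m), MeasurableSet ω →
            rect m d ((1 - ρ) * η) (ρ * η) ⊆ ω → ω ⊆ Metric.ball 0 (c * η) →
            (∀ z ∈ ω, ∀ lam : ℝ, 0 < lam → 2 * ENNReal.ofReal lam ≤ EMetric.diam ω →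
              ENNReal.ofReal (c' * lam ^ m) ≤ volume (Metric.ball z lam ∩ ω)) →
            ∀ u : Eucl m → Eucl ν, Measurable u →
              gagliardoSeminorm m s p ω (fun x => u (Φ x))
                ≤ ENNReal.ofReal C * gagliardoSeminorm m s p ω u ∧
              eLpNorm (fun x => u (Φ x)) (ENNReal.ofReal p) (volume.restrict ω)
                ≤ ENNReal.ofReal C * eLpNorm u (ENNReal.ofReal p) (volume.restrict ω) := by
  obtain ⟨Φ, hΦ, hbound⟩ := thickening_block_fractional_general (F := Eucl ν) hs0 hp hdm hdsp
    (sub_pos.2 h3) (sub_lt_sub_left h2 1) h0 h1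
  obtain ⟨C, hC, hest⟩ := hbound c' hc'
  refine ⟨C, hC, fun η hη => ⟨Φ η, (hΦ η hη).contDiffOn, (hΦ η hη).injective.injOn,
    fun x _ hx => (hΦ η hη).eq_self x hx, (hΦ η hη).mapsTo_sdiff,
    (hΦ η hη).mapsTo.mono_left sdiff_subset, fun ω hω hsub _ hreg u hu => ?_⟩⟩
  have hreg' : IsLowerRegular volume c' ω := by
    rw [IsLowerRegular, finrank_euclideanSpace_fin]
    exact hreg
  exact hest η hη ω hω hsub hreg' u hu.stronglyMeasurable
end
end
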